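/- Assume the normed space (F,‖·‖) satisfies Gaussian property (α+) with constant K ≥ 1. Then there exists a constant C(d) depending only on d such that: (1) for every p ≥ 1, ‖S'‖_p ≤ C(d) K^{d−1} Σ_{T⊆[d]} Σ_{P∈P(T)} p^{|P|/2} |||A|||_P; and (2) for every t > C(d) K^{d−1} E‖S'‖, P(‖S'‖ ≥ t) ≤ 2 exp( −(1/C(d)) K^{2−2d} · min{ (t / |||A|||_P)^{2/|P|} : ∅ ≠ J ⊆ [d], P ∈ P(J) } ). -/

import Mathlib

/-!
The upper bounds hold for any seminorm `N` on real arrays in place of `c ↦ ‖∑ c_i a_i‖`, up to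
replacing coordinates by blocks; property (α+) only serves to remove the blocks at the end.

*Two blocks.* For a seminorm `N` on matrices, `√p E sup_x N (g ⊗ x)`, the supremum being over the
Euclidean ball, is at most a universal multiple of
`E N (g_{ij}) + E N (g ⊗ g') + √p sup_z N z + √p sup_x E N (g ⊗ x) + p sup_{x,y} N (y ⊗ x)`
(`two_block`). By duality the left-hand side is the Gaussian width of the set of vectors `A x`,
with `A` in the polar of `N` and `x` in the ball. This width is bounded by a chaining (`CInv.step`)
whose entropy input (`CInv.cells`) combines Sudakov minoration for `A` with the dual Sudakov
inequality for `x`, both obtained from Gaussian shifts (`mass_lower`, `dual_sudakov`, `sudakov`).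

*Exchange.* By induction on the number of blocks, an expectation of a supremum over several blocks
is dominated by suprema of expectations, summed over all pairs of families which together
partition the same coordinates (`exchange`). A single supremum is exchanged with one of the
averages by the two-block inequality (`step_one`), which may create a term with two suprema;
several suprema are reduced to one fewer with an arbitrarily small constant (`step_two`), so the
two estimates close up (`absorb`).

*Moments.* Coordinates are added one at a time: conditionally on the others, Gaussian
concentration (`conc_moment`) bounds the `p`-th moment of a Gaussian seminorm by its mean plus `√p`
times its weak norm, and the exchange inequality pulls the suprema outside (`chaos_moment`).
Property (α+) then splits every Gaussian block into singletons at the cost of a factor `K` for each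
split, at most `d - 1` in total (`split_family`), which gives part (1). Part (2) is Markov's
inequality with `p` proportional to the minimum in the exponent.
-/

open MeasureTheory ProbabilityTheory
open scoped Classical

noncomputable section

def stdGaussian (ι : Type*) [Fintype ι] : Measure (ι → ℝ) :=
  Measure.pi fun _ => gaussianReal 0 1

abbrev GIdx (d n : ℕ) := Σ J : Finset (Fin d), ({l // l ∈ J} → Fin n)

def IsPartition {d : ℕ} (J : Finset (Fin d)) (P : Finset (Finset (Fin d))) : Prop :=
  (∀ I ∈ P, I.Nonempty) ∧ (∀ I ∈ P, ∀ I' ∈ P, I ≠ I' → Disjoint I I') ∧ P.sup id = J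

def IsPartitionPair {d : ℕ} (S : Finset (Fin d)) (P P' : Finset (Finset (Fin d))) : Prop :=
  Disjoint P P' ∧ IsPartition S (P ∪ P')

def partitionsOf {d : ℕ} (J : Finset (Fin d)) : Finset (Finset (Finset (Fin d))) :=
  Finset.univ.filter fun P => IsPartition J P

def partitionPairs (d : ℕ) :
    Finset (Finset (Finset (Fin d)) × Finset (Finset (Fin d))) :=
  Finset.univ.filter fun PP => IsPartitionPair Finset.univ PP.1 PP.2

def chaosNorm {F : Type*} [NormedAddCommGroup F] [NormedSpace ℝ F] {d n : ℕ}
    (A : (Fin d → Fin n) → F) (P' P : Finset (Finset (Fin d))) : ℝ :=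
  sSup { r : ℝ | ∃ x : (I : Finset (Fin d)) → ({l // l ∈ I} → Fin n) → ℝ,
    (∀ I ∈ P, ∑ v : {l // l ∈ I} → Fin n, x I v ^ 2 ≤ 1) ∧
    r = ∫ ω : GIdx d n → ℝ,
        ‖∑ i : Fin d → Fin n,
          ((∏ I ∈ P, x I fun l => i l.1) * ∏ J ∈ P', ω ⟨J, fun l => i l.1⟩) • A i‖
          ∂ stdGaussian (GIdx d n) }

def tNorm {F : Type*} [NormedAddCommGroup F] [NormedSpace ℝ F] {d n : ℕ}
    (A : (Fin d → Fin n) → F) (J : Finset (Fin d)) (P : Finset (Finset (Fin d))) : ℝ :=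
  chaosNorm A ((Finset.univ \ J).image fun l => ({l} : Finset (Fin d))) P

def decChaos {F : Type*} [NormedAddCommGroup F] [NormedSpace ℝ F] {d n : ℕ}
    (A : (Fin d → Fin n) → F) (ω : Fin d × Fin n → ℝ) : F :=
  ∑ i : Fin d → Fin n, (∏ k, ω (k, i k)) • A i

def momP {F : Type*} [NormedAddCommGroup F] [NormedSpace ℝ F] {d n : ℕ}
    (A : (Fin d → Fin n) → F) (p : ℝ) : ℝ :=
  (∫ ω : Fin d × Fin n → ℝ, ‖decChaos A ω‖ ^ p ∂ stdGaussian (Fin d × Fin n)) ^ (1 / p)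

end

def GaussAlphaPlus (F : Type*) [NormedAddCommGroup F] [NormedSpace ℝ F] (K : ℝ) : Prop :=
  ∀ (n : ℕ) (b : Fin n → Fin n → F),
    (∫ ω : Fin n × Fin n → ℝ, ‖∑ i, ∑ j, ω (i, j) • b i j‖
        ∂ stdGaussian (Fin n × Fin n)) ≤
      K * ∫ ω : (Fin n → ℝ) × (Fin n → ℝ), ‖∑ i, ∑ j, (ω.1 i * ω.2 j) • b i j‖
          ∂ (stdGaussian (Fin n)).prod (stdGaussian (Fin n))

open Matrix

/-- The standard Gaussian measure on `ι → ℝ`. -/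
noncomputable abbrev gam (ι : Type*) [Fintype ι] : Measure (ι → ℝ) := _root_.stdGaussian ι

instance (ι : Type*) [Fintype ι] : IsProbabilityMeasure (gam ι) := by
  unfold gam _root_.stdGaussian; infer_instance

/-! ### Functions of polynomial growth -/

/-- A continuous map of at most polynomial growth; such maps are integrable for Gaussian measures. -/
@[fun_prop]
def PG {E G : Type*} [NormedAddCommGroup E] [NormedAddCommGroup G] (f : E → G) : Prop :=
  Continuous f ∧ ∃ C : ℝ, ∃ k : ℕ, ∀ x, ‖f x‖ ≤ C * (1 + ‖x‖) ^ k

section PGsec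
variable {E G H : Type*} [NormedAddCommGroup E] [NormedAddCommGroup G] [NormedAddCommGroup H]

lemma PG.continuous {f : E → G} (h : PG f) : Continuous f := h.1

lemma PG.bound {f : E → G} (h : PG f) :
    ∃ C : ℝ, 0 ≤ C ∧ ∃ k : ℕ, ∀ x, ‖f x‖ ≤ C * (1 + ‖x‖) ^ k := by
  obtain ⟨-, C, k, h⟩ := h
  refine ⟨C, ?_, k, h⟩
  have := h 0
  simp only [norm_zero, add_zero, one_pow, mul_one] at this
  exact (norm_nonneg _).trans this

@[fun_prop]
lemma PG.id : PG (fun x : E => x) := by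
  refine ⟨continuous_id, 1, 1, fun x => ?_⟩
  simp

@[fun_prop]
lemma PG.const (c : G) : PG (fun _ : E => c) := by
  refine ⟨continuous_const, ‖c‖, 0, fun x => ?_⟩
  simp

@[fun_prop]
lemma PG.comp {g : G → H} {f : E → G} (hg : PG g) (hf : PG f) : PG (fun x => g (f x)) := by
  obtain ⟨C, hC, k, h⟩ := hf.bound
  obtain ⟨D, hD, l, h'⟩ := hg.bound
  refine ⟨hg.1.comp hf.1, D * (1 + C) ^ l, k * l, fun x => (h' _).trans ?_⟩
  rw [mul_assoc, pow_mul, ← mul_pow]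
  gcongr
  have h1 : 1 ≤ (1 + ‖x‖) ^ k := one_le_pow₀ (by linarith [norm_nonneg x])
  nlinarith [h x]

lemma PG.of_le {f : E → G} {g : E → H} (hg : PG g) (hf : Continuous f)
    (c : ℝ) (h : ∀ x, ‖f x‖ ≤ c * ‖g x‖) : PG f := by
  obtain ⟨C, hC, k, h'⟩ := hg.bound
  refine ⟨hf, |c| * C, k, fun x => (h x).trans ?_⟩
  calc c * ‖g x‖ ≤ |c| * ‖g x‖ := by gcongr; exact le_abs_self c
    _ ≤ |c| * (C * (1 + ‖x‖) ^ k) := by gcongr; exact h' x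
    _ = _ := by ring

@[fun_prop]
lemma PG.norm {f : E → G} (hf : PG f) : PG (fun x => ‖f x‖) :=
  hf.of_le hf.1.norm 1 (by simp)

@[fun_prop]
lemma PG.abs {f : E → ℝ} (hf : PG f) : PG (fun x => |f x|) := hf.norm

@[fun_prop]
lemma PG.neg {f : E → G} (hf : PG f) : PG (fun x => - f x) :=
  hf.of_le hf.1.neg 1 (by simp)

@[fun_prop]
lemma PG.prodMk {f : E → G} {g : E → H} (hf : PG f) (hg : PG g) : PG (fun x => (f x, g x)) := by
  obtain ⟨C, hC, k, h⟩ := hf.bound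
  obtain ⟨D, hD, l, h'⟩ := hg.bound
  refine ⟨hf.1.prodMk hg.1, C + D, k + l, fun x => ?_⟩
  have hx : 1 ≤ 1 + ‖x‖ := by linarith [norm_nonneg x]
  have h1 : (1 + ‖x‖) ^ k ≤ (1 + ‖x‖) ^ (k + l) := pow_le_pow_right₀ hx (by omega)
  have h2 : (1 + ‖x‖) ^ l ≤ (1 + ‖x‖) ^ (k + l) := pow_le_pow_right₀ hx (by omega)
  have h0 : 0 ≤ (1 + ‖x‖) ^ (k + l) := by positivity
  rw [Prod.norm_mk]
  refine max_le ((h x).trans ?_) ((h' x).trans ?_) <;> nlinarith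

@[fun_prop]
lemma PG.fst {f : E → G × H} (hf : PG f) : PG (fun x => (f x).1) :=
  hf.of_le hf.1.fst 1 (fun x => by simpa using norm_fst_le (f x))

@[fun_prop]
lemma PG.snd {f : E → G × H} (hf : PG f) : PG (fun x => (f x).2) :=
  hf.of_le hf.1.snd 1 (fun x => by simpa using norm_snd_le (f x))

@[fun_prop]
lemma PG.add {f g : E → G} (hf : PG f) (hg : PG g) : PG (fun x => f x + g x) := by
  refine (hf.prodMk hg).of_le (hf.1.add hg.1) 2 fun x => (norm_add_le _ _).trans ?_
  have := norm_fst_le (f x, g x); have := norm_snd_le (f x, g x)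
  simp only at *; linarith

@[fun_prop]
lemma PG.sub {f g : E → G} (hf : PG f) (hg : PG g) : PG (fun x => f x - g x) := by
  simpa only [sub_eq_add_neg] using hf.add hg.neg

@[fun_prop]
lemma PG.smul [NormedSpace ℝ G] {f : E → ℝ} {g : E → G} (hf : PG f) (hg : PG g) :
    PG (fun x => f x • g x) := by
  obtain ⟨C, hC, k, h⟩ := hf.bound
  obtain ⟨D, hD, l, h'⟩ := hg.bound
  refine ⟨hf.1.smul hg.1, C * D, k + l, fun x => ?_⟩
  rw [norm_smul, pow_add]
  calc _ ≤ (C * (1 + ‖x‖) ^ k) * (D * (1 + ‖x‖) ^ l) := by gcongr; exacts [h x, h' x]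
    _ = _ := by ring

@[fun_prop]
lemma PG.mul {f g : E → ℝ} (hf : PG f) (hg : PG g) : PG (fun x => f x * g x) := hf.smul hg

@[fun_prop]
lemma PG.div_const {f : E → ℝ} (hf : PG f) (c : ℝ) : PG (fun x => f x / c) := by
  simpa only [div_eq_mul_inv] using hf.mul (PG.const _)

@[fun_prop]
lemma PG.pow {f : E → ℝ} (hf : PG f) (k : ℕ) : PG (fun x => f x ^ k) := by
  induction k with
  | zero => simpa using PG.const 1
  | succ k ih => simpa only [pow_succ] using ih.mul hf

@[fun_prop]
lemma PG.max {f g : E → ℝ} (hf : PG f) (hg : PG g) : PG (fun x => max (f x) (g x)) :=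
  (hf.prodMk hg).of_le (hf.1.max hg.1) 1 fun x => by
    rw [one_mul, Prod.norm_mk, Real.norm_eq_abs, Real.norm_eq_abs, Real.norm_eq_abs]
    exact abs_max_le_max_abs_abs

@[fun_prop]
lemma PG.rpow {f : E → ℝ} (hf : PG f) {p : ℝ} (hp : 0 ≤ p) : PG (fun x => f x ^ p) := by
  obtain ⟨k, hk⟩ := exists_nat_ge p
  refine PG.of_le (g := fun x => (1 + |f x|) ^ k) (by fun_prop)
    (hf.1.rpow_const fun x => Or.inr hp) 1 fun x => ?_
  rw [one_mul, Real.norm_eq_abs, Real.norm_eq_abs]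
  have h0 := abs_nonneg (f x)
  rw [abs_of_nonneg (a := (1 + |f x|) ^ k) (by positivity), ← Real.rpow_natCast]
  calc |f x ^ p| ≤ |f x| ^ p := Real.abs_rpow_le_abs_rpow _ _
    _ ≤ (1 + |f x|) ^ p := by gcongr; linarith
    _ ≤ _ := by gcongr; linarith

@[fun_prop]
lemma PG.sum {ι : Type*} {s : Finset ι} {f : ι → E → G} (hf : ∀ i, PG (f i)) :
    PG (fun x => ∑ i ∈ s, f i x) := by
  induction s using Finset.induction_on with
  | empty => simpa using PG.const 0
  | insert a s ha ih => simpa only [Finset.sum_insert ha] using (hf a).add ih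

@[fun_prop]
lemma PG.prod {ι : Type*} {s : Finset ι} {f : ι → E → ℝ} (hf : ∀ i, PG (f i)) :
    PG (fun x => ∏ i ∈ s, f i x) := by
  induction s using Finset.induction_on with
  | empty => simpa using PG.const 1
  | insert a s ha ih => simpa only [Finset.prod_insert ha] using (hf a).mul ih

@[fun_prop]
lemma PG.apply {ι : Type*} [Fintype ι] (i : ι) : PG (fun x : ι → G => x i) :=
  PG.id.of_le (continuous_apply i) 1 fun x => by simpa using norm_le_pi_norm x i

@[fun_prop]
lemma PG.pi {ι : Type*} [Fintype ι] {f : E → ι → G} (hf : ∀ i, PG (fun x => f x i)) :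
    PG (fun x => f x) := by
  refine PG.of_le (g := fun x => ∑ i, ‖f x i‖) (by fun_prop)
    (continuous_pi fun i => (hf i).1) 1 fun x => ?_
  rw [one_mul, Real.norm_of_nonneg (by positivity)]
  refine (pi_norm_le_iff_of_nonneg (by positivity)).2 fun i => ?_
  exact Finset.single_le_sum (f := fun i => ‖f x i‖) (fun i _ => norm_nonneg _)
    (Finset.mem_univ i)

@[fun_prop]
lemma PG.dotProduct {ι : Type*} [Fintype ι] {f g : E → ι → ℝ} (hf : PG f) (hg : PG g) :
    PG (fun x => f x ⬝ᵥ g x) := by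
  unfold _root_.dotProduct; fun_prop

lemma PG.clm [NormedSpace ℝ E] [NormedSpace ℝ G] (L : E →L[ℝ] G) : PG (fun x => L x) :=
  PG.id.of_le L.continuous ‖L‖ L.le_opNorm

lemma seminorm_le_sum {ι : Type*} [Fintype ι] (N : Seminorm ℝ (ι → ℝ)) (x : ι → ℝ) :
    N x ≤ (∑ i, N (Pi.single i 1)) * ‖x‖ := by
  have h : x = ∑ i, x i • (Pi.single i 1 : ι → ℝ) := by
    ext j; simp [Finset.sum_apply, Pi.single_apply]
  calc N x = N (∑ i, x i • (Pi.single i 1 : ι → ℝ)) := by rw [← h]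
    _ ≤ ∑ i, N (x i • (Pi.single i 1 : ι → ℝ)) :=
        Finset.le_sum_of_subadditive N (map_zero N).le (map_add_le_add N) _ _
    _ = ∑ i, ‖x i‖ * N (Pi.single i 1) := by simp only [map_smul_eq_mul]
    _ ≤ ∑ i, ‖x‖ * N (Pi.single i 1) := by
        gcongr with i; exact norm_le_pi_norm x i
    _ = _ := by rw [Finset.sum_mul]; simp only [mul_comm]

lemma PG.seminorm' {ι : Type*} [Fintype ι] (N : Seminorm ℝ (ι → ℝ)) : PG (fun x => N x) := by
  have hc : Continuous N := by
    refine Seminorm.continuous_of_le (q := Real.toNNReal (∑ i, N (Pi.single i 1)) •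
      normSeminorm ℝ (ι → ℝ)) ?_ ?_
    · exact continuous_norm.const_smul _
    · intro x
      refine (seminorm_le_sum N x).trans (mul_le_mul_of_nonneg_right ?_ (norm_nonneg x))
      exact Real.le_coe_toNNReal _
  exact PG.id.of_le hc _ fun x => by
    rw [Real.norm_of_nonneg (apply_nonneg _ _)]; exact seminorm_le_sum N x

@[fun_prop]
lemma PG.seminorm {ι : Type*} [Fintype ι] (N : Seminorm ℝ (ι → ℝ)) {f : E → ι → ℝ} (hf : PG f) :
    PG (fun x => N (f x)) := (PG.seminorm' N).comp hf

end PGsec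

/-! ### The standard Gaussian measure -/

instance gam_isGaussian (ι : Type*) [Fintype ι] : IsGaussian (gam ι) := by
  have h := map_pi_eq_stdGaussian (ι := ι)
  have : gam ι = (ProbabilityTheory.stdGaussian (EuclideanSpace ℝ ι)).map
      (EuclideanSpace.equiv ι ℝ) := by
    rw [← h, Measure.map_map (by fun_prop) (by fun_prop)]
    exact Measure.map_id.symm
  rw [this]; infer_instance

lemma PG.integrable {E : Type*} [NormedAddCommGroup E] [NormedSpace ℝ E] [MeasurableSpace E]
    [BorelSpace E] [CompleteSpace E] [SecondCountableTopology E] {μ : Measure E} [IsGaussian μ]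
    {f : E → ℝ} (hf : PG f) : Integrable f μ := by
  obtain ⟨C, hC, k, h⟩ := hf.bound
  have h1 : Integrable (fun x => (1 + ‖x‖) ^ k) μ := by
    have h3 : MemLp (fun x : E => ‖x‖) k μ := (IsGaussian.memLp_id μ k (by simp)).norm
    have h4 : MemLp (fun _ : E => (1 : ℝ)) k μ := memLp_const 1
    have h2 : MemLp (fun x : E => 1 + ‖x‖) k μ := h4.add h3
    refine (h2.integrable_norm_pow').congr (ae_of_all _ fun x => ?_)
    have h5 : 0 ≤ 1 + ‖x‖ := by positivity
    show ‖1 + ‖x‖‖ ^ k = _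
    rw [Real.norm_of_nonneg h5]
  refine (h1.const_mul C).mono' hf.1.aestronglyMeasurable (ae_of_all _ h)

/-! ### Marginals and moments of Gaussian vectors -/

section marg
variable {ι κ ξ : Type*} [Fintype ι] [Fintype κ] [Fintype ξ]

/-- Distinct coordinates of a standard Gaussian vector form a standard Gaussian vector. -/
lemma gam_pull {f : ι → ξ} (hf : Function.Injective f) :
    MeasurePreserving (fun ω : ξ → ℝ => fun i => ω (f i)) (gam ξ) (gam ι) := by
  refine ⟨by fun_prop, ?_⟩
  symm
  refine Measure.pi_eq fun s hs => ?_
  rw [Measure.map_apply (by fun_prop) (MeasurableSet.univ_pi hs)]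
  have : (fun ω : ξ → ℝ => fun i => ω (f i)) ⁻¹' (Set.univ.pi s) =
      Set.univ.pi (Function.extend f s fun _ => Set.univ) := by
    ext ω
    simp only [Set.mem_preimage, Set.mem_univ_pi]
    constructor
    · intro h j
      by_cases hj : ∃ i, f i = j
      · obtain ⟨i, rfl⟩ := hj
        rw [hf.extend_apply]; exact h i
      · rw [Function.extend_apply' _ _ _ hj]; trivial
    · intro h i
      have := h (f i)
      rwa [hf.extend_apply] at this
  rw [this, gam, _root_.stdGaussian, Measure.pi_pi]
  symm
  refine Fintype.prod_of_injective f hf _ _ (fun j hj => ?_) fun i => ?_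
  · rw [Function.extend_apply' _ _ _ hj]; simp
  · rw [hf.extend_apply]

lemma gam_sum : MeasurePreserving (fun ω : ι ⊕ κ → ℝ => (fun i => ω (Sum.inl i), fun i => ω (Sum.inr i)))
    (gam (ι ⊕ κ)) ((gam ι).prod (gam κ)) :=
  measurePreserving_sumPiEquivProdPi fun _ : ι ⊕ κ => gaussianReal 0 1

lemma gam_pull₂ {f : ι → ξ} {g : κ → ξ} (hf : Function.Injective f) (hg : Function.Injective g)
    (hfg : ∀ i j, f i ≠ g j) :
    MeasurePreserving (fun ω : ξ → ℝ => (fun i => ω (f i), fun j => ω (g j)))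
      (gam ξ) ((gam ι).prod (gam κ)) :=
  gam_sum.comp (gam_pull (f := Sum.elim f g) (hf.sumElim hg hfg))

lemma MeasurePreserving_integral {α β : Type*} [MeasurableSpace α] [MeasurableSpace β]
    {μ : Measure α} {ν : Measure β} {f : α → β} (h : MeasurePreserving f μ ν) {g : β → ℝ}
    (hg : AEStronglyMeasurable g ν) : ∫ x, g (f x) ∂μ = ∫ y, g y ∂ν := by
  have h1 := h.map_eq
  subst h1
  exact (integral_map h.1.aemeasurable hg).symm

end marg

section n2sec
variable {ι : Type*} [Fintype ι]

/-- The Euclidean norm on `ι → ℝ`, as a seminorm. -/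
noncomputable def n2 {ι : Type*} [Fintype ι] : Seminorm ℝ (ι → ℝ) :=
  (normSeminorm ℝ (EuclideanSpace ℝ ι)).comp (WithLp.linearEquiv 2 ℝ (ι → ℝ)).symm.toLinearMap

lemma n2_eq_norm (u : ι → ℝ) : n2 u = ‖WithLp.toLp 2 u‖ := rfl

lemma n2_sq (u : ι → ℝ) : n2 u ^ 2 = ∑ i, u i ^ 2 := by
  rw [n2_eq_norm, EuclideanSpace.norm_sq_eq]; simp

lemma n2_nonneg (u : ι → ℝ) : 0 ≤ n2 u := apply_nonneg _ _

lemma n2_sq' (u : ι → ℝ) : n2 u ^ 2 = u ⬝ᵥ u := by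
  rw [n2_sq, dotProduct]; simp only [sq]

lemma dot_le (u v : ι → ℝ) : u ⬝ᵥ v ≤ n2 u * n2 v := by
  have := real_inner_le_norm (WithLp.toLp 2 v) (WithLp.toLp 2 u)
  rw [mul_comm]
  simpa [n2_eq_norm, EuclideanSpace.inner_eq_star_dotProduct] using this

lemma n2_le_iff {u : ι → ℝ} {r : ℝ} (hr : 0 ≤ r) : n2 u ≤ r ↔ ∑ i, u i ^ 2 ≤ r ^ 2 := by
  rw [← n2_sq]; exact (pow_le_pow_iff_left₀ (n2_nonneg u) hr two_ne_zero).symm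

lemma abs_dot_le (u v : ι → ℝ) : |u ⬝ᵥ v| ≤ n2 u * n2 v := by
  rw [abs_le']; refine ⟨dot_le u v, ?_⟩
  rw [← neg_dotProduct, ← map_neg_eq_map n2 u]; exact dot_le _ v

lemma gam_map_dot (t : ι → ℝ) :
    (gam ι).map (fun g => t ⬝ᵥ g) = (gaussianReal 0 1).map (fun x => n2 t * x) := by
  have h := map_pi_eq_stdGaussian (ι := ι)
  let L : StrongDual ℝ (EuclideanSpace ℝ ι) := innerSL ℝ (WithLp.toLp 2 t)
  have h1 : (fun g : ι → ℝ => t ⬝ᵥ g) = L ∘ WithLp.toLp 2 := by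
    ext g; simp [L, EuclideanSpace.inner_eq_star_dotProduct, dotProduct_comm]
  have h2 : (gam ι).map (fun g => t ⬝ᵥ g) =
      (ProbabilityTheory.stdGaussian (EuclideanSpace ℝ ι)).map L := by
    rw [h1, ← h, Measure.map_map (by fun_prop) (by fun_prop)]; rfl
  rw [h2, IsGaussian.map_eq_gaussianReal, integral_strongDual_stdGaussian,
    variance_dual_stdGaussian, gaussianReal_map_const_mul]
  congr 1
  · simp
  · ext; simp [L, n2_eq_norm]

lemma gam_integral_dot (t : ι → ℝ) {φ : ℝ → ℝ} (hφ : Continuous φ) :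
    ∫ g, φ (t ⬝ᵥ g) ∂gam ι = ∫ x, φ (n2 t * x) ∂gaussianReal 0 1 := by
  have h1 := integral_map (μ := gam ι) (φ := fun g => t ⬝ᵥ g) (f := φ)
    (PG.continuous (by fun_prop)).aemeasurable hφ.aestronglyMeasurable
  have h2 := integral_map (μ := gaussianReal 0 1) (φ := fun x => n2 t * x) (f := φ)
    (by fun_prop) hφ.aestronglyMeasurable
  rw [← h1, gam_map_dot, h2]

lemma gauss_int_sq : ∫ x, x ^ 2 ∂gaussianReal 0 1 = 1 := by
  have := variance_id_gaussianReal (μ := 0) (v := 1)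
  rw [variance_eq_integral (by fun_prop)] at this
  simpa using this

lemma gam_dot_sq (t : ι → ℝ) : ∫ g, (t ⬝ᵥ g) ^ 2 ∂gam ι = n2 t ^ 2 := by
  rw [gam_integral_dot t (φ := fun x => x ^ 2) (by fun_prop)]
  simp only [mul_pow]
  rw [integral_const_mul, gauss_int_sq, mul_one]

lemma gauss_abs_lower : 1 / 3 ≤ ∫ x, |x| ∂gaussianReal 0 1 := by
  have hcos : ∫ x, Real.cos x ∂gaussianReal 0 1 = Real.exp (-(1 / 2)) := by
    have h := charFun_gaussianReal (μ := 0) (v := 1) (t := 1)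
    rw [charFun_apply_real] at h
    have h2 : (∫ x, Complex.exp (((1 : ℝ) : ℂ) * x * Complex.I) ∂gaussianReal 0 1).re =
        ∫ x, Real.cos x ∂gaussianReal 0 1 := by
      rw [← RCLike.re_eq_complex_re, ← integral_re]
      · congr 1; ext x; simp [Complex.exp_ofReal_mul_I_re]
      · refine (integrable_const (1 : ℝ)).mono' (by fun_prop) (ae_of_all _ fun x => ?_)
        have := Complex.norm_exp_ofReal_mul_I x
        simp [this]
    rw [← h2, h]
    have : (((1 : ℝ) : ℂ) * ((0 : ℝ) : ℂ) * Complex.I - ((1 : NNReal) : ℂ) * ((1 : ℝ) : ℂ) ^ 2 / 2) =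
      ((-(1/2) : ℝ) : ℂ) := by push_cast; simp
    rw [this, Complex.exp_ofReal_re]
  have hpt : ∀ x : ℝ, 1 - Real.cos x ≤ |x| := fun x => by
    have h1 : Real.cos x = 1 - 2 * Real.sin (x / 2) ^ 2 := by
      have := Real.cos_sq' (x / 2); have h3 := Real.cos_two_mul (x / 2)
      rw [mul_div_cancel₀ x two_ne_zero] at h3; rw [h3, this]; ring
    have h2 : |Real.sin (x / 2)| ≤ |x / 2| := Real.abs_sin_le_abs
    have h3 : |Real.sin (x / 2)| ≤ 1 := Real.abs_sin_le_one _
    rw [abs_div, abs_two] at h2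
    rw [h1, ← sq_abs]; nlinarith [abs_nonneg (Real.sin (x / 2))]
  have h1 : ∫ x, (1 - Real.cos x) ∂gaussianReal 0 1 ≤ ∫ x, |x| ∂gaussianReal 0 1 := by
    refine integral_mono ?_ ?_ hpt
    · refine (integrable_const (2 : ℝ)).mono' (by fun_prop) (ae_of_all _ fun x => ?_)
      rw [Real.norm_eq_abs, abs_le]; constructor <;> linarith [Real.cos_le_one x, Real.neg_one_le_cos x]
    · exact PG.integrable (by fun_prop)
  rw [integral_sub (integrable_const _) ?_, hcos] at h1
  · simp only [integral_const, probReal_univ, smul_eq_mul, mul_one] at h1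
    have h2 := Real.add_one_le_exp (1 / 2 : ℝ)
    have h3 : Real.exp (-(1 / 2)) ≤ 2 / 3 := by
      rw [Real.exp_neg]
      rw [inv_le_comm₀ (Real.exp_pos _) (by norm_num)]; linarith
    linarith
  · refine (integrable_const (1 : ℝ)).mono' (by fun_prop) (ae_of_all _ fun x => ?_)
    exact Real.abs_cos_le_one x

lemma gam_abs_dot (t : ι → ℝ) : n2 t / 3 ≤ ∫ g, |t ⬝ᵥ g| ∂gam ι := by
  rw [gam_integral_dot t (φ := fun x => |x|) (by fun_prop)]
  simp only [abs_mul, abs_of_nonneg (n2_nonneg t)]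
  rw [integral_const_mul]
  nlinarith [gauss_abs_lower, n2_nonneg t]

lemma gauss_moment {q : ℝ} (hq : 1 ≤ q) : ∫ x, |x| ^ q ∂gaussianReal 0 1 ≤ 2 * √q ^ q := by
  have hq0 : 0 < √q := Real.sqrt_pos.2 (by linarith)
  have hqq : √q * √q = q := Real.mul_self_sqrt (by linarith)
  have hpt : ∀ x : ℝ, |x| ^ q ≤ √q ^ q * Real.exp (-q) *
      (Real.exp (√q * x) + Real.exp (-√q * x)) := fun x => by
    have h1 : |x| / √q ≤ Real.exp (|x| / √q - 1) := by
      linarith [Real.add_one_le_exp (|x| / √q - 1)]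
    have h2 : (|x| / √q) ^ q ≤ Real.exp (|x| / √q - 1) ^ q :=
      Real.rpow_le_rpow (by positivity) h1 (by linarith)
    rw [← Real.exp_mul, Real.div_rpow (abs_nonneg x) hq0.le, div_le_iff₀ (by positivity)] at h2
    have h3 : (|x| / √q - 1) * q = -q + √q * |x| := by
      field_simp; linear_combination (-|x|) * hqq
    rw [h3, Real.exp_add] at h2
    have h4 : Real.exp (√q * |x|) ≤ Real.exp (√q * x) + Real.exp (-√q * x) := by
      rcases abs_cases x with ⟨h, _⟩ | ⟨h, _⟩ <;> rw [h]
      · linarith [Real.exp_pos (-√q * x)]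
      · rw [mul_neg, ← neg_mul]; linarith [Real.exp_pos (√q * x)]
    calc _ ≤ _ := h2
      _ = √q ^ q * Real.exp (-q) * Real.exp (√q * |x|) := by ring
      _ ≤ _ := by gcongr
  have hi : ∀ t : ℝ, Integrable (fun x => Real.exp (t * x)) (gaussianReal 0 1) :=
    fun t => integrable_exp_mul_gaussianReal t
  have hm : ∀ t : ℝ, ∫ x, Real.exp (t * x) ∂gaussianReal 0 1 = Real.exp (t ^ 2 / 2) := fun t => by
    have := congrFun (mgf_id_gaussianReal (μ := 0) (v := 1)) t
    simpa [mgf] using this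
  calc _ ≤ ∫ x, √q ^ q * Real.exp (-q) * (Real.exp (√q * x) + Real.exp (-√q * x)) ∂gaussianReal 0 1 := by
        refine integral_mono (PG.integrable ?_) (((hi _).add (hi _)).const_mul _) hpt
        have : 0 ≤ q := by linarith
        exact PG.rpow (by fun_prop) this
    _ = √q ^ q * Real.exp (-q) * (2 * Real.exp (q / 2)) := by
        rw [integral_const_mul, integral_add (hi _) (hi _), hm, hm, neg_sq, Real.sq_sqrt (by linarith)]
        ring
    _ = 2 * √q ^ q * (Real.exp (-q) * Real.exp (q / 2)) := by ring
    _ ≤ 2 * √q ^ q * 1 := by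
        gcongr; rw [← Real.exp_add, Real.exp_le_one_iff]; linarith
    _ = _ := mul_one _

lemma gam_moment_dot (t : ι → ℝ) {q : ℝ} (hq : 1 ≤ q) :
    ∫ g, |t ⬝ᵥ g| ^ q ∂gam ι ≤ 2 * (√q * n2 t) ^ q := by
  have h0 : 0 ≤ q := by linarith
  rw [gam_integral_dot t (φ := fun x => |x| ^ q) (PG.continuous (PG.rpow (by fun_prop) h0))]
  simp only [abs_mul, abs_of_nonneg (n2_nonneg t), Real.mul_rpow (n2_nonneg t) (abs_nonneg _)]
  rw [integral_const_mul, Real.mul_rpow (Real.sqrt_nonneg _) (n2_nonneg t)]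
  nlinarith [gauss_moment hq, Real.rpow_nonneg (n2_nonneg t) q]

end n2sec

/-! ### Concentration of Gaussian suprema -/

section conc
variable {ι : Type*} [Fintype ι]

/-- `f` is the support function of a set of functionals of Euclidean norm at most `σ`
(the supremum being attained at every point). -/
def SupFun (σ : ℝ) (f : (ι → ℝ) → ℝ) : Prop :=
  ∀ x, ∃ t : ι → ℝ, f x = t ⬝ᵥ x ∧ (∀ y, t ⬝ᵥ y ≤ f y) ∧ n2 t ≤ σ

lemma SupFun.mono {σ τ : ℝ} {f : (ι → ℝ) → ℝ} (h : SupFun σ f) (hst : σ ≤ τ) : SupFun τ f :=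
  fun x => let ⟨t, a, b, c⟩ := h x; ⟨t, a, b, c.trans hst⟩

lemma SupFun.nonneg {σ : ℝ} {f : (ι → ℝ) → ℝ} (h : SupFun σ f) : 0 ≤ σ :=
  let ⟨t, _, _, c⟩ := h 0; (n2_nonneg t).trans c

lemma SupFun.lip {σ : ℝ} {f : (ι → ℝ) → ℝ} (h : SupFun σ f) (x y : ι → ℝ) :
    f x - f y ≤ σ * n2 (x - y) := by
  obtain ⟨t, h1, h2, h3⟩ := h x
  have h4 := h2 y
  have h5 := dot_le t (x - y)
  have h6 : n2 t * n2 (x - y) ≤ σ * n2 (x - y) := by gcongr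
  rw [dotProduct_sub] at h5
  linarith

lemma SupFun.pg {σ : ℝ} {f : (ι → ℝ) → ℝ} (h : SupFun σ f) : PG f := by
  have hσ := h.nonneg
  have hab : ∀ x y, |f x - f y| ≤ σ * n2 (x - y) := fun x y => by
    rw [abs_le']; refine ⟨h.lip x y, ?_⟩
    rw [neg_sub, ← map_neg_eq_map n2, neg_sub]; exact h.lip y x
  have h0 : f 0 = 0 := by
    obtain ⟨t, h1, -, -⟩ := h 0; simpa using h1
  refine (PG.seminorm' (n2 (ι := ι))).of_le ?_ σ fun x => ?_
  · rw [continuous_iff_continuousAt]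
    intro x
    rw [ContinuousAt, tendsto_iff_dist_tendsto_zero]
    have hc : Continuous fun y : ι → ℝ => σ * n2 (y - x) := PG.continuous (by fun_prop)
    have := hc.tendsto x
    simp only [sub_self, map_zero, mul_zero] at this
    exact squeeze_zero (fun _ => dist_nonneg) (fun y => hab y x) this
  · have := hab x 0
    rw [h0, sub_zero, sub_zero] at this
    rwa [Real.norm_eq_abs, Real.norm_of_nonneg (n2_nonneg x)]

lemma jensen_rpow {α : Type*} [MeasurableSpace α] {μ : Measure α} [IsProbabilityMeasure μ]
    {v : α → ℝ} {q : ℝ} (hq : 1 ≤ q) (h0 : ∀ x, 0 ≤ v x) (hv : Integrable v μ)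
    (hvq : Integrable (fun x => v x ^ q) μ) : (∫ x, v x ∂μ) ^ q ≤ ∫ x, v x ^ q ∂μ :=
  (convexOn_rpow hq).map_integral_le
    (continuousOn_id.rpow_const fun _ _ => Or.inr (by linarith)) isClosed_Ici
    (ae_of_all _ h0) hv hvq

lemma add_rpow_le' {q : ℝ} (hq : 1 ≤ q) {a b : ℝ} (ha : 0 ≤ a) (hb : 0 ≤ b) :
    (a + b) ^ q ≤ 2 ^ (q - 1) * (a ^ q + b ^ q) := by
  have h := Real.rpow_sum_le_const_mul_sum_rpow_of_nonneg (s := Finset.univ) (f := ![a, b]) hq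
    (by intro i _; fin_cases i <;> simpa)
  simpa using h

/-- Comparison of `f` at `x` and at a nearby rotated point, one step of the rotation argument. -/
lemma conc_step {σ : ℝ} {f : (ι → ℝ) → ℝ} (hf : SupFun σ f) {q : ℝ} (hq : 1 ≤ q) {c s : ℝ}
    (hc : c ≤ 1) (hs : 0 ≤ s) :
    ∫ z : (ι → ℝ) × (ι → ℝ), max (f z.1 - f (c • z.1 - s • z.2)) 0 ^ q ∂(gam ι).prod (gam ι) ≤
      2 ^ (q - 1) * ((1 - c) ^ q * (∫ x, |f x| ^ q ∂gam ι) + 2 * (s * (√q * σ)) ^ q) := by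
  have hq0 : 0 ≤ q := by linarith
  have hpg := hf.pg
  have hσ := hf.nonneg
  rw [integral_prod _ (PG.integrable (by fun_prop (disch := assumption)))]
  calc _ ≤ ∫ x, 2 ^ (q - 1) * ((1 - c) ^ q * |f x| ^ q + 2 * (s * (√q * σ)) ^ q) ∂gam ι := by
        refine integral_mono ?_ (PG.integrable (by fun_prop (disch := assumption))) fun x => ?_
        · exact Integrable.integral_prod_left (f := fun z : (ι → ℝ) × (ι → ℝ) =>
            max (f z.1 - f (c • z.1 - s • z.2)) 0 ^ q)
            (PG.integrable (by fun_prop (disch := assumption)))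
        · obtain ⟨t, h1, h2, h3⟩ := hf x
          calc _ ≤ ∫ y, 2 ^ (q - 1) * ((1 - c) ^ q * |f x| ^ q + s ^ q * |t ⬝ᵥ y| ^ q) ∂gam ι := by
                refine integral_mono (PG.integrable (by fun_prop (disch := assumption)))
                  (PG.integrable (by fun_prop (disch := assumption))) fun y => ?_
                have h4 : f x - f (c • x - s • y) ≤ (1 - c) * |f x| + s * |t ⬝ᵥ y| := by
                  have := h2 (c • x - s • y)
                  rw [dotProduct_sub, dotProduct_smul, dotProduct_smul, smul_eq_mul, smul_eq_mul,
                    ← h1] at this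
                  nlinarith [le_abs_self (f x), le_abs_self (t ⬝ᵥ y)]
                have ha : 0 ≤ (1 - c) * |f x| := mul_nonneg (by linarith) (abs_nonneg _)
                have hb : 0 ≤ s * |t ⬝ᵥ y| := mul_nonneg hs (abs_nonneg _)
                calc _ ≤ ((1 - c) * |f x| + s * |t ⬝ᵥ y|) ^ q :=
                      Real.rpow_le_rpow (le_max_right _ _) (max_le h4 (by positivity)) hq0
                  _ ≤ _ := add_rpow_le' hq ha hb
                  _ = _ := by
                    rw [Real.mul_rpow (by linarith) (abs_nonneg _), Real.mul_rpow hs (abs_nonneg _)]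
            _ = 2 ^ (q - 1) * ((1 - c) ^ q * |f x| ^ q + s ^ q * ∫ y, |t ⬝ᵥ y| ^ q ∂gam ι) := by
                rw [integral_const_mul, integral_add (integrable_const _)
                  (PG.integrable (by fun_prop (disch := assumption))),
                  integral_const_mul (s ^ q)]
                simp
            _ ≤ _ := by
                refine mul_le_mul_of_nonneg_left (add_le_add le_rfl ?_) (by positivity)
                rw [Real.mul_rpow hs (by positivity), mul_left_comm]
                refine mul_le_mul_of_nonneg_left ?_ (by positivity)
                refine (gam_moment_dot t hq).trans ?_
                gcongr
    _ = _ := by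
        rw [integral_const_mul, integral_add (PG.integrable (by fun_prop (disch := assumption)))
          (integrable_const _), integral_const_mul]
        simp

lemma gam_rot (θ : ℝ) : MeasurePreserving
    (fun z : (ι → ℝ) × (ι → ℝ) =>
      (Real.cos θ • z.1 - Real.sin θ • z.2, Real.sin θ • z.1 + Real.cos θ • z.2))
    ((gam ι).prod (gam ι)) ((gam ι).prod (gam ι)) := by
  refine ⟨by fun_prop, ?_⟩
  have h0 : (gam ι)[_root_.id] = 0 := by
    have hi : Integrable _root_.id (gam ι) := IsGaussian.integrable_id
    ext i
    have h1 := (ContinuousLinearMap.proj (R := ℝ) (φ := fun _ : ι => ℝ) i).integral_comp_comm hi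
    simp only [ContinuousLinearMap.proj_apply] at h1
    rw [← h1]
    have := gam_integral_dot (Pi.single i 1 : ι → ℝ) (φ := fun x => x) (by fun_prop)
    simp only [single_one_dotProduct] at this
    rw [integral_const_mul _ (fun x => x), integral_id_gaussianReal, mul_zero] at this
    exact this
  have := IsGaussian.map_rotation_eq_self h0 (-θ)
  convert this using 2
  ext z <;> simp [ContinuousLinearMap.rotation_apply]; ring

/-- Gaussian concentration by rotating `(x, y)` by the angle `π / 2` in `m` equal steps. -/
lemma conc_discrete {σ : ℝ} {f : (ι → ℝ) → ℝ} (hf : SupFun σ f) {q : ℝ} (hq : 1 ≤ q) {m : ℕ}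
    (hm : 0 < m) :
    ∫ z : (ι → ℝ) × (ι → ℝ), max (f z.1 - f (- z.2)) 0 ^ q ∂(gam ι).prod (gam ι) ≤
      2 ^ (q - 1) * ((2 / m) ^ q * (∫ x, |f x| ^ q ∂gam ι) + 2 * (2 * (√q * σ)) ^ q) := by
  have hq0 : 0 ≤ q := by linarith
  have hpg := hf.pg
  have hσ := hf.nonneg
  have hm0 : (0 : ℝ) < m := by exact_mod_cast hm
  set h : ℝ := Real.pi / (2 * m) with hh
  have hh0 : 0 < h := by positivity
  let X : ℕ → (ι → ℝ) × (ι → ℝ) → ι → ℝ := fun k z => Real.cos (k * h) • z.1 - Real.sin (k * h) • z.2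
  have hX0 : ∀ z, X 0 z = z.1 := fun z => by simp [X]
  have hXm : ∀ z, X m z = - z.2 := fun z => by
    have : m * h = Real.pi / 2 := by rw [hh]; field_simp
    simp [X, this]
  have hXpg : ∀ k, PG (X k) := fun k => by
    simp only [X]; fun_prop
  have hstep : ∀ k : ℕ, ∫ z, max (f (X k z) - f (X (k + 1) z)) 0 ^ q ∂(gam ι).prod (gam ι) =
      ∫ z : (ι → ℝ) × (ι → ℝ), max (f z.1 - f (Real.cos h • z.1 - Real.sin h • z.2)) 0 ^ q
        ∂(gam ι).prod (gam ι) := fun k => by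
    rw [← MeasurePreserving_integral (gam_rot (k * h))
      (g := fun z : (ι → ℝ) × (ι → ℝ) => max (f z.1 - f (Real.cos h • z.1 - Real.sin h • z.2)) 0 ^ q)
      (PG.continuous (by fun_prop (disch := assumption))).aestronglyMeasurable]
    congr 1; ext z
    congr 3
    congr 1
    ext i
    simp only [X, Nat.cast_add, Nat.cast_one, add_mul, one_mul, Real.cos_add, Real.sin_add,
      Pi.sub_apply, Pi.add_apply, Pi.smul_apply, smul_eq_mul]
    ring
  have hpt : ∀ z, max (f z.1 - f (- z.2)) 0 ^ q ≤
      (m : ℝ) ^ (q - 1) * ∑ k ∈ Finset.range m, max (f (X k z) - f (X (k + 1) z)) 0 ^ q := fun z => by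
    have h1 := Real.rpow_sum_le_const_mul_sum_rpow_of_nonneg (s := Finset.range m)
      (f := fun k => max (f (X k z) - f (X (k + 1) z)) 0) hq (fun _ _ => le_max_right _ _)
    rw [Finset.card_range] at h1
    refine le_trans (Real.rpow_le_rpow (le_max_right _ _) ?_ hq0) h1
    refine max_le ?_ (Finset.sum_nonneg fun _ _ => le_max_right _ _)
    rw [← hX0 z, ← hXm z, ← Finset.sum_range_sub' (fun k => f (X k z))]
    exact Finset.sum_le_sum fun k _ => le_max_left _ _
  have hcos : 1 - Real.cos h ≤ h ^ 2 / 2 := by linarith [Real.one_sub_sq_div_two_le_cos (x := h)]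
  have hsin : Real.sin h ≤ h := Real.sin_le hh0.le
  have hsin0 : 0 ≤ Real.sin h := Real.sin_nonneg_of_nonneg_of_le_pi hh0.le (by
    rw [hh, div_le_iff₀ (by positivity)]
    have : (1 : ℝ) ≤ m := by exact_mod_cast hm
    nlinarith [Real.pi_pos])
  have hmh : m * h ≤ 2 := by
    have : m * h = Real.pi / 2 := by rw [hh]; field_simp
    rw [this]; linarith [Real.pi_le_four]
  calc _ ≤ ∫ z, (m : ℝ) ^ (q - 1) * ∑ k ∈ Finset.range m, max (f (X k z) - f (X (k + 1) z)) 0 ^ q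
        ∂(gam ι).prod (gam ι) :=
        integral_mono (PG.integrable (by fun_prop (disch := assumption)))
          (PG.integrable (by fun_prop (disch := assumption))) hpt
    _ = (m : ℝ) ^ (q - 1) * (m * ∫ z : (ι → ℝ) × (ι → ℝ),
        max (f z.1 - f (Real.cos h • z.1 - Real.sin h • z.2)) 0 ^ q ∂(gam ι).prod (gam ι)) := by
        rw [integral_const_mul, integral_finsetSum _ fun k _ =>
          PG.integrable (by fun_prop (disch := assumption))]
        simp only [hstep]; simp
    _ = (m : ℝ) ^ q * ∫ z : (ι → ℝ) × (ι → ℝ),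
        max (f z.1 - f (Real.cos h • z.1 - Real.sin h • z.2)) 0 ^ q ∂(gam ι).prod (gam ι) := by
        rw [← mul_assoc]; congr 1
        nth_rw 2 [← Real.rpow_one (m : ℝ)]
        rw [← Real.rpow_add hm0]; congr 1; ring
    _ ≤ (m : ℝ) ^ q * (2 ^ (q - 1) * ((1 - Real.cos h) ^ q * (∫ x, |f x| ^ q ∂gam ι) +
          2 * (Real.sin h * (√q * σ)) ^ q)) := by
        gcongr
        exact conc_step hf hq (Real.cos_le_one h) hsin0
    _ = 2 ^ (q - 1) * ((m * (1 - Real.cos h)) ^ q * (∫ x, |f x| ^ q ∂gam ι) +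
          2 * (m * Real.sin h * (√q * σ)) ^ q) := by
        rw [Real.mul_rpow hm0.le (by linarith [Real.cos_le_one h]), mul_assoc (m : ℝ) (Real.sin h),
          Real.mul_rpow hm0.le (by positivity)]
        ring
    _ ≤ _ := by
        have h1 : m * (1 - Real.cos h) ≤ 2 / m := by
          rw [le_div_iff₀ hm0]
          have h5 : (m * h) ^ 2 ≤ 4 := by nlinarith [mul_pos hm0 hh0]
          nlinarith [mul_le_mul_of_nonneg_left hcos (sq_nonneg (m : ℝ))]
        have h2 : m * Real.sin h ≤ 2 := by nlinarith
        have h3 : 0 ≤ m * (1 - Real.cos h) := mul_nonneg hm0.le (by linarith [Real.cos_le_one h])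
        have h4 : 0 ≤ ∫ x, |f x| ^ q ∂gam ι := integral_nonneg fun x => by positivity
        gcongr

/-- The limit of infinitely many rotation steps. -/
lemma conc_sym {σ : ℝ} {f : (ι → ℝ) → ℝ} (hf : SupFun σ f) {q : ℝ} (hq : 1 ≤ q) :
    ∫ z : (ι → ℝ) × (ι → ℝ), max (f z.1 - f (- z.2)) 0 ^ q ∂(gam ι).prod (gam ι) ≤
      (4 * (√q * σ)) ^ q := by
  have hσ := hf.nonneg
  set M := ∫ x, |f x| ^ q ∂gam ι
  have ht : Filter.Tendsto (fun m : ℕ => (2 : ℝ) ^ (q - 1) *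
      ((2 / (m : ℝ)) ^ q * M + 2 * (2 * (√q * σ)) ^ q)) Filter.atTop
      (nhds (2 ^ (q - 1) * (0 ^ q * M + 2 * (2 * (√q * σ)) ^ q))) := by
    refine Filter.Tendsto.const_mul _ (Filter.Tendsto.add_const _ (Filter.Tendsto.mul_const _ ?_))
    exact (tendsto_const_div_atTop_nhds_zero_nat 2).rpow_const (Or.inr (by linarith))
  refine (ge_of_tendsto ht ?_).trans (le_of_eq ?_)
  · filter_upwards [Filter.eventually_gt_atTop 0] with m hm
    exact conc_discrete hf hq hm
  · rw [Real.zero_rpow (by linarith), zero_mul, zero_add, ← mul_assoc]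
    have : (2 : ℝ) ^ (q - 1) * 2 = 2 ^ q := by
      nth_rw 2 [← Real.rpow_one (2 : ℝ)]
      rw [← Real.rpow_add two_pos]; congr 1; ring
    rw [this, ← Real.mul_rpow (by norm_num) (by positivity)]
    congr 1; ring

lemma gam_neg : MeasurePreserving (fun x : ι → ℝ => - x) (gam ι) (gam ι) := by
  have h := (gam_rot (ι := ι) Real.pi)
  have h2 := (measurePreserving_fst (μ := gam ι) (ν := gam ι)).comp h
  refine ⟨by fun_prop, ?_⟩
  have h3 := h2.map_eq
  have h4 : (Prod.fst ∘ fun z : (ι → ℝ) × (ι → ℝ) =>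
      (Real.cos Real.pi • z.1 - Real.sin Real.pi • z.2, Real.sin Real.pi • z.1 + Real.cos Real.pi • z.2))
      = (fun x => - x) ∘ Prod.fst := by ext z; simp
  rw [h4, ← Measure.map_map (by fun_prop) (by fun_prop),
    (measurePreserving_fst (μ := gam ι) (ν := gam ι)).map_eq] at h3
  exact h3

/-- Gaussian concentration in `L^q`, with the sub-Gaussian growth `√q` of the constant. -/
lemma conc_mean {σ : ℝ} {f : (ι → ℝ) → ℝ} (hf : SupFun σ f) {q : ℝ} (hq : 1 ≤ q) :
    ∫ x, max (f x - ∫ y, f y ∂gam ι) 0 ^ q ∂gam ι ≤ (4 * (√q * σ)) ^ q := by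
  have hq0 : 0 ≤ q := by linarith
  have hpg := hf.pg
  refine le_trans ?_ (conc_sym hf hq)
  rw [integral_prod _ (PG.integrable (by fun_prop (disch := assumption)))]
  refine integral_mono (PG.integrable (by fun_prop (disch := assumption))) ?_ fun x => ?_
  · exact Integrable.integral_prod_left (f := fun z : (ι → ℝ) × (ι → ℝ) =>
      max (f z.1 - f (- z.2)) 0 ^ q) (PG.integrable (by fun_prop (disch := assumption)))
  · have h1 : f x - ∫ y, f y ∂gam ι = ∫ y, (f x - f (-y)) ∂gam ι := by
      rw [integral_sub (integrable_const _) (PG.integrable (by fun_prop)),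
        MeasurePreserving_integral gam_neg (g := f) hpg.1.aestronglyMeasurable]
      simp
    have hi : Integrable (fun y => max (f x - f (-y)) 0) (gam ι) := PG.integrable (by fun_prop)
    have h2 : max (f x - ∫ y, f y ∂gam ι) 0 ≤ ∫ y, max (f x - f (-y)) 0 ∂gam ι := by
      refine max_le ?_ (integral_nonneg fun y => le_max_right _ _)
      rw [h1]
      exact integral_mono (PG.integrable (by fun_prop)) hi fun y => le_max_left _ _
    exact (Real.rpow_le_rpow (le_max_right _ _) h2 hq0).trans
      (jensen_rpow hq (fun _ => le_max_right _ _) hi (PG.integrable (by fun_prop (disch := assumption))))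

/-- The `q`-th moment of a nonnegative Gaussian supremum is at most of the order of its mean
plus `√q` times its Lipschitz constant. -/
lemma conc_moment {σ : ℝ} {f : (ι → ℝ) → ℝ} (hf : SupFun σ f) (h0 : ∀ x, 0 ≤ f x)
    {q : ℝ} (hq : 1 ≤ q) :
    ∫ x, f x ^ q ∂gam ι ≤ (2 * ((∫ x, f x ∂gam ι) + 4 * (√q * σ))) ^ q := by
  have hq0 : 0 ≤ q := by linarith
  have hpg := hf.pg
  have hσ := hf.nonneg
  set m := ∫ x, f x ∂gam ι with hm
  have hm0 : 0 ≤ m := integral_nonneg h0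
  calc _ ≤ ∫ x, 2 ^ (q - 1) * (m ^ q + max (f x - m) 0 ^ q) ∂gam ι := by
        refine integral_mono (PG.integrable (by fun_prop (disch := assumption)))
          (PG.integrable (by fun_prop (disch := assumption))) fun x => ?_
        refine le_trans (Real.rpow_le_rpow (h0 x) ?_ hq0) (add_rpow_le' hq hm0 (le_max_right _ _))
        linarith [le_max_left (f x - m) 0]
    _ = 2 ^ (q - 1) * (m ^ q + ∫ x, max (f x - m) 0 ^ q ∂gam ι) := by
        rw [integral_const_mul, integral_add (integrable_const _)
          (PG.integrable (by fun_prop (disch := assumption)))]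
        simp
    _ ≤ 2 ^ (q - 1) * ((m + 4 * (√q * σ)) ^ q + (m + 4 * (√q * σ)) ^ q) := by
        gcongr
        · have : 0 ≤ √q * σ := by positivity
          linarith
        · refine (conc_mean hf hq).trans ?_
          gcongr
          linarith
    _ = _ := by
        rw [Real.mul_rpow two_pos.le (by positivity), ← two_mul, ← mul_assoc]
        congr 1
        nth_rw 2 [← Real.rpow_one (2 : ℝ)]
        rw [← Real.rpow_add two_pos]; congr 1; ring

/-- The expected maximum of at most `e^B` Gaussian suprema exceeds the largest of their means
by at most a multiple of `√B` times their common Lipschitz constant. -/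
lemma conc_max {κ : Type*} (K : Finset κ) {σ B M : ℝ} (hB : 1 ≤ B)
    (hK : (K.card : ℝ) ≤ Real.exp B) {f : κ → (ι → ℝ) → ℝ} (hf : ∀ k ∈ K, SupFun σ (f k))
    (hM : ∀ k ∈ K, ∫ x, f k x ∂gam ι ≤ M) {h : (ι → ℝ) → ℝ} (hh : PG h)
    (hle : ∀ x, ∃ k ∈ K, h x ≤ f k x) :
    ∫ x, h x ∂gam ι ≤ M + 12 * (√B * σ) := by
  have hB0 : 0 ≤ B := by linarith
  obtain ⟨k₀, hk₀, -⟩ := hle 0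
  have hσ : 0 ≤ σ := (hf k₀ hk₀).nonneg
  have hpt : ∀ x, max (h x - M) 0 ^ B ≤
      ∑ k ∈ K, max (f k x - ∫ y, f k y ∂gam ι) 0 ^ B := fun x => by
    obtain ⟨k, hk, hle⟩ := hle x
    calc _ ≤ max (f k x - ∫ y, f k y ∂gam ι) 0 ^ B := by
          refine Real.rpow_le_rpow (le_max_right _ _) (max_le_max ?_ le_rfl) hB0
          linarith [hM k hk]
      _ ≤ _ := Finset.single_le_sum (f := fun k => max (f k x - ∫ y, f k y ∂gam ι) 0 ^ B)
          (fun k _ => Real.rpow_nonneg (le_max_right _ _) _) hk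
  have hik : ∀ k ∈ K, Integrable (fun x => max (f k x - ∫ y, f k y ∂gam ι) 0 ^ B) (gam ι) :=
    fun k hk => by
      have := (hf k hk).pg
      exact PG.integrable (by fun_prop (disch := assumption))
  have h1 : (∫ x, max (h x - M) 0 ∂gam ι) ^ B ≤ (12 * (√B * σ)) ^ B := by
    calc _ ≤ ∫ x, max (h x - M) 0 ^ B ∂gam ι := jensen_rpow hB (fun _ => le_max_right _ _)
          (PG.integrable (by fun_prop)) (PG.integrable (by fun_prop (disch := assumption)))
      _ ≤ ∫ x, ∑ k ∈ K, max (f k x - ∫ y, f k y ∂gam ι) 0 ^ B ∂gam ι :=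
          integral_mono (PG.integrable (by fun_prop (disch := assumption)))
            (integrable_finsetSum _ hik) hpt
      _ = ∑ k ∈ K, ∫ x, max (f k x - ∫ y, f k y ∂gam ι) 0 ^ B ∂gam ι := integral_finsetSum _ hik
      _ ≤ ∑ k ∈ K, (4 * (√B * σ)) ^ B := Finset.sum_le_sum fun k hk => conc_mean (hf k hk) hB
      _ = K.card * (4 * (√B * σ)) ^ B := by rw [Finset.sum_const, nsmul_eq_mul]
      _ ≤ Real.exp B * (4 * (√B * σ)) ^ B := by gcongr
      _ = (Real.exp 1 * (4 * (√B * σ))) ^ B := by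
          rw [Real.mul_rpow (Real.exp_pos _).le (by positivity), ← Real.exp_mul, one_mul]
      _ ≤ _ := by
          refine Real.rpow_le_rpow (by positivity) ?_ hB0
          have := Real.exp_one_lt_d9
          have h2 : 0 ≤ √B * σ := by positivity
          nlinarith
  have h2 : ∫ x, max (h x - M) 0 ∂gam ι ≤ 12 * (√B * σ) :=
    (Real.rpow_le_rpow_iff (integral_nonneg fun _ => le_max_right _ _) (by positivity)
      (by linarith)).1 h1
  have h3 : ∫ x, (h x - M) ∂gam ι ≤ ∫ x, max (h x - M) 0 ∂gam ι :=
    integral_mono (PG.integrable (by fun_prop)) (PG.integrable (by fun_prop)) fun x => le_max_left _ _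
  rw [integral_sub hh.integrable (integrable_const _)] at h3
  simp only [integral_const, probReal_univ, smul_eq_mul, one_mul] at h3
  linarith

end conc

/-! ### Shifts of Gaussian measures and entropy bounds -/

section shift
variable {ι : Type*} [Fintype ι]

lemma gauss_shift_density (a : ℝ) {s : Set ℝ} (hs : MeasurableSet s) :
    gaussianReal a 1 s = ∫⁻ x in s, ENNReal.ofReal (Real.exp (a * x - a ^ 2 / 2)) ∂gaussianReal 0 1 := by
  rw [gaussianReal_apply a one_ne_zero, gaussianReal_of_var_ne_zero 0 one_ne_zero,
    setLIntegral_withDensity_eq_setLIntegral_mul _ (measurable_gaussianPDF 0 1) (by fun_prop) hs]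
  congr 1; ext x
  simp only [Pi.mul_apply, gaussianPDF]
  rw [← ENNReal.ofReal_mul (gaussianPDFReal_nonneg _ _ _)]
  congr 1
  simp only [gaussianPDFReal]
  rw [mul_assoc (√_)⁻¹, ← Real.exp_add]
  congr 2
  push_cast; ring

lemma exp_dot_eq_prod (a y : ι → ℝ) :
    Real.exp (a ⬝ᵥ y - n2 a ^ 2 / 2) = ∏ i, Real.exp (a i * y i - a i ^ 2 / 2) := by
  rw [← Real.exp_sum, n2_sq, Finset.sum_sub_distrib, ← Finset.sum_div]; rfl

lemma exp_integrable (a : ι → ℝ) (c : ℝ) :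
    Integrable (fun y => Real.exp (a ⬝ᵥ y - c)) (gam ι) := by
  have h1 : Integrable (fun y : ι → ℝ => ∏ i, Real.exp (a i * y i)) (gam ι) :=
    Integrable.fintype_prod (f := fun i x => Real.exp (a i * x))
      fun i => integrable_exp_mul_gaussianReal (a i)
  refine (h1.const_mul (Real.exp (-c))).congr (ae_of_all _ fun y => ?_)
  simp only [dotProduct]
  rw [← Real.exp_sum, ← Real.exp_add]; congr 1; ring

lemma gam_map_add (a : ι → ℝ) : (gam ι).map (fun y => y + a) =
    (gam ι).withDensity (fun y => ENNReal.ofReal (Real.exp (a ⬝ᵥ y - n2 a ^ 2 / 2))) := by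
  have h1 : (gam ι).map (fun y => y + a) = Measure.pi fun i => gaussianReal (a i) 1 := by
    have := Measure.pi_map_pi (μ := fun _ : ι => gaussianReal 0 1) (f := fun i x => x + a i)
      (fun i => by fun_prop)
    simp only [gaussianReal_map_add_const, zero_add] at this
    exact this
  rw [h1]
  refine Measure.pi_eq fun s hs => ?_
  rw [withDensity_apply _ (MeasurableSet.univ_pi hs)]
  simp only [gauss_shift_density _ (hs _)]
  rw [← ofReal_integral_eq_lintegral_ofReal (exp_integrable a _).integrableOn
    (ae_of_all _ fun y => (Real.exp_pos _).le)]
  simp only [exp_dot_eq_prod]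
  rw [gam, _root_.stdGaussian, Measure.restrict_pi_pi,
    integral_fintype_prod_eq_prod (fun i x => Real.exp (a i * x - a i ^ 2 / 2)),
    ENNReal.ofReal_prod_of_nonneg fun i _ => integral_nonneg fun x => (Real.exp_pos _).le]
  refine Finset.prod_congr rfl fun i _ => ?_
  rw [ofReal_integral_eq_lintegral_ofReal ?_ (ae_of_all _ fun y => (Real.exp_pos _).le)]
  have := (integrable_exp_mul_gaussianReal (μ := 0) (v := 1) (a i)).mul_const (Real.exp (-(a i ^ 2 / 2)))
  refine (this.congr (ae_of_all _ fun x => ?_)).integrableOn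
  simp only; rw [← Real.exp_add]; congr 1

lemma gam_shift_eq (a : ι → ℝ) {D : Set (ι → ℝ)} (hD : MeasurableSet D) :
    (gam ι).real {y | y + a ∈ D} = ∫ y in D, Real.exp (a ⬝ᵥ y - n2 a ^ 2 / 2) ∂gam ι := by
  have h1 : (gam ι) {y | y + a ∈ D} = (gam ι).map (fun y => y + a) D := by
    rw [Measure.map_apply (by fun_prop) hD]; rfl
  rw [Measure.real, h1, gam_map_add, withDensity_apply _ hD, integral_eq_lintegral_of_nonneg_ae
    (ae_of_all _ fun y => (Real.exp_pos _).le) (exp_integrable a _).integrableOn.1]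

/-- A symmetric set loses at most a factor `exp(-|a|²/2)` of its Gaussian mass when shifted by `a`. -/
lemma gam_shift (a : ι → ℝ) {D : Set (ι → ℝ)} (hD : MeasurableSet D) (hs : ∀ x ∈ D, -x ∈ D) :
    Real.exp (-(n2 a ^ 2 / 2)) * (gam ι).real D ≤ (gam ι).real {y | y - a ∈ D} := by
  have hm : Measurable fun y : ι → ℝ => y + a := by fun_prop
  have h1 : (gam ι).real {y | y - a ∈ D} = (gam ι).real {y | y + a ∈ D} := by
    rw [← gam_neg.measureReal_preimage (s := {y | y + a ∈ D}) (hm hD).nullMeasurableSet]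
    congr 1; ext y
    simp only [Set.mem_ofPred_eq, Set.mem_preimage]
    constructor
    · intro h; have := hs _ h; rwa [neg_sub, sub_eq_neg_add] at this
    · intro h; have := hs _ h; rwa [neg_add, neg_neg, ← sub_eq_add_neg] at this
  have h2 := gam_shift_eq a hD
  have h3 := gam_shift_eq (-a) hD
  have h4 : {y : ι → ℝ | y + -a ∈ D} = {y | y - a ∈ D} := by simp only [sub_eq_add_neg]
  rw [h4, map_neg_eq_map] at h3
  have h5 : 2 * (gam ι).real {y | y - a ∈ D} = ∫ y in D,
      (Real.exp (a ⬝ᵥ y - n2 a ^ 2 / 2) + Real.exp (-a ⬝ᵥ y - n2 a ^ 2 / 2)) ∂gam ι := by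
    rw [integral_add (exp_integrable a _).integrableOn (exp_integrable (-a) _).integrableOn,
      ← h2, ← h3, h1]; ring
  have h6 : ∫ y in D, 2 * Real.exp (-(n2 a ^ 2 / 2)) ∂gam ι ≤ ∫ y in D,
      (Real.exp (a ⬝ᵥ y - n2 a ^ 2 / 2) + Real.exp (-a ⬝ᵥ y - n2 a ^ 2 / 2)) ∂gam ι := by
    refine integral_mono (integrable_const _) ((exp_integrable a _).integrableOn.add
      (exp_integrable (-a) _).integrableOn) fun y => ?_
    simp only [sub_eq_add_neg, Real.exp_add, neg_dotProduct]
    rw [← add_mul]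
    gcongr
    linarith [Real.add_one_le_exp (a ⬝ᵥ y), Real.add_one_le_exp (-(a ⬝ᵥ y))]
  rw [setIntegral_const, smul_eq_mul] at h6
  linarith

lemma markov_seminorm (q : Seminorm ℝ (ι → ℝ)) {m : ℝ} (hm : 0 < m)
    (hq : ∫ g, q g ∂gam ι ≤ m) : (gam ι).real {g | ¬ q g ≤ 4 * m} ≤ 1 / 4 := by
  have h1 := mul_meas_ge_le_integral_of_nonneg (μ := gam ι) (f := q)
    (ae_of_all _ fun x => apply_nonneg q x) (PG.integrable (by fun_prop)) (4 * m)
  have h2 : (gam ι).real {g | ¬ q g ≤ 4 * m} ≤ (gam ι).real {g | 4 * m ≤ q g} :=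
    measureReal_mono fun g hg => by
      simp only [Set.mem_ofPred_eq, not_le] at hg ⊢; exact hg.le
  nlinarith

/-- Small-ball estimate: around any point, two seminorms are simultaneously small with
explicit Gaussian probability. -/
lemma mass_lower (q₁ q₂ : Seminorm ℝ (ι → ℝ)) {m₁ m₂ ε : ℝ} (hm₁ : 0 < m₁) (hm₂ : 0 < m₂)
    (hε : 0 < ε) (hq₁ : ∫ g, q₁ g ∂gam ι ≤ m₁) (hq₂ : ∫ g, q₂ g ∂gam ι ≤ m₂) (x : ι → ℝ) :
    Real.exp (-(n2 x ^ 2 / (2 * ε ^ 2))) / 2 ≤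
      (gam ι).real {G | q₁ (x - ε • G) ≤ 4 * ε * m₁ ∧ q₂ (x - ε • G) ≤ 4 * ε * m₂} := by
  set D : Set (ι → ℝ) := {g | q₁ g ≤ 4 * m₁ ∧ q₂ g ≤ 4 * m₂} with hDdef
  have hcl : ∀ (q : Seminorm ℝ (ι → ℝ)) (m : ℝ), MeasurableSet {g | q g ≤ m} := fun q m =>
    (isClosed_le (PG.seminorm' q).1 continuous_const).measurableSet
  have hD : MeasurableSet D := (hcl q₁ _).inter (hcl q₂ _)
  have hmass : 1 / 2 ≤ (gam ι).real D := by
    have h1 : (gam ι).real Dᶜ ≤ 1 / 4 + 1 / 4 := by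
      have : Dᶜ = {g | ¬ q₁ g ≤ 4 * m₁} ∪ {g | ¬ q₂ g ≤ 4 * m₂} := by
        ext g; simp only [hDdef, Set.mem_compl_iff, Set.mem_ofPred_eq, Set.mem_union]; tauto
      rw [this]
      exact (measureReal_union_le _ _).trans
        (add_le_add (markov_seminorm q₁ hm₁ hq₁) (markov_seminorm q₂ hm₂ hq₂))
    rw [probReal_compl_eq_one_sub hD] at h1
    linarith
  have h := gam_shift (ε⁻¹ • x) hD (by
    intro y hy; simpa only [hDdef, Set.mem_ofPred_eq, map_neg_eq_map] using hy)
  have hset : {y | y - ε⁻¹ • x ∈ D} =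
      {G | q₁ (x - ε • G) ≤ 4 * ε * m₁ ∧ q₂ (x - ε • G) ≤ 4 * ε * m₂} := by
    have hq : ∀ (q : Seminorm ℝ (ι → ℝ)) (m : ℝ) (G : ι → ℝ),
        q (x - ε • G) ≤ 4 * ε * m ↔ q (G - ε⁻¹ • x) ≤ 4 * m := fun q m G => by
      have : x - ε • G = (-ε) • (G - ε⁻¹ • x) := by
        rw [smul_sub, smul_smul, neg_mul, mul_inv_cancel₀ hε.ne', neg_smul, neg_smul, one_smul]
        abel
      rw [this, map_smul_eq_mul, norm_neg, Real.norm_of_nonneg hε.le,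
        show 4 * ε * m = ε * (4 * m) by ring]
      exact mul_le_mul_iff_right₀ hε
    ext G
    simp only [hDdef, Set.mem_ofPred_eq, hq]
  rw [hset] at h
  refine le_trans ?_ h
  have : n2 (ε⁻¹ • x) ^ 2 / 2 = n2 x ^ 2 / (2 * ε ^ 2) := by
    rw [map_smul_eq_mul, norm_inv, Real.norm_of_nonneg hε.le]; field_simp
  rw [this]
  nlinarith [Real.exp_pos (-(n2 x ^ 2 / (2 * ε ^ 2)))]

end shift

section colour
variable {ι : Type*}

/-- The index set `S` splits into at most `e^B` classes inside each of which `R` holds. -/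
def Col (S : Finset ι) (B : ℝ) (R : ι → ι → Prop) : Prop :=
  ∃ col : ι → ℕ, ((S.image col).card : ℝ) ≤ Real.exp B ∧
    ∀ i ∈ S, ∀ j ∈ S, col i = col j → R i j

lemma Col.mono {S : Finset ι} {B B' : ℝ} {R R' : ι → ι → Prop} (h : Col S B R) (hB : B ≤ B')
    (hR : ∀ i ∈ S, ∀ j ∈ S, R i j → R' i j) : Col S B' R' := by
  obtain ⟨c, h1, h2⟩ := h
  exact ⟨c, h1.trans (Real.exp_le_exp.2 hB), fun i hi j hj e => hR i hi j hj (h2 i hi j hj e)⟩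

lemma Col.refine {S : Finset ι} {B B' : ℝ} {R R' : ι → ι → Prop} (h : Col S B R)
    (h' : ∀ S' ⊆ S, S'.Nonempty → (∀ i ∈ S', ∀ j ∈ S', R i j) → Col S' B' R') :
    Col S (B + B') R' := by
  obtain ⟨c, h1, h2⟩ := h
  have key : ∀ a : ℕ, ∃ c' : ι → ℕ, (((S.filter (c · = a)).image c').card : ℝ) ≤ Real.exp B' ∧
      ∀ i ∈ S.filter (c · = a), ∀ j ∈ S.filter (c · = a), c' i = c' j → R' i j := fun a => by
    rcases (S.filter (c · = a)).eq_empty_or_nonempty with he | hne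
    · rw [he]; exact ⟨fun _ => 0, by simpa using (Real.exp_pos B').le, by simp⟩
    · refine h' _ (Finset.filter_subset _ _) hne fun i hi j hj => ?_
      rw [Finset.mem_filter] at hi hj
      exact h2 i hi.1 j hj.1 (hi.2.trans hj.2.symm)
  choose c' h3 h4 using key
  refine ⟨fun i => Nat.pair (c i) (c' (c i) i), ?_, fun i hi j hj e => ?_⟩
  · have hsub : S.image (fun i => Nat.pair (c i) (c' (c i) i)) ⊆
        (S.image c).biUnion fun a => ((S.filter (c · = a)).image (c' a)).image (Nat.pair a) := by
      intro k hk
      obtain ⟨i, hi, rfl⟩ := Finset.mem_image.1 hk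
      refine Finset.mem_biUnion.2 ⟨c i, Finset.mem_image_of_mem _ hi, ?_⟩
      exact Finset.mem_image_of_mem _ (Finset.mem_image_of_mem _ (Finset.mem_filter.2 ⟨hi, rfl⟩))
    have h5 := (Finset.card_le_card hsub).trans Finset.card_biUnion_le
    calc _ ≤ ((∑ a ∈ S.image c, (((S.filter (c · = a)).image (c' a)).image (Nat.pair a)).card : ℕ) : ℝ) := by
          exact_mod_cast h5
      _ ≤ ∑ a ∈ S.image c, Real.exp B' := by
          push_cast
          refine Finset.sum_le_sum fun a _ => le_trans ?_ (h3 a)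
          exact_mod_cast Finset.card_image_le
      _ = (S.image c).card * Real.exp B' := by rw [Finset.sum_const, nsmul_eq_mul]
      _ ≤ Real.exp B * Real.exp B' := by gcongr
      _ = _ := (Real.exp_add _ _).symm
  · rw [Nat.pair_eq_pair] at e
    refine h4 (c i) i (Finset.mem_filter.2 ⟨hi, rfl⟩) j (Finset.mem_filter.2 ⟨hj, e.1.symm⟩) ?_
    rw [e.2, e.1]

lemma Col.and {S : Finset ι} {B B' : ℝ} {R R' : ι → ι → Prop} (h : Col S B R) (h' : Col S B' R') :
    Col S (B + B') (fun i j => R i j ∧ R' i j) := by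
  refine h.refine fun S' hsub _ hR => ?_
  obtain ⟨c, h1, h2⟩ := h'
  refine ⟨c, le_trans ?_ h1, fun i hi j hj e => ⟨hR i hi j hj, h2 i (hsub hi) j (hsub hj) e⟩⟩
  exact_mod_cast Finset.card_le_card (Finset.image_subset_image hsub)

/-- A bound on the size of separated subsets yields a partition into balls. -/
lemma Col.of_packing {S : Finset ι} {B : ℝ} (R : ι → ι → Prop) (hr : ∀ i ∈ S, R i i)
    (hsym : ∀ i j, R i j → R j i)
    (h : ∀ T ⊆ S, (∀ i ∈ T, ∀ j ∈ T, i ≠ j → ¬ R i j) → (T.card : ℝ) ≤ Real.exp B) :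
    Col S B (fun i j => ∃ k ∈ S, R k i ∧ R k j) := by
  obtain ⟨sep, hsep⟩ : ∃ sep : Finset ι → Prop,
    ∀ T, sep T ↔ ∀ i ∈ T, ∀ j ∈ T, i ≠ j → ¬ R i j := ⟨_, fun _ => Iff.rfl⟩
  obtain ⟨T, hT, hmax⟩ := Finset.exists_max_image (S.powerset.filter sep) Finset.card
    ⟨∅, by simp [hsep]⟩
  rw [Finset.mem_filter, Finset.mem_powerset, hsep] at hT
  have hex : ∀ i ∈ S, ∃ k ∈ T, R k i := fun i hi => by
    by_contra! hno
    have hiT : i ∉ T := fun hiT => hno i hiT (hr i hi)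
    have := hmax (insert i T) (by
      rw [Finset.mem_filter, Finset.mem_powerset, hsep]
      refine ⟨Finset.insert_subset hi hT.1, ?_⟩
      intro a ha b hb hab
      rw [Finset.mem_insert] at ha hb
      rcases ha with rfl | ha <;> rcases hb with rfl | hb
      · exact absurd rfl hab
      · exact fun hR => hno b hb (hsym _ _ hR)
      · exact hno a ha
      · exact hT.2 a ha b hb hab)
    rw [Finset.card_insert_of_notMem hiT] at this
    omega
  choose! c hc1 hc2 using hex
  let e := T.equivFin
  refine ⟨fun i => if hi : c i ∈ T then (e ⟨c i, hi⟩ : ℕ) else 0, le_trans ?_ (h T hT.1 hT.2), ?_⟩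
  · have : S.image (fun i => if hi : c i ∈ T then (e ⟨c i, hi⟩ : ℕ) else 0) ⊆ Finset.range T.card := by
      intro k hk
      obtain ⟨i, hi, rfl⟩ := Finset.mem_image.1 hk
      simp only [hc1 i hi, dif_pos, Finset.mem_range]
      exact (e _).2
    have := Finset.card_le_card this
    rw [Finset.card_range] at this
    exact_mod_cast this
  · intro i hi j hj heq
    simp only [hc1 i hi, hc1 j hj, dif_pos] at heq
    have h1 := e.injective (Fin.ext heq)
    rw [Subtype.mk.injEq] at h1
    exact ⟨c i, hT.1 (hc1 i hi), hc2 i hi, h1 ▸ hc2 j hj⟩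

/-- Sets of mass at least `q` covering each point at most `m` times are at most `m / q` in number. -/
lemma mass_packing {Ω : Type*} [MeasurableSpace Ω] {μ : Measure Ω} [IsProbabilityMeasure μ]
    (T : Finset ι) (D : ι → Set Ω) (hD : ∀ k ∈ T, MeasurableSet (D k)) {q m : ℝ}
    (hq : ∀ k ∈ T, q ≤ μ.real (D k)) (hm : ∀ x, ((T.filter (x ∈ D ·)).card : ℝ) ≤ m) :
    T.card * q ≤ m := by
  have hi : ∀ k ∈ T, Integrable ((D k).indicator fun _ => (1 : ℝ)) μ :=
    fun k hk => (integrable_const 1).indicator (hD k hk)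
  calc T.card * q = ∑ k ∈ T, q := by rw [Finset.sum_const, nsmul_eq_mul]
    _ ≤ ∑ k ∈ T, μ.real (D k) := Finset.sum_le_sum hq
    _ = ∑ k ∈ T, ∫ x, (D k).indicator (fun _ => (1 : ℝ)) x ∂μ := by
        refine Finset.sum_congr rfl fun k hk => ?_
        rw [integral_indicator_const _ (hD k hk)]; simp
    _ = ∫ x, ∑ k ∈ T, (D k).indicator (fun _ => (1 : ℝ)) x ∂μ := (integral_finsetSum _ hi).symm
    _ ≤ ∫ x, m ∂μ := by
        refine integral_mono (integrable_finsetSum _ hi) (integrable_const _) fun x => ?_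
        refine le_trans (le_of_eq ?_) (hm x)
        rw [Finset.card_filter]
        push_cast
        exact Finset.sum_congr rfl fun k _ => by simp [Set.indicator_apply]
    _ = m := by simp

end colour

/-! ### Sudakov and dual Sudakov inequalities -/

section sudakov
variable {ι κ : Type*} [Fintype ι]

lemma mem_filter_set {X : Type*} {T : Finset κ} {D : κ → Set X} {G : X} {k : κ} :
    k ∈ T.filter (G ∈ D ·) ↔ k ∈ T ∧ G ∈ D k := Finset.mem_filter

lemma card_le_of_mass {N a B : ℝ} (h : N * (Real.exp (-a) / 2) ≤ 1) (hB : a + 1 ≤ B) :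
    N ≤ Real.exp B := by
  have h1 : N ≤ 2 * Real.exp a := by
    rw [Real.exp_neg] at h
    have := Real.exp_pos a
    field_simp at h
    linarith
  have h2 : (2 : ℝ) ≤ Real.exp 1 := by linarith [Real.add_one_le_exp (1 : ℝ)]
  calc N ≤ 2 * Real.exp a := h1
    _ ≤ Real.exp 1 * Real.exp a := by gcongr
    _ = Real.exp (a + 1) := by rw [← Real.exp_add, add_comm]
    _ ≤ _ := Real.exp_le_exp.2 hB

/-- The dual Sudakov inequality: entropy of the Euclidean ball with respect to a seminorm. -/
lemma dual_sudakov (S : Finset κ) (x : κ → ι → ℝ) (q : Seminorm ℝ (ι → ℝ)) {m ε : ℝ}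
    (hm : 0 < m) (hε : 0 < ε) (hε1 : ε ≤ 1) (hq : ∫ g, q g ∂gam ι ≤ m)
    (hx : ∀ i ∈ S, n2 (x i) ≤ 2) :
    Col S (513 / ε ^ 2) (fun i j => q (x i - x j) ≤ ε * m) := by
  have hp := Col.of_packing (S := S) (B := 513 / ε ^ 2) (fun i j => q (x i - x j) ≤ ε * m / 2)
    (fun i _ => by simp only [sub_self, map_zero]; positivity)
    (fun i j h => by simpa only [map_sub_rev] using h) ?_
  · refine hp.mono le_rfl fun i _ j _ ⟨k, _, h1, h2⟩ => ?_
    have : x i - x j = (x k - x j) - (x k - x i) := by abel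
    rw [this]
    linarith [map_sub_le_add q (x k - x j) (x k - x i)]
  · intro T hT hsep
    have h := mass_packing (μ := gam ι) T
      (fun k => {G | q (x k - (ε / 16) • G) ≤ 4 * (ε / 16) * m ∧ q (x k - (ε / 16) • G) ≤ 4 * (ε / 16) * m})
      (q := Real.exp (-(512 / ε ^ 2)) / 2) (m := 1) ?_ ?_ ?_
    · refine card_le_of_mass h ?_
      have : 1 ≤ 1 / ε ^ 2 := by rw [le_div_iff₀ (by positivity)]; nlinarith
      calc 512 / ε ^ 2 + 1 ≤ 512 / ε ^ 2 + 1 / ε ^ 2 := by linarith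
        _ = _ := by ring
    · intro k _
      have : IsClosed {G : ι → ℝ | q (x k - (ε / 16) • G) ≤ 4 * (ε / 16) * m} :=
        isClosed_le (PG.continuous (by fun_prop)) continuous_const
      exact (this.inter this).measurableSet
    · intro k hk
      refine le_trans ?_ (mass_lower q q hm hm (by positivity) hq hq (x k))
      refine div_le_div_of_nonneg_right (Real.exp_le_exp.2 (neg_le_neg ?_)) two_pos.le
      have h2 := hx k (hT hk)
      have h3 : n2 (x k) ^ 2 ≤ 4 := by nlinarith [n2_nonneg (x k)]
      calc n2 (x k) ^ 2 / (2 * (ε / 16) ^ 2) ≤ 4 / (2 * (ε / 16) ^ 2) := by gcongr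
        _ = _ := by field_simp; norm_num
    · intro G
      refine Nat.cast_le_one.2 (Finset.card_le_one.2 fun i hi j hj => ?_)
      replace hi := mem_filter_set.1 hi
      replace hj := mem_filter_set.1 hj
      by_contra hne
      refine hsep i hi.1 j hj.1 hne ?_
      have h1 := hi.2.1
      have h2 := hj.2.1
      have : x i - x j = (x i - (ε / 16) • G) - (x j - (ε / 16) • G) := by abel
      rw [this]
      linarith [map_sub_le_add q (x i - (ε / 16) • G) (x j - (ε / 16) • G)]

/-- One halving of the Euclidean diameter, from `δ` to `δ / 2`, with `exp (O(w² / δ²))` cells. -/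
lemma sudakov_step (S : Finset κ) (u : κ → ι → ℝ) (h : Seminorm ℝ (ι → ℝ)) {w δ : ℝ}
    (hw : 0 < w) (hδ : 0 < δ) (hδw : δ ≤ 3 * w) (hh : ∫ g, h g ∂gam ι ≤ w)
    (hu : ∀ i ∈ S, ∀ j ∈ S, ∀ y, (u i - u j) ⬝ᵥ y ≤ h y)
    (hd : ∀ i ∈ S, ∀ j ∈ S, n2 (u i - u j) ≤ δ) (hne : S.Nonempty) :
    Col S (9000 * w ^ 2 / δ ^ 2) (fun i j => n2 (u i - u j) ≤ δ / 2) := by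
  obtain ⟨i₀, hi₀⟩ := hne
  have hp := Col.of_packing (S := S) (B := 9000 * w ^ 2 / δ ^ 2)
    (fun i j => n2 (u i - u j) ≤ δ / 4)
    (fun i _ => by simp only [sub_self, map_zero]; positivity)
    (fun i j h => by simpa only [map_sub_rev] using h) ?_
  · refine hp.mono le_rfl fun i _ j _ ⟨k, _, h1, h2⟩ => ?_
    have : u i - u j = (u k - u j) - (u k - u i) := by abel
    rw [this]
    linarith [map_sub_le_add n2 (u k - u j) (u k - u i)]
  · intro T hT hsep
    -- the dilation factor making the shifted balls disjoint
    set lam : ℝ := 128 * w / δ ^ 2 with hlam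
    have hlam0 : 0 < lam := by positivity
    have hm := mass_packing (μ := gam ι) T
      (fun k => {G | h (lam • (u k - u i₀) - (1 : ℝ) • G) ≤ 4 * 1 * w ∧
        h (lam • (u k - u i₀) - (1 : ℝ) • G) ≤ 4 * 1 * w})
      (q := Real.exp (-(8192 * w ^ 2 / δ ^ 2)) / 2) (m := 1) ?_ ?_ ?_
    · refine card_le_of_mass hm ?_
      have : 1 ≤ 9 * w ^ 2 / δ ^ 2 := by rw [le_div_iff₀ (by positivity)]; nlinarith
      have h3 : 9000 * w ^ 2 / δ ^ 2 = 8192 * w ^ 2 / δ ^ 2 + 9 * w ^ 2 / δ ^ 2 +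
        799 * w ^ 2 / δ ^ 2 := by ring
      have h4 : 0 ≤ 799 * w ^ 2 / δ ^ 2 := by positivity
      linarith
    · intro k _
      have : IsClosed {G : ι → ℝ | h (lam • (u k - u i₀) - (1 : ℝ) • G) ≤ 4 * 1 * w} :=
        isClosed_le (PG.continuous (by fun_prop)) continuous_const
      exact (this.inter this).measurableSet
    · intro k hk
      refine le_trans ?_ (mass_lower h h hw hw one_pos hh hh (lam • (u k - u i₀)))
      refine div_le_div_of_nonneg_right (Real.exp_le_exp.2 (neg_le_neg ?_)) two_pos.le
      have h2 := hd k (hT hk) i₀ hi₀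
      rw [map_smul_eq_mul, Real.norm_of_nonneg hlam0.le]
      calc (lam * n2 (u k - u i₀)) ^ 2 / (2 * 1 ^ 2) ≤ (lam * δ) ^ 2 / (2 * 1 ^ 2) := by
            gcongr
        _ = _ := by rw [hlam]; field_simp; norm_num
    · intro G
      refine Nat.cast_le_one.2 (Finset.card_le_one.2 fun i hi j hj => ?_)
      replace hi := mem_filter_set.1 hi
      replace hj := mem_filter_set.1 hj
      by_contra hne
      refine hsep i hi.1 j hj.1 hne ?_
      have h1 := hi.2.1
      have h2 := hj.2.1
      have h3 : h (lam • (u i - u j)) ≤ 8 * w := by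
        have : lam • (u i - u j) = (lam • (u i - u i₀) - (1 : ℝ) • G) -
          (lam • (u j - u i₀) - (1 : ℝ) • G) := by
          simp only [smul_sub]; abel
        rw [this]
        linarith [map_sub_le_add h (lam • (u i - u i₀) - (1 : ℝ) • G)
          (lam • (u j - u i₀) - (1 : ℝ) • G)]
      have h4 := hu i (hT hi.1) j (hT hj.1) (lam • (u i - u j))
      rw [dotProduct_smul, ← n2_sq', smul_eq_mul] at h4
      have h5 : lam * n2 (u i - u j) ^ 2 ≤ 8 * w := h4.trans h3
      rw [hlam, div_mul_eq_mul_div, div_le_iff₀ (by positivity)] at h5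
      have h6 : n2 (u i - u j) ^ 2 ≤ (δ / 4) ^ 2 := by nlinarith
      exact (pow_le_pow_iff_left₀ (n2_nonneg _) (by positivity) two_ne_zero).1 h6

/-- Sudakov minoration, as a covering statement. -/
lemma sudakov (S : Finset κ) (u : κ → ι → ℝ) (h : Seminorm ℝ (ι → ℝ)) {w ε : ℝ}
    (hw : 0 < w) (hε : 0 < ε) (hε1 : ε ≤ 1) (hh : ∫ g, h g ∂gam ι ≤ w)
    (hu : ∀ i ∈ S, ∀ j ∈ S, ∀ y, (u i - u j) ⬝ᵥ y ≤ h y) :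
    Col S (12600 / ε ^ 2) (fun i j => n2 (u i - u j) ≤ ε * w) := by
  have hdiam : ∀ i ∈ S, ∀ j ∈ S, n2 (u i - u j) ≤ 3 * w := fun i hi j hj => by
    have h1 := gam_abs_dot (u i - u j)
    have h2 : ∫ g, |(u i - u j) ⬝ᵥ g| ∂gam ι ≤ ∫ g, h g ∂gam ι :=
      integral_mono (PG.integrable (by fun_prop)) (PG.integrable (by fun_prop)) fun g => by
        rw [abs_le']
        refine ⟨hu i hi j hj g, ?_⟩
        rw [← dotProduct_neg, ← map_neg_eq_map h]; exact hu i hi j hj (-g)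
    linarith
  have key : ∀ n : ℕ, Col S (350 * 4 ^ n) (fun i j => n2 (u i - u j) ≤ 3 * w / 2 ^ n) := by
    intro n
    induction n with
    | zero =>
      refine ⟨fun _ => 0, ?_, fun i hi j hj _ => by simpa using hdiam i hi j hj⟩
      have h1 : (S.image fun _ => 0).card ≤ 1 :=
        Finset.card_le_one.2 fun a ha b hb => by
          simp only [Finset.mem_image] at ha hb
          obtain ⟨_, _, rfl⟩ := ha
          obtain ⟨_, _, rfl⟩ := hb
          rfl
      have h2 : ((S.image fun _ => (0 : ℕ)).card : ℝ) ≤ 1 := by exact_mod_cast h1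
      exact h2.trans (Real.one_le_exp (by positivity))
    | succ n ih =>
      have hstep : Col S (350 * 4 ^ n + 1000 * 4 ^ n)
          (fun i j => n2 (u i - u j) ≤ 3 * w / 2 ^ n / 2) := by
        refine ih.refine fun S' hS' hne hR => ?_
        refine (sudakov_step S' u h hw (by positivity) ?_ hh
          (fun i hi j hj => hu i (hS' hi) j (hS' hj)) hR hne).mono (le_of_eq ?_) fun _ _ _ _ h => h
        · exact div_le_self (by positivity) (one_le_pow₀ (by norm_num))
        · have h4 : ((2 : ℝ) ^ n) ^ 2 = 4 ^ n := by
            rw [← pow_mul, mul_comm n, pow_mul]; norm_num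
          field_simp
          rw [h4]; ring
      refine hstep.mono ?_ fun i _ j _ h => ?_
      · rw [pow_succ]; nlinarith [pow_pos (show (0 : ℝ) < 4 by norm_num) n]
      · rwa [pow_succ, ← div_div]
  obtain ⟨n, hn1, hn2⟩ := exists_nat_pow_near (x := 3 / ε) (y := (2 : ℝ))
    (by rw [le_div_iff₀ hε]; linarith) one_lt_two
  refine (key (n + 1)).mono ?_ fun i _ j _ h => h.trans ?_
  · have h1 : (2 : ℝ) ^ (n + 1) ≤ 6 / ε := by
      rw [pow_succ]; calc _ ≤ 3 / ε * 2 := by gcongr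
        _ = _ := by ring
    have h2 : (4 : ℝ) ^ (n + 1) = (2 ^ (n + 1)) ^ 2 := by
      rw [← pow_mul, mul_comm, pow_mul]; norm_num
    rw [h2]
    calc _ ≤ 350 * (6 / ε) ^ 2 := by gcongr
      _ = _ := by ring
  · rw [div_le_iff₀ (by positivity)]
    rw [div_lt_iff₀ hε] at hn2
    nlinarith

end sudakov

/-! ### Averaged seminorms, tensors and Hahn–Banach -/

/-- The average of an integrable family of seminorms. -/
noncomputable def avgS {Ω V : Type*} [MeasurableSpace Ω] [AddCommGroup V] [Module ℝ V]
    (μ : Measure Ω) (N : Ω → Seminorm ℝ V) (h : ∀ c, Integrable (fun ω => N ω c) μ) :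
    Seminorm ℝ V :=
  Seminorm.of (fun c => ∫ ω, N ω c ∂μ)
    (fun x y => by
      rw [← integral_add (h x) (h y)]
      exact integral_mono (h _) ((h x).add (h y)) fun ω => map_add_le_add (N ω) x y)
    (fun a x => by
      simp only [map_smul_eq_mul]
      exact integral_const_mul ‖a‖ _)

section tensor
set_option linter.unusedSectionVars false
variable {α β ι κ : Type*} [Fintype α] [Fintype β] [Fintype ι]

/-- A seminorm on `ℝ^ι` is the support function of its polar. -/
lemma exists_dual (N : Seminorm ℝ (ι → ℝ)) (x : ι → ℝ) :
    ∃ t : ι → ℝ, t ⬝ᵥ x = N x ∧ ∀ y, t ⬝ᵥ y ≤ N y := by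
  rcases eq_or_ne x 0 with rfl | hx
  · exact ⟨0, by simp, fun y => by simp⟩
  obtain ⟨g, h1, h2⟩ := exists_extension_of_le_sublinear
    (LinearPMap.mkSpanSingleton (K := ℝ) x (N x) hx) N
    (fun c hc x => by rw [map_smul_eq_mul, Real.norm_of_nonneg hc.le])
    (fun x y => map_add_le_add N x y) (by
      rintro ⟨y, hy⟩
      obtain ⟨c, rfl⟩ := Submodule.mem_span_singleton.1 hy
      refine (LinearPMap.mkSpanSingleton'_apply x (N x) _ c hy).trans_le ?_
      rw [map_smul_eq_mul]
      exact mul_le_mul_of_nonneg_right (le_abs_self c) (apply_nonneg N x))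
  have hg : ∀ y, (fun i => g (Pi.single i 1)) ⬝ᵥ y = g y := fun y => by
    conv_rhs => rw [pi_eq_sum_univ' y, map_sum]
    simp only [dotProduct, map_smul, smul_eq_mul]
    exact Finset.sum_congr rfl fun i _ => by
      rw [mul_comm]
  refine ⟨fun i => g (Pi.single i 1), ?_, fun y => (hg y).trans_le (h2 y)⟩
  rw [hg]
  have := h1 ⟨x, Submodule.mem_span_singleton_self x⟩
  rw [this]
  exact LinearPMap.mkSpanSingleton_apply ℝ ℝ hx (N x)

lemma n2_le_of_dot_le {t : ι → ℝ} {σ : ℝ} (hσ : 0 ≤ σ) (h : ∀ z, n2 z ≤ 1 → t ⬝ᵥ z ≤ σ) :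
    n2 t ≤ σ := by
  rcases (n2_nonneg t).eq_or_lt with h0 | h0
  · rwa [← h0]
  have := h ((n2 t)⁻¹ • t) (by
    rw [map_smul_eq_mul, Real.norm_of_nonneg (by positivity), inv_mul_cancel₀ h0.ne'])
  rwa [dotProduct_smul, ← n2_sq', smul_eq_mul, sq, inv_mul_cancel_left₀ h0.ne'] at this

lemma seminorm_supFun (N : Seminorm ℝ (ι → ℝ)) {σ : ℝ} (hN : ∀ z, n2 z ≤ 1 → N z ≤ σ) :
    SupFun σ N := fun x => by
  obtain ⟨t, h1, h2⟩ := exists_dual N x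
  have hσ : 0 ≤ σ := by simpa using hN 0 (by simp)
  exact ⟨t, h1.symm, h2, n2_le_of_dot_le hσ fun z hz => (h2 z).trans (hN z hz)⟩

/-- The elementary tensor `g ⊗ x`. -/
def tens (g : α → ℝ) (x : β → ℝ) : α × β → ℝ := fun ij => g ij.1 * x ij.2

/-- The action of the matrix `A` on the vector `x`. -/
def mv (A : α × β → ℝ) (x : β → ℝ) : α → ℝ := fun i => ∑ j, A (i, j) * x j

@[fun_prop]
lemma PG.tens {E : Type*} [NormedAddCommGroup E] {f : E → α → ℝ} {h : E → β → ℝ}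
    (hf : PG f) (hh : PG h) : PG (fun e => tens (f e) (h e)) := by
  unfold _root_.tens; fun_prop

@[fun_prop]
lemma PG.mv {E : Type*} [NormedAddCommGroup E] {f : E → α × β → ℝ} {h : E → β → ℝ}
    (hf : PG f) (hh : PG h) : PG (fun e => mv (f e) (h e)) := by
  unfold _root_.mv; fun_prop

lemma mv_dot (A : α × β → ℝ) (x : β → ℝ) (g : α → ℝ) : mv A x ⬝ᵥ g = A ⬝ᵥ tens g x := by
  simp only [mv, dotProduct, tens, Fintype.sum_prod_type, Finset.sum_mul]
  exact Finset.sum_congr rfl fun i _ => Finset.sum_congr rfl fun j _ => by ring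

lemma mv_dot' (A : α × β → ℝ) (x : β → ℝ) (g : α → ℝ) :
    mv A x ⬝ᵥ g = x ⬝ᵥ mv (fun ji : β × α => A ji.swap) g := by
  simp only [mv, dotProduct, Prod.swap, Finset.sum_mul, Finset.mul_sum]
  rw [Finset.sum_comm]
  exact Finset.sum_congr rfl fun i _ => Finset.sum_congr rfl fun j _ => by ring

lemma mv_sub_left (A A' : α × β → ℝ) (x : β → ℝ) : mv (A - A') x = mv A x - mv A' x := by
  ext i; simp [mv, sub_mul]

lemma mv_sub_right (A : α × β → ℝ) (x x' : β → ℝ) : mv A (x - x') = mv A x - mv A x' := by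
  ext i; simp [mv, mul_sub]

lemma tens_sub_right (g : α → ℝ) (x x' : β → ℝ) : tens g (x - x') = tens g x - tens g x' := by
  ext i; simp [tens, mul_sub]

/-- `g ↦ N (g ⊗ x)` as a seminorm. -/
noncomputable def tensL (N : Seminorm ℝ (α × β → ℝ)) (x : β → ℝ) : Seminorm ℝ (α → ℝ) :=
  Seminorm.of (fun g => N (tens g x))
    (fun g g' => by
      rw [show tens (g + g') x = tens g x + tens g' x by ext; simp [tens, add_mul]]
      exact map_add_le_add N _ _)
    (fun a g => by
      rw [show tens (a • g) x = a • tens g x by ext; simp [tens, mul_assoc]]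
      exact map_smul_eq_mul N _ _)

/-- `x ↦ N (g ⊗ x)` as a seminorm. -/
noncomputable def tensR (N : Seminorm ℝ (α × β → ℝ)) (g : α → ℝ) : Seminorm ℝ (β → ℝ) :=
  Seminorm.of (fun x => N (tens g x))
    (fun x x' => by
      rw [show tens g (x + x') = tens g x + tens g x' by ext; simp [tens, mul_add]]
      exact map_add_le_add N _ _)
    (fun a x => by
      rw [show tens g (a • x) = a • tens g x by ext; simp [tens, mul_left_comm]]
      exact map_smul_eq_mul N _ _)

/-- The seminorm `x ↦ E N (g ⊗ x)`. -/
noncomputable def aN (N : Seminorm ℝ (α × β → ℝ)) : Seminorm ℝ (β → ℝ) :=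
  avgS (gam α) (fun g => tensR N g) fun x =>
    PG.integrable (f := fun g => N (tens g x)) (by fun_prop)

lemma aN_apply (N : Seminorm ℝ (α × β → ℝ)) (x : β → ℝ) :
    aN N x = ∫ g, N (tens g x) ∂gam α := rfl

lemma tensL_apply (N : Seminorm ℝ (α × β → ℝ)) (x : β → ℝ) (g : α → ℝ) :
    tensL N x g = N (tens g x) := rfl

/-- The seminorm `x ↦ |A x|`. -/
noncomputable def mvS (A : α × β → ℝ) : Seminorm ℝ (β → ℝ) :=
  Seminorm.of (fun x => n2 (mv A x))
    (fun x x' => by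
      rw [show mv A (x + x') = mv A x + mv A x' by
        ext; simp [mv, mul_add, Finset.sum_add_distrib]]
      exact map_add_le_add n2 _ _)
    (fun a x => by
      rw [show mv A (a • x) = a • mv A x by
        ext; simp [mv, mul_left_comm, Finset.mul_sum]]
      exact map_smul_eq_mul n2 _ _)

lemma mvS_apply (A : α × β → ℝ) (x : β → ℝ) : mvS A x = n2 (mv A x) := rfl

/-- `E |A g| ≤ ‖A‖_HS`. -/
lemma int_mv_le (A : α × β → ℝ) : ∫ g, n2 (mv A g) ∂gam β ≤ n2 A := by
  have h1 : ∫ g, n2 (mv A g) ^ 2 ∂gam β = n2 A ^ 2 := by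
    simp only [n2_sq]
    rw [integral_finsetSum _ fun i _ => PG.integrable (by fun_prop), Fintype.sum_prod_type]
    refine Finset.sum_congr rfl fun i _ => ?_
    have := gam_dot_sq (fun j => A (i, j))
    rw [n2_sq] at this
    rw [← this]; rfl
  have h2 : 0 ≤ ∫ g, (n2 (mv A g) - ∫ g, n2 (mv A g) ∂gam β) ^ 2 ∂gam β :=
    integral_nonneg fun g => sq_nonneg _
  set m := ∫ g, n2 (mv A g) ∂gam β with hm
  have h3 : ∫ g, (n2 (mv A g) - m) ^ 2 ∂gam β = n2 A ^ 2 - m ^ 2 := by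
    have : ∀ g, (n2 (mv A g) - m) ^ 2 = n2 (mv A g) ^ 2 + (-(2 * m)) * n2 (mv A g) + m ^ 2 :=
      fun g => by ring
    simp only [this]
    rw [integral_add (PG.integrable (by fun_prop)) (PG.integrable (by fun_prop)),
      integral_add (PG.integrable (by fun_prop)) (PG.integrable (by fun_prop)),
      integral_const_mul (-(2 * m)), h1, ← hm]
    simp; ring
  rw [h3] at h2
  exact (abs_le.1 (abs_le_of_sq_le_sq (sub_nonneg.1 h2) (n2_nonneg A))).2

lemma int_mv_swap_le (A : α × β → ℝ) :
    ∫ g, n2 (mv (fun ji : β × α => A ji.swap) g) ∂gam α ≤ n2 A := by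
  refine (int_mv_le _).trans (le_of_eq ?_)
  rw [← sq_eq_sq₀ (n2_nonneg _) (n2_nonneg _), n2_sq, n2_sq]
  exact (Equiv.prodComm β α).sum_comp fun ij => A ij ^ 2

end tensor

/-! ### Gaussian width of finite sets -/

section width
variable {ι κ : Type*} [Fintype ι]

/-- The support function of the finite family `(u i)_{i ∈ S}`. -/
noncomputable def mx (S : Finset κ) (u : κ → ι → ℝ) (g : ι → ℝ) : ℝ :=
  sSup ((fun i => u i ⬝ᵥ g) '' S)

lemma le_mx {S : Finset κ} {u : κ → ι → ℝ} {g : ι → ℝ} {i : κ} (hi : i ∈ S) :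
    u i ⬝ᵥ g ≤ mx S u g :=
  le_csSup ((S.finite_toSet.image _).bddAbove) ⟨i, hi, rfl⟩

lemma mx_mem {S : Finset κ} (hS : S.Nonempty) (u : κ → ι → ℝ) (g : ι → ℝ) :
    ∃ i ∈ S, mx S u g = u i ⬝ᵥ g := by
  obtain ⟨i, hi, h⟩ := Set.Nonempty.csSup_mem (s := (fun i => u i ⬝ᵥ g) '' S)
    (Set.Nonempty.image _ hS) (S.finite_toSet.image _)
  exact ⟨i, hi, h.symm⟩

lemma mx_supFun {S : Finset κ} (hS : S.Nonempty) (u : κ → ι → ℝ) {σ : ℝ}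
    (h : ∀ i ∈ S, n2 (u i) ≤ σ) : SupFun σ (mx S u) := fun g => by
  obtain ⟨i, hi, e⟩ := mx_mem hS u g
  exact ⟨u i, e, fun y => le_mx hi, h i hi⟩

lemma mx_pg {S : Finset κ} (hS : S.Nonempty) (u : κ → ι → ℝ) : PG (mx S u) :=
  (mx_supFun hS u (σ := ∑ i ∈ S, n2 (u i)) fun _ hi =>
    Finset.single_le_sum (f := fun i => n2 (u i)) (fun _ _ => n2_nonneg _) hi).pg

lemma int_dot (t : ι → ℝ) : ∫ g, t ⬝ᵥ g ∂gam ι = 0 := by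
  rw [gam_integral_dot t (φ := fun x => x) continuous_id, integral_const_mul (n2 t)]
  have := integral_id_gaussianReal (μ := 0) (v := 1)
  simp [this]

lemma int_mx_sub {S : Finset κ} (hS : S.Nonempty) (u : κ → ι → ℝ) (t : ι → ℝ) :
    ∫ g, mx S (fun i => u i - t) g ∂gam ι = ∫ g, mx S u g ∂gam ι := by
  have h : ∀ g, mx S (fun i => u i - t) g = mx S u g - t ⬝ᵥ g := fun g => by
    apply le_antisymm
    · obtain ⟨i, hi, e⟩ := mx_mem hS (fun i => u i - t) g
      rw [e, sub_dotProduct]; linarith [le_mx (u := u) (g := g) hi]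
    · obtain ⟨i, hi, e⟩ := mx_mem hS u g
      have := le_mx (u := fun i => u i - t) (g := g) hi
      simp only [sub_dotProduct] at this; linarith
  simp only [h]
  rw [integral_sub (mx_pg hS u).integrable (PG.integrable (by fun_prop)), int_dot, sub_zero]

/-- Splitting a family of diameter `σ` into `exp B` cells costs `O(√B σ)` in Gaussian width. -/
lemma width_col {S : Finset κ} (hS : S.Nonempty) (u : κ → ι → ℝ) {σ B M : ℝ} (hB : 1 ≤ B)
    {R : κ → κ → Prop} (hc : Col S B R) (hσ : ∀ i ∈ S, ∀ j ∈ S, n2 (u i - u j) ≤ σ)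
    (hM : ∀ S' ⊆ S, S'.Nonempty → (∀ i ∈ S', ∀ j ∈ S', R i j) → ∫ g, mx S' u g ∂gam ι ≤ M) :
    ∫ g, mx S u g ∂gam ι ≤ M + 12 * (√B * σ) := by
  obtain ⟨col, hcard, hcol⟩ := hc
  obtain ⟨i₀, hi₀⟩ := id hS
  have hne : ∀ c ∈ S.image col, (S.filter (col · = c)).Nonempty := fun c hc => by
    obtain ⟨i, hi, e⟩ := Finset.mem_image.1 hc
    exact ⟨i, Finset.mem_filter.2 ⟨hi, e⟩⟩
  rw [← int_mx_sub hS u (u i₀)]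
  refine conc_max (S.image col) hB hcard
    (f := fun c => mx (S.filter (col · = c)) fun i => u i - u i₀) ?_ ?_ (mx_pg hS _) ?_
  · intro c hc
    exact mx_supFun (hne c hc) _ fun i hi => hσ i (Finset.mem_filter.1 hi).1 i₀ hi₀
  · intro c hc
    rw [int_mx_sub (hne c hc)]
    refine hM _ (Finset.filter_subset _ _) (hne c hc) fun i hi j hj => ?_
    rw [Finset.mem_filter] at hi hj
    exact hcol i hi.1 j hj.1 (hi.2.trans hj.2.symm)
  · intro g
    obtain ⟨i, hi, e⟩ := mx_mem hS (fun i => u i - u i₀) g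
    exact ⟨col i, Finset.mem_image_of_mem _ hi, e.trans_le
      (le_mx (u := fun i => u i - u i₀) (Finset.mem_filter.2 ⟨hi, rfl⟩))⟩

end width

/-! ### Chaining for decoupled chaoses of order two -/

section chaining
set_option linter.unusedSectionVars false
variable {α β κ : Type*} [Fintype α] [Fintype β]

/-- The data carried along the chaining: a finite family of pairs `(A i, x i)`, with `x i` in a
ball, differences of the `A i` dominated by `2 N`, and the various sizes controlled at the scales
`ε` and `η`. The number `Λ` is to bound the Gaussian means of `N` of order one and two. -/
structure CInv (N : Seminorm ℝ (α × β → ℝ)) (Λ : ℝ) (S : Finset κ) (x : κ → β → ℝ)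
    (A : κ → α × β → ℝ) (ε η : ℝ) : Prop where
  εpos : 0 < ε
  εle : ε ≤ 1
  ηpos : 0 < η
  Λle : ε * Λ ≤ η
  x2 : ∀ i ∈ S, n2 (x i) ≤ 2
  xd : ∀ i ∈ S, ∀ j ∈ S, n2 (x i - x j) ≤ 2
  Ad : ∀ i ∈ S, ∀ j ∈ S, ∀ z, (A i - A j) ⬝ᵥ z ≤ 2 * N z
  HS : ∀ i ∈ S, n2 (A i) ≤ η
  an : ∀ i ∈ S, aN N (x i) ≤ η
  u : ∀ i ∈ S, ∀ j ∈ S, n2 (mv (A i) (x i) - mv (A j) (x j)) ≤ 2 * ε * η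

variable {N : Seminorm ℝ (α × β → ℝ)} {Λ : ℝ} {S : Finset κ} {x : κ → β → ℝ}
  {A : κ → α × β → ℝ} {ε η : ℝ}

lemma CInv.subset (h : CInv N Λ S x A ε η) {S' : Finset κ} (hS : S' ⊆ S) : CInv N Λ S' x A ε η where
  εpos := h.εpos
  εle := h.εle
  ηpos := h.ηpos
  Λle := h.Λle
  x2 i hi := h.x2 i (hS hi)
  xd i hi j hj := h.xd i (hS hi) j (hS hj)
  Ad i hi j hj := h.Ad i (hS hi) j (hS hj)
  HS i hi := h.HS i (hS hi)
  an i hi := h.an i (hS hi)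
  u i hi j hj := h.u i (hS hi) j (hS hj)

/-- The Gaussian mean of the seminorm `g ↦ 2 N (g ⊗ x)`. -/
lemma int_two_tensL (x : β → ℝ) :
    ∫ g, ((2 : NNReal) • tensL N x) g ∂gam α = 2 * aN N x := by
  rw [aN_apply, ← integral_const_mul (2 : ℝ)]; rfl

lemma two_tensL_apply (x : β → ℝ) (g : α → ℝ) :
    ((2 : NNReal) • tensL N x) g = 2 * N (tens g x) := rfl

/-- Sudakov minoration for the vectors `A i y` at a fixed `y`. -/
lemma CInv.sudakov_at (h : CInv N Λ S x A ε η) {S' : Finset κ} (hS : S' ⊆ S) (y : β → ℝ) {w δ : ℝ}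
    (hw : 0 < w) (hy : 2 * aN N y ≤ w) (hδ : 0 < δ) (hδ1 : δ ≤ 1) :
    Col S' (12600 / δ ^ 2) (fun i j => n2 (mv (A i) y - mv (A j) y) ≤ δ * w) := by
  refine sudakov S' (fun i => mv (A i) y) ((2 : NNReal) • tensL N y) hw hδ hδ1
    ((int_two_tensL y).trans_le hy) fun i hi j hj g => ?_
  rw [two_tensL_apply, ← mv_sub_left, mv_dot]
  exact h.Ad i (hS hi) j (hS hj) _

/-- The crucial covering estimate: mixing the dual Sudakov bound in `x` with the Sudakov bound
in `A` (at a frozen random vector). -/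
lemma CInv.cells (h : CInv N Λ S x A ε η) (hΛ : 0 < Λ) (hg : ∫ y, aN N y ∂gam β ≤ Λ) :
    Col S (2 * 10 ^ 8 / ε ^ 2)
      (fun i j => n2 (mv (A i) (x i) - mv (A j) (x j)) ≤ ε * η / 6) := by
  have hε := h.εpos
  have hη := h.ηpos
  have hp := Col.of_packing (S := S) (B := 2 * 10 ^ 8 / ε ^ 2)
    (fun i j => n2 (mv (A i) (x i) - mv (A j) (x j)) ≤ ε * η / 12)
    (fun i _ => by simp only [sub_self, map_zero]; positivity)
    (fun i j h => by simpa only [map_sub_rev] using h) ?_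
  · refine hp.mono le_rfl fun i _ j _ ⟨k, _, h1, h2⟩ => ?_
    have : mv (A i) (x i) - mv (A j) (x j) = (mv (A k) (x k) - mv (A j) (x j)) -
      (mv (A k) (x k) - mv (A i) (x i)) := by abel
    rw [this]
    linarith [map_sub_le_add n2 (mv (A k) (x k) - mv (A j) (x j))
      (mv (A k) (x k) - mv (A i) (x i))]
  · intro T hT hsep
    set e : ℝ := ε / 192 with he
    have hm := mass_packing (μ := gam β) T
      (fun k => {G | mvS (A k) (x k - e • G) ≤ 4 * e * η ∧ aN N (x k - e • G) ≤ 4 * e * Λ})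
      (q := Real.exp (-(73728 / ε ^ 2)) / 2) (m := Real.exp (12600 / (ε / 120) ^ 2)) ?_ ?_ ?_
    · have h1 : T.card * (Real.exp (-(73728 / ε ^ 2 + 12600 / (ε / 120) ^ 2)) / 2) ≤ 1 := by
        rw [neg_add, Real.exp_add, Real.exp_neg (12600 / (ε / 120) ^ 2)]
        have := Real.exp_pos (12600 / (ε / 120) ^ 2)
        calc _ = (T.card * (Real.exp (-(73728 / ε ^ 2)) / 2)) *
              (Real.exp (12600 / (ε / 120) ^ 2))⁻¹ := by ring
          _ ≤ Real.exp (12600 / (ε / 120) ^ 2) * (Real.exp (12600 / (ε / 120) ^ 2))⁻¹ := by gcongr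
          _ = 1 := mul_inv_cancel₀ this.ne'
      refine card_le_of_mass h1 ?_
      have h3 : 1 ≤ 1 / ε ^ 2 := by rw [le_div_iff₀ (by positivity)]; nlinarith [h.εle]
      have h4 : 12600 / (ε / 120) ^ 2 = 181440000 / ε ^ 2 := by field_simp; norm_num
      have h5 : 2 * 10 ^ 8 / ε ^ 2 = 73728 / ε ^ 2 + 181440000 / ε ^ 2 + 1 / ε ^ 2 +
        18486271 / ε ^ 2 := by rw [← add_div, ← add_div, ← add_div]; norm_num
      have h6 : 0 ≤ 18486271 / ε ^ 2 := by positivity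
      linarith
    · intro k _
      have h1 : IsClosed {G : β → ℝ | mvS (A k) (x k - e • G) ≤ 4 * e * η} :=
        isClosed_le (PG.continuous (by fun_prop)) continuous_const
      have h2 : IsClosed {G : β → ℝ | aN N (x k - e • G) ≤ 4 * e * Λ} :=
        isClosed_le (PG.continuous (by fun_prop)) continuous_const
      exact (h1.inter h2).measurableSet
    · intro k hk
      refine le_trans ?_ (mass_lower (mvS (A k)) (aN N) hη hΛ (by positivity)
        ((int_mv_le (A k)).trans (h.HS k (hT hk))) hg (x k))
      refine div_le_div_of_nonneg_right (Real.exp_le_exp.2 (neg_le_neg ?_)) two_pos.le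
      have h2 := h.x2 k (hT hk)
      have h3 : n2 (x k) ^ 2 ≤ 4 := by nlinarith [n2_nonneg (x k)]
      calc n2 (x k) ^ 2 / (2 * e ^ 2) ≤ 4 / (2 * e ^ 2) := by gcongr
        _ = _ := by rw [he]; field_simp; norm_num
    · intro G
      obtain ⟨D, hD⟩ : ∃ D : κ → Set (β → ℝ), D = (fun k => {G | mvS (A k) (x k - e • G) ≤
        4 * e * η ∧ aN N (x k - e • G) ≤ 4 * e * Λ}) := ⟨_, rfl⟩
      suffices H : ((T.filter (G ∈ D ·)).card : ℝ) ≤ Real.exp (12600 / (ε / 120) ^ 2) by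
        subst hD; exact H
      set T' := T.filter (G ∈ D ·) with hT'
      have hmem : ∀ k ∈ T', k ∈ T ∧ mvS (A k) (x k - e • G) ≤ 4 * e * η ∧
          aN N (x k - e • G) ≤ 4 * e * Λ := fun k hk => by
        have := mem_filter_set.1 hk
        rw [hD] at this
        exact this
      rcases T'.eq_empty_or_nonempty with hem | ⟨k₀, hk₀⟩
      · rw [hem]; simp only [Finset.card_empty, Nat.cast_zero]; positivity
      obtain ⟨hk1, -, hk3⟩ := hmem k₀ hk₀
      -- the frozen vector `e • G` still has a small averaged norm
      have hsm : 2 * aN N (e • G) ≤ 4 * η := by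
        have h1 := h.an k₀ (hT hk1)
        have h2 : e • G = x k₀ - (x k₀ - e • G) := by abel
        have h3 := map_sub_le_add (aN N) (x k₀) (x k₀ - e • G)
        rw [← h2] at h3
        have h4 := h.Λle
        have h5 : 4 * e * Λ = ε * Λ / 48 := by rw [he]; ring
        linarith
      obtain ⟨col, hcard, hcol⟩ := h.sudakov_at
        (S' := T') (fun k hk => hT (hmem k hk).1) (e • G) (w := 4 * η) (δ := ε / 120)
        (by positivity) hsm (by positivity) (by linarith [h.εle])
      rw [Finset.card_image_of_injOn] at hcard
      · exact hcard
      intro i hi j hj hij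
      have hi' := hmem i hi
      have hj' := hmem j hj
      by_contra hne
      refine hsep i hi'.1 j hj'.1 hne ?_
      have h1 := hcol i hi j hj hij
      have h2 := hi'.2.1
      have h3 := hj'.2.1
      rw [mvS_apply] at h2 h3
      have h4 : mv (A i) (x i) - mv (A j) (x j) = (mv (A i) (x i - e • G) -
        mv (A j) (x j - e • G)) + (mv (A i) (e • G) - mv (A j) (e • G)) := by
        rw [mv_sub_right, mv_sub_right]; abel
      rw [h4]
      have h5 := map_add_le_add n2 (mv (A i) (x i - e • G) -
        mv (A j) (x j - e • G)) (mv (A i) (e • G) - mv (A j) (e • G))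
      have h6 := map_sub_le_add n2 (mv (A i) (x i - e • G)) (mv (A j) (x j - e • G))
      have h7 : 4 * e * η = ε * η / 48 := by rw [he]; ring
      have h8 : ε / 120 * (4 * η) = ε * η / 30 := by ring
      have h9 : 0 < ε * η := by positivity
      linarith

/-- One step of the chaining. -/
lemma CInv.step (h : CInv N Λ S x A ε η) (hne : S.Nonempty) (hΛ : 0 < Λ)
    (hg : ∫ y, aN N y ∂gam β ≤ Λ) (hG : ∫ z, N z ∂gam (α × β) ≤ Λ) {M : ℝ}
    (hM : ∀ S' ⊆ S, S'.Nonempty → ∀ k, CInv N Λ S' (fun i => x i - x k) (fun i => A i - A k)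
      (ε / 2) (η / 2) → ∫ g, mx S' (fun i => mv (A i - A k) (x i - x k)) g ∂gam α ≤ M) :
    ∫ g, mx S (fun i => mv (A i) (x i)) g ∂gam α ≤ M + 10 ^ 6 * η := by
  have hε := h.εpos
  have hε1 := h.εle
  have hη := h.ηpos
  have hΛ' : Λ ≤ η / ε := by rw [le_div_iff₀ hε]; linarith [h.Λle]
  have hi : 1 ≤ 1 / ε ^ 2 := by rw [le_div_iff₀ (by positivity)]; nlinarith
  -- first colouring: small cells for `A x`, `A` and `x`
  have c1 := h.cells hΛ hg
  have c2 := sudakov (ε := ε / 4) (w := 2 * (η / ε)) S A ((2 : NNReal) • N) (by positivity)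
    (by positivity) (by linarith) (by
      have : ∫ z, ((2 : NNReal) • N) z ∂gam (α × β) = 2 * ∫ z, N z ∂gam (α × β) := by
        rw [← integral_const_mul (2 : ℝ)]; rfl
      rw [this]; linarith) (fun i hi j hj z => h.Ad i hi j hj z)
  have c3 := dual_sudakov (ε := ε / 2) (m := η / ε) S x (aN N) (by positivity) (by positivity)
    (by linarith) (hg.trans hΛ') h.x2
  have e2 : ε / 4 * (2 * (η / ε)) = η / 2 := by field_simp; norm_num
  have e3 : ε / 2 * (η / ε) = η / 2 := by field_simp
  rw [e2] at c2
  rw [e3] at c3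
  have c123 := ((c1.and c2).and c3).mono (B' := (20000 / ε) ^ 2) (by
    have : (20000 / ε) ^ 2 = 2 * 10 ^ 8 / ε ^ 2 + 12600 / (ε / 4) ^ 2 + 513 / (ε / 2) ^ 2 +
      199796348 * (1 / ε ^ 2) := by field_simp; norm_num
    rw [this]; linarith) fun _ _ _ _ h => h
  have b1 : 1 ≤ (20000 / ε) ^ 2 := by
    have : (20000 / ε) ^ 2 = 20000 ^ 2 * (1 / ε ^ 2) := by ring
    rw [this]; linarith
  have hw1 := width_col hne (fun i => mv (A i) (x i)) (M := M + 4 * η + 48000 * η) b1 c123 h.u ?_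
  · refine hw1.trans ?_
    rw [Real.sqrt_sq (by positivity)]
    have : 20000 / ε * (2 * ε * η) = 40000 * η := by field_simp; norm_num
    rw [this]; linarith
  intro S₁ hS₁ hne₁ hR₁
  have h₁ := h.subset hS₁
  obtain ⟨k, hk⟩ := id hne₁
  -- second colouring, around the centre `k`
  have c4 := dual_sudakov (ε := ε / 6) (m := η) S₁ x (mvS (A k)) hη (by positivity)
    (by linarith) ((int_mv_le (A k)).trans (h₁.HS k hk)) h₁.x2
  have c5 := h₁.sudakov_at (S' := S₁) (fun _ h => h) (x k) (w := 2 * η) (δ := ε / 12)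
    (by positivity) (by linarith [h₁.an k hk]) (by positivity) (by linarith)
  have c45 := (c4.and c5).mono (B' := (2000 / ε) ^ 2) (by
    have : (2000 / ε) ^ 2 = 513 / (ε / 6) ^ 2 + 12600 / (ε / 12) ^ 2 +
      2167132 * (1 / ε ^ 2) := by field_simp; norm_num
    rw [this]; linarith) fun _ _ _ _ h => h
  have b2 : 1 ≤ (2000 / ε) ^ 2 := by
    have : (2000 / ε) ^ 2 = 2000 ^ 2 * (1 / ε ^ 2) := by ring
    rw [this]; linarith
  have hw2 := width_col hne₁ (fun i => mv (A i) (x i)) (M := M + 4 * η) b2 c45 h₁.u ?_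
  · refine hw2.trans (le_of_eq ?_)
    rw [Real.sqrt_sq (by positivity)]
    have : 2000 / ε * (2 * ε * η) = 4000 * η := by field_simp; norm_num
    rw [this]; ring
  intro S₂ hS₂ hne₂ hR₂
  have h₂ := h₁.subset hS₂
  -- the recentred family satisfies the invariant at half the scales
  have hinv : CInv N Λ S₂ (fun i => x i - x k) (fun i => A i - A k) (ε / 2) (η / 2) :=
    { εpos := by positivity
      εle := by linarith
      ηpos := by positivity
      Λle := by linarith [h.Λle]
      x2 := fun i hi => h₁.xd i (hS₂ hi) k hk
      xd := fun i hi j hj => by simpa using h₂.xd i hi j hj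
      Ad := fun i hi j hj => by simpa using h₂.Ad i hi j hj
      HS := fun i hi => (hR₁ i (hS₂ hi) k hk).1.2
      an := fun i hi => (hR₁ i (hS₂ hi) k hk).2
      u := fun i hi j hj => by
        have r1 := (hR₁ i (hS₂ hi) j (hS₂ hj)).1.1
        have r2 := (hR₂ i hi j hj).1
        have r3 := (hR₂ i hi j hj).2
        rw [mvS_apply] at r2
        have : mv (A i - A k) (x i - x k) - mv (A j - A k) (x j - x k) =
          (mv (A i) (x i) - mv (A j) (x j)) - (mv (A k) (x i - x j) +
            (mv (A i) (x k) - mv (A j) (x k))) := by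
          simp only [mv_sub_left, mv_sub_right]; abel
        rw [this]
        have t1 := map_sub_le_add n2 (mv (A i) (x i) - mv (A j) (x j)) (mv (A k) (x i - x j) +
            (mv (A i) (x k) - mv (A j) (x k)))
        have t2 := map_add_le_add n2 (mv (A k) (x i - x j)) (mv (A i) (x k) - mv (A j) (x k))
        have t3 : ε / 12 * (2 * η) = ε * η / 6 := by ring
        have t4 : ε / 6 * η = ε * η / 6 := by ring
        have t5 : 2 * (ε / 2) * (η / 2) = ε * η / 2 := by ring
        linarith }
  have hM' := hM S₂ (hS₂.trans hS₁) hne₂ k hinv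
  have hpt : ∀ g, mx S₂ (fun i => mv (A i) (x i)) g ≤
      mx S₂ (fun i => mv (A i - A k) (x i - x k)) g +
        (2 * n2 (mv (fun ji : β × α => A k ji.swap) g) + (2 * N (tens g (x k)) +
          mv (A k) (x k) ⬝ᵥ g)) := fun g => by
    obtain ⟨i, hi, e⟩ := mx_mem hne₂ (fun i => mv (A i) (x i)) g
    rw [e]
    have t0 := le_mx (u := fun i => mv (A i - A k) (x i - x k)) (g := g) hi
    have t1 : mv (A k) (x i - x k) ⬝ᵥ g ≤ 2 * n2 (mv (fun ji : β × α => A k ji.swap) g) := by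
      rw [mv_dot']
      exact (dot_le _ _).trans (mul_le_mul_of_nonneg_right (h₁.xd i (hS₂ hi) k hk) (n2_nonneg _))
    have t2 : mv (A i - A k) (x k) ⬝ᵥ g ≤ 2 * N (tens g (x k)) := by
      rw [mv_dot]; exact h₁.Ad i (hS₂ hi) k hk _
    have : mv (A i) (x i) = mv (A i - A k) (x i - x k) + mv (A k) (x i - x k) +
        mv (A i - A k) (x k) + mv (A k) (x k) := by
      simp only [mv_sub_left, mv_sub_right]; abel
    rw [this, add_dotProduct, add_dotProduct, add_dotProduct]
    linarith
  have hpg := mx_pg hne₂ (fun i => mv (A i - A k) (x i - x k))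
  calc ∫ g, mx S₂ (fun i => mv (A i) (x i)) g ∂gam α
      ≤ ∫ g, (mx S₂ (fun i => mv (A i - A k) (x i - x k)) g +
        (2 * n2 (mv (fun ji : β × α => A k ji.swap) g) + (2 * N (tens g (x k)) +
          mv (A k) (x k) ⬝ᵥ g))) ∂gam α :=
        integral_mono (mx_pg hne₂ _).integrable (PG.integrable (by fun_prop)) hpt
    _ = (∫ g, mx S₂ (fun i => mv (A i - A k) (x i - x k)) g ∂gam α) +
        (2 * (∫ g, n2 (mv (fun ji : β × α => A k ji.swap) g) ∂gam α) +
          (2 * aN N (x k) + 0)) := by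
        rw [integral_add hpg.integrable (PG.integrable (by fun_prop)),
          integral_add (PG.integrable (by fun_prop)) (PG.integrable (by fun_prop)),
          integral_add (PG.integrable (by fun_prop)) (PG.integrable (by fun_prop)),
          int_dot, integral_const_mul (2 : ℝ), integral_const_mul (2 : ℝ), aN_apply]
    _ ≤ M + 4 * η := by
        have t1 := (int_mv_swap_le (A k)).trans (h₁.HS k hk)
        have t2 := h₁.an k hk
        linarith

/-- `L` steps of the chaining, followed by the trivial bound. -/
lemma CInv.width_aux (hΛ : 0 < Λ) (hg : ∫ y, aN N y ∂gam β ≤ Λ)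
    (hG : ∫ z, N z ∂gam (α × β) ≤ Λ) (L : ℕ) :
    ∀ (S : Finset κ) (x : κ → β → ℝ) (A : κ → α × β → ℝ) (ε η : ℝ), S.Nonempty →
      CInv N Λ S x A ε η → ∫ g, mx S (fun i => mv (A i) (x i)) g ∂gam α ≤
        2 * 10 ^ 6 * η + 2 * ε * η * (∫ g, n2 g ∂gam α) / 4 ^ L := by
  induction L with
  | zero =>
    intro S x A ε η hne h
    obtain ⟨i₀, hi₀⟩ := id hne
    rw [← int_mx_sub hne _ (mv (A i₀) (x i₀)), pow_zero, div_one, ← integral_const_mul (2 * ε * η)]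
    have hη := h.ηpos
    have : ∫ g, mx S (fun i => mv (A i) (x i) - mv (A i₀) (x i₀)) g ∂gam α ≤
        ∫ g, 2 * ε * η * n2 g ∂gam α := by
      refine integral_mono (mx_pg hne _).integrable (PG.integrable (by fun_prop)) fun g => ?_
      obtain ⟨i, hi, e⟩ := mx_mem hne (fun i => mv (A i) (x i) - mv (A i₀) (x i₀)) g
      rw [e]
      exact (dot_le _ _).trans (mul_le_mul_of_nonneg_right (h.u i hi i₀ hi₀) (n2_nonneg _))
    linarith
  | succ L ih =>
    intro S x A ε η hne h
    refine (h.step hne hΛ hg hG fun S' _ hne' k hinv => ih S' _ _ _ _ hne' hinv).trans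
      (le_of_eq ?_)
    rw [pow_succ]; field_simp; ring

/-- The Gaussian width of the vectors `A i (x i)`, by summing the geometric series of chaining steps. -/
lemma CInv.width (h : CInv N Λ S x A ε η) (hne : S.Nonempty) (hΛ : 0 < Λ)
    (hg : ∫ y, aN N y ∂gam β ≤ Λ) (hG : ∫ z, N z ∂gam (α × β) ≤ Λ) :
    ∫ g, mx S (fun i => mv (A i) (x i)) g ∂gam α ≤ 2 * 10 ^ 6 * η := by
  have ht : Filter.Tendsto (fun L : ℕ => 2 * 10 ^ 6 * η + 2 * ε * η * (∫ g, n2 g ∂gam α) / 4 ^ L)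
      Filter.atTop (nhds (2 * 10 ^ 6 * η + 0)) :=
    tendsto_const_nhds.add (tendsto_const_nhds.div_atTop
      (tendsto_pow_atTop_atTop_of_one_lt (by norm_num)))
  rw [add_zero] at ht
  exact ge_of_tendsto' ht fun L => CInv.width_aux hΛ hg hG L S x A ε η hne h

end chaining

/-! ### The two-block inequality -/

section twoblock
variable {α β : Type*} [Fintype α] [Fintype β]

lemma dot_le_sup (t g : α → ℝ) {δ : ℝ} (ht : ‖t‖ ≤ δ) : t ⬝ᵥ g ≤ δ * ∑ i, |g i| := by
  rw [dotProduct, Finset.mul_sum]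
  refine Finset.sum_le_sum fun i _ => (le_abs_self _).trans ?_
  rw [abs_mul]
  exact mul_le_mul_of_nonneg_right ((norm_le_pi_norm t i).trans ht) (abs_nonneg _)

lemma norm_le_n2 (t : α → ℝ) : ‖t‖ ≤ n2 t := by
  refine (pi_norm_le_iff_of_nonneg (n2_nonneg t)).2 fun i => ?_
  rw [Real.norm_eq_abs, ← abs_of_nonneg (n2_nonneg t), ← sq_le_sq, n2_sq]
  exact Finset.single_le_sum (f := fun i => t i ^ 2) (fun _ _ => sq_nonneg _) (Finset.mem_univ i)

/-- The two-block inequality: the expected supremum `E sup_x N (g ⊗ x)` is controlled by the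
deterministic and averaged quantities of order two. -/
lemma two_block (N : Seminorm ℝ (α × β → ℝ)) {p : ℝ} (hp : 1 ≤ p) {σ₁ s σ₀ : ℝ}
    (h1 : ∀ z, n2 z ≤ 1 → N z ≤ σ₁) (h2 : ∀ x, n2 x ≤ 1 → aN N x ≤ s)
    (h0 : ∀ y x, n2 y ≤ 1 → n2 x ≤ 1 → N (tens y x) ≤ σ₀) {q : (α → ℝ) → ℝ} (hq : PG q)
    (hqN : ∀ g, ∀ δ > 0, ∃ x, n2 x ≤ 1 ∧ q g ≤ N (tens g x) + δ) :
    √p * ∫ g, q g ∂gam α ≤ 2 * 10 ^ 6 * ((∫ z, N z ∂gam (α × β)) + (∫ y, aN N y ∂gam β) +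
      √p * σ₁ + √p * s + p * σ₀) := by
  have hp0 : 0 < √p := Real.sqrt_pos.2 (by linarith)
  have hp1 : 1 ≤ √p := Real.one_le_sqrt.2 hp
  have hpp : √p * √p = p := Real.mul_self_sqrt (by linarith)
  have hσ₁ : 0 ≤ σ₁ := by simpa using h1 0 (by simp)
  have hs : 0 ≤ s := by simpa using h2 0 (by simp)
  have hσ₀ : 0 ≤ σ₀ := (apply_nonneg N _).trans (h0 0 0 (by simp) (by simp))
  set a := ∫ z, N z ∂gam (α × β) with ha
  set b := ∫ y, aN N y ∂gam β with hb
  have ha0 : 0 ≤ a := integral_nonneg fun z => apply_nonneg N z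
  have hb0 : 0 ≤ b := integral_nonneg fun z => apply_nonneg (aN N) z
  set c := ∫ g : α → ℝ, ∑ i, |g i| ∂gam α with hc
  have key : ∀ δ > 0, √p * ∫ g, q g ∂gam α ≤ 2 * 10 ^ 6 * (a + b +
      √p * σ₁ + √p * s + p * σ₀) + δ * (2 * 10 ^ 6 + √p * (c + 1)) := by
    intro δ hδ
    set V : Set (α → ℝ) := {t | ∃ A : α × β → ℝ, ∃ x : β → ℝ, (∀ z, A ⬝ᵥ z ≤ N z) ∧
      n2 x ≤ 1 ∧ mv A x = t} with hV
    have hVn : ∀ t ∈ V, n2 t ≤ σ₀ := by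
      rintro t ⟨A, x, hA, hx, rfl⟩
      refine n2_le_of_dot_le hσ₀ fun y hy => ?_
      rw [mv_dot]; exact (hA _).trans (h0 y x hy hx)
    have hVb : TotallyBounded V := by
      refine (Bornology.IsBounded.isCompact_closure ?_).totallyBounded.subset subset_closure
      exact isBounded_iff_forall_norm_le.2 ⟨σ₀, fun t ht => (norm_le_n2 t).trans (hVn t ht)⟩
    obtain ⟨T, hTV, hTfin, hT⟩ := Metric.finite_approx_of_totallyBounded hVb δ hδ
    have hch : ∀ t : α → ℝ, ∃ A : α × β → ℝ, ∃ x : β → ℝ, t ∈ V → (∀ z, A ⬝ᵥ z ≤ N z) ∧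
      n2 x ≤ 1 ∧ mv A x = t := fun t => by
      by_cases h : t ∈ V
      · obtain ⟨A, x, h'⟩ := h; exact ⟨A, x, fun _ => h'⟩
      · exact ⟨0, 0, fun h' => absurd h' h⟩
    choose A x hAx using hch
    set S := hTfin.toFinset with hS
    have hSV : ∀ t ∈ S, t ∈ V := fun t ht => hTV (hTfin.mem_toFinset.1 ht)
    have hpt : ∀ g, ∃ t ∈ S, q g ≤ t ⬝ᵥ g + (δ * ∑ i, |g i| + δ) := fun g => by
      obtain ⟨y, hy, hqy⟩ := hqN g δ hδ
      obtain ⟨B, hB1, hB2⟩ := exists_dual N (tens g y)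
      have hmem : mv B y ∈ V := ⟨B, y, hB2, hy, rfl⟩
      obtain ⟨t, ht, hdist⟩ := Set.mem_iUnion₂.1 (hT hmem)
      refine ⟨t, hTfin.mem_toFinset.2 ht, ?_⟩
      have h3 := dot_le_sup (δ := δ) (mv B y - t) g (by
        rw [← dist_eq_norm]; exact (Metric.mem_ball.1 hdist).le)
      rw [sub_dotProduct, mv_dot, hB1] at h3
      linarith
    have hne : S.Nonempty := by obtain ⟨t, ht, -⟩ := hpt 0; exact ⟨t, ht⟩
    set η := σ₁ + s + √p * σ₀ + (a + b + δ) / √p with hη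
    have hη1 : 0 ≤ √p * σ₀ := by positivity
    have hη2 : 0 < (a + b + δ) / √p := by positivity
    have hinv : CInv N (a + b + δ) S x A (1 / √p) η :=
      { εpos := by positivity
        εle := by rw [div_le_one hp0]; exact hp1
        ηpos := by linarith
        Λle := by rw [hη, one_div, inv_mul_eq_div]; linarith
        x2 := fun t ht => by linarith [(hAx t (hSV t ht)).2.1]
        xd := fun t ht t' ht' => by
          linarith [(hAx t (hSV t ht)).2.1, (hAx t' (hSV t' ht')).2.1,
            map_sub_le_add n2 (x t) (x t')]
        Ad := fun t ht t' ht' z => by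
          rw [sub_dotProduct]
          have h3 := (hAx t (hSV t ht)).1 z
          have h4 := (hAx t' (hSV t' ht')).1 (-z)
          rw [dotProduct_neg, map_neg_eq_map] at h4
          linarith
        HS := fun t ht => by
          have := n2_le_of_dot_le hσ₁ fun z hz => ((hAx t (hSV t ht)).1 z).trans (h1 z hz)
          linarith
        an := fun t ht => by linarith [h2 _ (hAx t (hSV t ht)).2.1]
        u := fun t ht t' ht' => by
          rw [(hAx t (hSV t ht)).2.2, (hAx t' (hSV t' ht')).2.2]
          have h3 := map_sub_le_add n2 t t'
          have h4 : σ₀ ≤ 1 / √p * η := by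
            rw [one_div, inv_mul_eq_div, le_div_iff₀ hp0]; linarith
          linarith [hVn t (hSV t ht), hVn t' (hSV t' ht')] }
    have hw := hinv.width hne (by positivity) (by linarith) (by linarith)
    have hpg := mx_pg hne (fun t => mv (A t) (x t))
    have h5 : ∫ g, q g ∂gam α ≤ ∫ g, (mx S (fun t => mv (A t) (x t)) g +
        (δ * ∑ i, |g i| + δ)) ∂gam α := by
      refine integral_mono hq.integrable (PG.integrable (by fun_prop)) fun g => ?_
      obtain ⟨t, ht, h⟩ := hpt g
      have h6 := le_mx (u := fun t => mv (A t) (x t)) (g := g) ht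
      simp only [(hAx t (hSV t ht)).2.2] at h6
      linarith
    rw [integral_add hpg.integrable (PG.integrable (by fun_prop)),
      integral_add (PG.integrable (by fun_prop)) (PG.integrable (by fun_prop)),
      integral_const_mul δ, ← hc] at h5
    simp only [integral_const, probReal_univ, one_smul] at h5
    calc √p * ∫ g, q g ∂gam α ≤ √p * (2 * 10 ^ 6 * η + (δ * c + δ)) := by gcongr; linarith
      _ = _ := by
        rw [hη]
        have : √p * ((a + b + δ) / √p) = a + b + δ := by field_simp
        linear_combination (2 * 10 ^ 6) * this + 2 * 10 ^ 6 * σ₀ * hpp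
  have ht : Filter.Tendsto (fun δ : ℝ => 2 * 10 ^ 6 * (a + b +
      √p * σ₁ + √p * s + p * σ₀) + δ * (2 * 10 ^ 6 + √p * (c + 1))) (nhdsWithin 0 (Set.Ioi 0))
      (nhds (2 * 10 ^ 6 * (a + b + √p * σ₁ + √p * s + p * σ₀) +
        0 * (2 * 10 ^ 6 + √p * (c + 1)))) :=
    (Continuous.tendsto (by fun_prop) _).mono_left nhdsWithin_le_nhds
  rw [zero_mul, add_zero] at ht
  exact ge_of_tendsto ht (eventually_nhdsWithin_of_forall key)

end twoblock

/-! ### Averaging and supremum operators on seminorms of arrays -/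

/-- Real arrays indexed by `[n]^d`. -/
abbrev Arr (d n : ℕ) := (Fin d → Fin n) → ℝ

section ops
variable {d n : ℕ}

/-- The array `i ↦ ∏_{J ∈ P} ω_{J, i_J}`. -/
def mB (P : Finset (Finset (Fin d))) (ω : GIdx d n → ℝ) : Arr d n :=
  fun i => ∏ J ∈ P, ω ⟨J, fun l => i l.1⟩

@[fun_prop]
lemma PG.mB {E : Type*} [NormedAddCommGroup E] (P : Finset (Finset (Fin d)))
    {f : E → GIdx d n → ℝ} (hf : PG f) : PG (fun e => mB P (f e)) := by
  unfold _root_.mB; fun_prop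

@[fun_prop]
lemma PG.pimul {E ι : Type*} [Fintype ι] [NormedAddCommGroup E] {f g : E → ι → ℝ}
    (hf : PG f) (hg : PG g) : PG (fun e => f e * g e) := by
  have : (fun e => f e * g e) = fun e i => f e i * g e i := rfl
  rw [this]; fun_prop

lemma mB_union {P Q : Finset (Finset (Fin d))} (h : Disjoint P Q) (ω : GIdx d n → ℝ) :
    mB (P ∪ Q) ω = mB P ω * mB Q ω := by
  ext i; exact Finset.prod_union h

lemma mB_congr {P : Finset (Finset (Fin d))} {ω ω' : GIdx d n → ℝ}
    (h : ∀ J ∈ P, ∀ v, ω ⟨J, v⟩ = ω' ⟨J, v⟩) : mB P ω = mB P ω' := by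
  ext i; exact Finset.prod_congr rfl fun J hJ => h J hJ _

@[simp] lemma mB_empty (ω : GIdx d n → ℝ) : mB ∅ ω = 1 := by ext i; simp [mB]

/-- The seminorm `c ↦ N (a c)`. -/
noncomputable def mulS (N : Seminorm ℝ (Arr d n)) (a : Arr d n) : Seminorm ℝ (Arr d n) :=
  Seminorm.of (fun c => N (a * c)) (fun c c' => by rw [mul_add]; exact map_add_le_add N _ _)
    (fun r c => by rw [mul_smul_comm]; exact map_smul_eq_mul N _ _)

/-- `E N (g_P c)`: averaging of a seminorm over Gaussian blocks. -/
noncomputable def Gop (P : Finset (Finset (Fin d))) (N : Seminorm ℝ (Arr d n)) :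
    Seminorm ℝ (Arr d n) :=
  avgS (gam (GIdx d n)) (fun ω => mulS N (mB P ω)) fun c =>
    PG.integrable (f := fun ω => N (mB P ω * c)) (by fun_prop)

lemma Gop_apply (P : Finset (Finset (Fin d))) (N : Seminorm ℝ (Arr d n)) (c : Arr d n) :
    Gop P N c = ∫ ω, N (mB P ω * c) ∂gam (GIdx d n) := rfl

/-- The product of Euclidean balls over the blocks in `P`. -/
def bl (P : Finset (Finset (Fin d))) : Set (GIdx d n → ℝ) :=
  {ω | ∀ J ∈ P, ∑ v, ω ⟨J, v⟩ ^ 2 ≤ 1}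

lemma zero_mem_bl (P : Finset (Finset (Fin d))) : (0 : GIdx d n → ℝ) ∈ bl P := fun J _ => by simp

instance (P : Finset (Finset (Fin d))) : Nonempty (bl (n := n) P) := ⟨⟨0, zero_mem_bl P⟩⟩

lemma Xop_bdd (P : Finset (Finset (Fin d))) (N : Seminorm ℝ (Arr d n)) (c : Arr d n) :
    BddAbove (Set.range fun ω : bl (n := n) P => N (mB P ω.1 * c)) := by
  obtain ⟨C, hC0, hC⟩ : ∃ C, 0 ≤ C ∧ ∀ x, N x ≤ C * ‖x‖ :=
    ⟨_, Finset.sum_nonneg fun i _ => apply_nonneg N _, seminorm_le_sum N⟩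
  refine ⟨C * ‖c‖, ?_⟩
  rintro _ ⟨⟨ω, hω⟩, rfl⟩
  refine (hC _).trans (mul_le_mul_of_nonneg_left ?_ hC0)
  refine (pi_norm_le_iff_of_nonneg (norm_nonneg c)).2 fun i => ?_
  rw [Pi.mul_apply, norm_mul]
  refine (mul_le_of_le_one_left (norm_nonneg _) ?_).trans (norm_le_pi_norm c i)
  rw [Real.norm_eq_abs]
  rw [mB, Finset.abs_prod]
  refine Finset.prod_le_one (fun _ _ => abs_nonneg _) fun J hJ => ?_
  have h1 := hω J hJ
  have h2 := Finset.single_le_sum (f := fun v => ω ⟨J, v⟩ ^ 2) (fun _ _ => sq_nonneg _)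
    (Finset.mem_univ (fun l : {l // l ∈ J} => i l.1))
  exact (sq_le_one_iff_abs_le_one _).1 (h2.trans h1)

/-- `sup N (x_P c)` over arrays `x_J`, `J ∈ P`, in the unit balls. -/
noncomputable def Xop (P : Finset (Finset (Fin d))) (N : Seminorm ℝ (Arr d n)) :
    Seminorm ℝ (Arr d n) :=
  Seminorm.of (fun c => ⨆ ω : bl (n := n) P, N (mB P ω.1 * c))
    (fun c c' => ciSup_le fun ω => by
      rw [mul_add]
      exact (map_add_le_add N _ _).trans
        (add_le_add (le_ciSup (Xop_bdd P N c) ω) (le_ciSup (Xop_bdd P N c') ω)))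
    (fun r c => by
      simp only [mul_smul_comm, map_smul_eq_mul]
      exact (Real.mul_iSup_of_nonneg (norm_nonneg r) _).symm)

lemma le_Xop {P : Finset (Finset (Fin d))} (N : Seminorm ℝ (Arr d n)) (c : Arr d n)
    {ω : GIdx d n → ℝ} (h : ω ∈ bl P) : N (mB P ω * c) ≤ Xop P N c :=
  le_ciSup (Xop_bdd P N c) ⟨ω, h⟩

lemma Xop_le {P : Finset (Finset (Fin d))} {N : Seminorm ℝ (Arr d n)} {c : Arr d n} {r : ℝ}
    (h : ∀ ω ∈ bl P, N (mB P ω * c) ≤ r) : Xop P N c ≤ r :=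
  ciSup_le fun ω => h ω.1 ω.2

lemma Xop_approx (P : Finset (Finset (Fin d))) (N : Seminorm ℝ (Arr d n)) (c : Arr d n) {δ : ℝ}
    (hδ : 0 < δ) : ∃ ω ∈ bl P, Xop P N c ≤ N (mB P ω * c) + δ := by
  obtain ⟨ω, h⟩ := exists_lt_of_lt_ciSup (show Xop P N c - δ < ⨆ ω : bl (n := n) P,
    N (mB P ω.1 * c) from sub_lt_self _ hδ)
  exact ⟨ω.1, ω.2, by linarith⟩

@[simp] lemma Gop_empty (N : Seminorm ℝ (Arr d n)) : Gop ∅ N = N := by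
  ext c; simp [Gop_apply]

@[simp] lemma Xop_empty (N : Seminorm ℝ (Arr d n)) : Xop ∅ N = N := by
  ext c
  refine le_antisymm (Xop_le fun ω _ => by simp) ?_
  simpa using le_Xop N c (zero_mem_bl ∅)

/-- Domination by a nonnegative combination passes through `Gop`. -/
lemma Gop_sum_le {κ : Type*} {P : Finset (Finset (Fin d))} {N : Seminorm ℝ (Arr d n)}
    {F : Finset κ} {a : κ → ℝ} {M : κ → Seminorm ℝ (Arr d n)}
    (h : ∀ c, N c ≤ ∑ k ∈ F, a k * M k c) (c : Arr d n) :
    Gop P N c ≤ ∑ k ∈ F, a k * Gop P (M k) c := by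
  simp only [Gop_apply]
  calc ∫ ω, N (mB P ω * c) ∂gam (GIdx d n)
      ≤ ∫ ω, ∑ k ∈ F, a k * M k (mB P ω * c) ∂gam (GIdx d n) :=
        integral_mono (PG.integrable (by fun_prop)) (PG.integrable (by fun_prop)) fun ω => h _
    _ = _ := by
        rw [integral_finsetSum _ fun k _ => PG.integrable (by fun_prop)]
        exact Finset.sum_congr rfl fun k _ => integral_const_mul (a k) _

/-- Domination by a nonnegative combination passes through `Xop`. -/
lemma Xop_sum_le {κ : Type*} {P : Finset (Finset (Fin d))} {N : Seminorm ℝ (Arr d n)}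
    {F : Finset κ} {a : κ → ℝ} {M : κ → Seminorm ℝ (Arr d n)} (ha : ∀ k ∈ F, 0 ≤ a k)
    (h : ∀ c, N c ≤ ∑ k ∈ F, a k * M k c) (c : Arr d n) :
    Xop P N c ≤ ∑ k ∈ F, a k * Xop P (M k) c :=
  Xop_le fun _ hω => (h _).trans (Finset.sum_le_sum fun k hk =>
    mul_le_mul_of_nonneg_left (le_Xop (M k) c hω) (ha k hk))

lemma Gop_mono {P : Finset (Finset (Fin d))} {N M : Seminorm ℝ (Arr d n)}
    (h : ∀ c, N c ≤ M c) (c : Arr d n) : Gop P N c ≤ Gop P M c := by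
  simpa using Gop_sum_le (P := P) (F := {()}) (a := fun _ => 1) (M := fun _ => M)
    (by simpa using h) c

lemma Xop_mono {P : Finset (Finset (Fin d))} {N M : Seminorm ℝ (Arr d n)}
    (h : ∀ c, N c ≤ M c) (c : Arr d n) : Xop P N c ≤ Xop P M c :=
  Xop_le fun _ hω => (h _).trans (le_Xop M c hω)

lemma Xop_union_le {P Q : Finset (Finset (Fin d))} (hPQ : Disjoint P Q)
    (N : Seminorm ℝ (Arr d n)) (c : Arr d n) : Xop (P ∪ Q) N c ≤ Xop P (Xop Q N) c :=
  Xop_le fun ω hω => by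
    rw [mB_union hPQ, mul_comm (mB P ω), mul_assoc]
    refine (le_Xop N (mB P ω * c) (P := Q) fun J hJ => hω J (Finset.mem_union_right _ hJ)).trans ?_
    exact le_Xop (Xop Q N) c fun J hJ => hω J (Finset.mem_union_left _ hJ)

/-- Blocks in `P` are taken from the first argument, the others from the second. -/
noncomputable def mix (P : Finset (Finset (Fin d))) (ω ω' : GIdx d n → ℝ) : GIdx d n → ℝ :=
  fun a => if a.1 ∈ P then ω a else ω' a

lemma mB_mix {P Q : Finset (Finset (Fin d))} (hPQ : Disjoint P Q) (ω ω' : GIdx d n → ℝ) :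
    mB (P ∪ Q) (mix P ω ω') = mB Q ω' * mB P ω := by
  rw [mB_union hPQ, mul_comm]
  congr 1
  · refine mB_congr fun J hJ v => ?_
    simp only [mix, if_neg (Finset.disjoint_right.1 hPQ hJ)]
  · refine mB_congr fun J hJ v => ?_
    simp only [mix, if_pos hJ]

lemma le_Xop_union {P Q : Finset (Finset (Fin d))} (hPQ : Disjoint P Q)
    (N : Seminorm ℝ (Arr d n)) (c : Arr d n) : Xop P (Xop Q N) c ≤ Xop (P ∪ Q) N c :=
  Xop_le fun ω hω => Xop_le fun ω' hω' => by
    rw [← mul_assoc, ← mB_mix hPQ]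
    refine le_Xop N c fun J hJ => ?_
    by_cases hJP : J ∈ P
    · simpa only [mix, if_pos hJP] using hω J hJP
    · simpa only [mix, if_neg hJP] using
        hω' J ((Finset.mem_union.1 hJ).resolve_left hJP)

/-- Independence of distinct blocks. -/
lemma int_mB_union {P Q : Finset (Finset (Fin d))} (hPQ : Disjoint P Q) {f : Arr d n → ℝ}
    (hf : PG f) : ∫ ω, f (mB (P ∪ Q) ω) ∂gam (GIdx d n) =
      ∫ ω, ∫ ω', f (mB Q ω' * mB P ω) ∂gam (GIdx d n) ∂gam (GIdx d n) := by
  have hinj : Function.Injective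
      (fun a : GIdx d n => if a.1 ∈ P then (Sum.inl a : GIdx d n ⊕ GIdx d n) else Sum.inr a) := by
    intro a b hab
    simp only at hab
    split_ifs at hab <;> simpa using hab
  have h1 := MeasurePreserving_integral (gam_pull hinj) (g := fun ω => f (mB (P ∪ Q) ω))
    (PG.continuous (by fun_prop)).aestronglyMeasurable
  have h2 := MeasurePreserving_integral (gam_sum (ι := GIdx d n) (κ := GIdx d n))
    (g := fun ω => f (mB Q ω.2 * mB P ω.1)) (PG.continuous (by fun_prop)).aestronglyMeasurable
  have h3 := integral_prod (μ := gam (GIdx d n)) (ν := gam (GIdx d n))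
    (fun ω => f (mB Q ω.2 * mB P ω.1)) (PG.integrable (by fun_prop))
  rw [← h1, ← h3, ← h2]
  refine integral_congr_ae (Filter.Eventually.of_forall fun ω => ?_)
  simp only
  rw [← mB_mix hPQ]
  congr 2
  ext a
  simp only [mix]
  split_ifs <;> rfl

lemma Gop_union {P Q : Finset (Finset (Fin d))} (hPQ : Disjoint P Q)
    (N : Seminorm ℝ (Arr d n)) : Gop P (Gop Q N) = Gop (P ∪ Q) N := by
  ext c
  have := int_mB_union hPQ (f := fun a => N (a * c)) (by fun_prop)
  simp only [Gop_apply, this, mul_assoc]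

end ops

/-! ### Exchanging an average and a supremum over two blocks -/

section blocks
variable {d n : ℕ}

/-- Multi-indices of the block `J`. -/
abbrev Bk (n : ℕ) {d : ℕ} (J : Finset (Fin d)) := {l // l ∈ J} → Fin n

/-- The array `i ↦ y_{i_J}`. -/
def bI (J : Finset (Fin d)) (y : Bk n J → ℝ) : Arr d n := fun i => y fun l => i l.1

@[fun_prop]
lemma PG.bI {E : Type*} [NormedAddCommGroup E] (J : Finset (Fin d))
    {f : E → Bk n J → ℝ} (hf : PG f) : PG (fun e => bI J (f e)) := by
  unfold _root_.bI; fun_prop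

lemma mB_single (J : Finset (Fin d)) (ω : GIdx d n → ℝ) :
    mB {J} ω = bI J fun v => ω ⟨J, v⟩ := by
  ext i; simp [mB, bI]

lemma blk_inj (J : Finset (Fin d)) :
    Function.Injective (fun v : Bk n J => (⟨J, v⟩ : GIdx d n)) := fun _ _ h => by simpa using h

lemma int_mB_single (J : Finset (Fin d)) {f : Arr d n → ℝ} (hf : PG f) :
    ∫ ω, f (mB {J} ω) ∂gam (GIdx d n) = ∫ y, f (bI J y) ∂gam (Bk n J) := by
  rw [← MeasurePreserving_integral (gam_pull (blk_inj J)) (g := fun y => f (bI J y))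
    (PG.continuous (by fun_prop)).aestronglyMeasurable]
  simp only [mB_single]

lemma Gop_single (J : Finset (Fin d)) (N : Seminorm ℝ (Arr d n)) (c : Arr d n) :
    Gop {J} N c = ∫ y, N (bI J y * c) ∂gam (Bk n J) := by
  rw [Gop_apply]
  exact int_mB_single J (f := fun a => N (a * c)) (by fun_prop)

lemma le_Xop_single {J : Finset (Fin d)} (N : Seminorm ℝ (Arr d n)) (c : Arr d n)
    {y : Bk n J → ℝ} (hy : n2 y ≤ 1) : N (bI J y * c) ≤ Xop {J} N c := by
  have h := le_Xop (P := {J}) N c (ω := fun a => if h : a.1 = J then y (h ▸ a.2) else 0)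
    (fun I hI => by
      obtain rfl := Finset.mem_singleton.1 hI
      simpa using (n2_le_iff zero_le_one).1 hy)
  rw [mB_single] at h
  simpa using h

lemma Xop_single_approx (J : Finset (Fin d)) (N : Seminorm ℝ (Arr d n)) (c : Arr d n) {δ : ℝ}
    (hδ : 0 < δ) : ∃ y : Bk n J → ℝ, n2 y ≤ 1 ∧ Xop {J} N c ≤ N (bI J y * c) + δ := by
  obtain ⟨ω, h1, h2⟩ := Xop_approx {J} N c hδ
  rw [mB_single] at h2
  exact ⟨_, (n2_le_iff zero_le_one).2 (by simpa using h1 J (Finset.mem_singleton_self J)), h2⟩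

/-- Splitting a multi-index on `I ∪ J` into its parts on `I` and on `J`. -/
def spl (I J : Finset (Fin d)) (v : Bk n (I ∪ J)) : Bk n I × Bk n J :=
  (fun l => v ⟨l.1, Finset.mem_union_left _ l.2⟩, fun l => v ⟨l.1, Finset.mem_union_right _ l.2⟩)

lemma spl_inj (I J : Finset (Fin d)) : Function.Injective (spl (n := n) I J) := by
  intro v w h
  ext ⟨l, hl⟩
  rcases Finset.mem_union.1 hl with h' | h'
  · exact congrArg Fin.val (congrFun (congrArg Prod.fst h) ⟨l, h'⟩)
  · exact congrArg Fin.val (congrFun (congrArg Prod.snd h) ⟨l, h'⟩)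

lemma bI_tens (I J : Finset (Fin d)) (g : Bk n I → ℝ) (x : Bk n J → ℝ) :
    bI (I ∪ J) (tens g x ∘ spl I J) = bI I g * bI J x := rfl

lemma n2_comp_le {ι κ : Type*} [Fintype ι] [Fintype κ] {f : ι → κ} (hf : Function.Injective f)
    (z : κ → ℝ) : n2 (z ∘ f) ≤ n2 z := by
  rw [n2_le_iff (n2_nonneg z), n2_sq]
  calc ∑ i, (z ∘ f) i ^ 2 = ∑ k ∈ Finset.univ.image f, z k ^ 2 :=
        (Finset.sum_image (f := fun k => z k ^ 2) hf.injOn).symm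
    _ ≤ _ := Finset.sum_le_sum_of_subset_of_nonneg (Finset.subset_univ _)
        fun _ _ _ => sq_nonneg _

/-- The seminorm `z ↦ N (z_{i_I, i_J} c_i)` on two-block arrays. -/
noncomputable def tbS (I J : Finset (Fin d)) (N : Seminorm ℝ (Arr d n)) (c : Arr d n) :
    Seminorm ℝ (Bk n I × Bk n J → ℝ) :=
  Seminorm.of (fun z => N (bI (I ∪ J) (z ∘ spl I J) * c))
    (fun z z' => by
      have : bI (I ∪ J) ((z + z') ∘ spl I J) * c =
        bI (I ∪ J) (z ∘ spl I J) * c + bI (I ∪ J) (z' ∘ spl I J) * c := by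
          rw [← add_mul]; rfl
      rw [this]; exact map_add_le_add N _ _)
    (fun r z => by
      have : bI (I ∪ J) ((r • z) ∘ spl I J) * c = r • (bI (I ∪ J) (z ∘ spl I J) * c) := by
        rw [← smul_mul_assoc]; rfl
      rw [this]; exact map_smul_eq_mul N _ _)

lemma tbS_apply (I J : Finset (Fin d)) (N : Seminorm ℝ (Arr d n)) (c : Arr d n)
    (z : Bk n I × Bk n J → ℝ) : tbS I J N c z = N (bI (I ∪ J) (z ∘ spl I J) * c) := rfl

lemma tbS_tens (I J : Finset (Fin d)) (N : Seminorm ℝ (Arr d n)) (c : Arr d n)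
    (g : Bk n I → ℝ) (x : Bk n J → ℝ) : tbS I J N c (tens g x) = N (bI I g * (bI J x * c)) := by
  rw [tbS_apply, bI_tens, mul_assoc]

lemma tbS_tens' (I J : Finset (Fin d)) (N : Seminorm ℝ (Arr d n)) (c : Arr d n)
    (g : Bk n I → ℝ) (x : Bk n J → ℝ) : tbS I J N c (tens g x) = N (bI J x * (bI I g * c)) := by
  rw [tbS_tens, mul_left_comm]

lemma int_tbS (I J : Finset (Fin d)) (N : Seminorm ℝ (Arr d n)) (c : Arr d n) :
    ∫ z, tbS I J N c z ∂gam (Bk n I × Bk n J) = Gop {I ∪ J} N c := by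
  rw [Gop_single, ← MeasurePreserving_integral (gam_pull (spl_inj I J))
    (g := fun y => N (bI (I ∪ J) y * c)) (PG.continuous (by fun_prop)).aestronglyMeasurable]
  rfl

lemma aN_tbS (I J : Finset (Fin d)) (N : Seminorm ℝ (Arr d n)) (c : Arr d n)
    (x : Bk n J → ℝ) : aN (tbS I J N c) x = Gop {I} N (bI J x * c) := by
  rw [aN_apply, Gop_single]
  simp only [tbS_tens]

/-- The two-block inequality in terms of the operators `Gop` and `Xop`. -/
lemma swap_rule (I J : Finset (Fin d)) (N : Seminorm ℝ (Arr d n)) (c : Arr d n) {s : ℝ}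
    (hs : 1 ≤ s) :
    s * Gop {I} (Xop {J} N) c ≤ 2 * 10 ^ 6 * (Gop {I ∪ J} N c + Gop {J} (Gop {I} N) c +
      s * Xop {I ∪ J} N c + s * Xop {J} (Gop {I} N) c + s ^ 2 * Xop {I} (Xop {J} N) c) := by
  have h := two_block (tbS I J N c) (p := s ^ 2) (by nlinarith) (σ₁ := Xop {I ∪ J} N c)
    (s := Xop {J} (Gop {I} N) c) (σ₀ := Xop {I} (Xop {J} N) c)
    (q := fun g => Xop {J} N (bI I g * c))
    (fun z hz => le_Xop_single N c ((n2_comp_le (spl_inj I J) z).trans hz))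
    (fun x hx => by rw [aN_tbS]; exact le_Xop_single _ c hx)
    (fun y x hy hx => by
      rw [tbS_tens']
      exact (le_Xop_single N _ hx).trans (le_Xop_single (Xop {J} N) c hy))
    (by fun_prop)
    (fun g δ hδ => by
      obtain ⟨x, hx, h⟩ := Xop_single_approx J N (bI I g * c) hδ
      exact ⟨x, hx, by rwa [tbS_tens']⟩)
  rw [Real.sqrt_sq (by linarith), int_tbS] at h
  simp only [aN_tbS] at h
  rwa [← Gop_single, ← Gop_single] at h

end blocks

/-! ### Partitions and the general exchange inequality -/

section parts
variable {d : ℕ}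

lemma IsPartition.sub {S : Finset (Fin d)} {P A : Finset (Finset (Fin d))} (h : IsPartition S P)
    (hA : A ⊆ P) : IsPartition (A.sup id) A :=
  ⟨fun I hI => h.1 I (hA hI), fun I hI I' hI' => h.2.1 I (hA hI) I' (hA hI'), rfl⟩

lemma mem_sup_id {A : Finset (Finset (Fin d))} {l : Fin d} :
    l ∈ A.sup id ↔ ∃ I ∈ A, l ∈ I := by
  simp [Finset.mem_sup]

/-- A subfamily of the blocks of a partition can be replaced by another partition of its union. -/
lemma IsPartition.repl {S : Finset (Fin d)} {A B A' : Finset (Finset (Fin d))}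
    (h : IsPartition S (A ∪ B)) (hAB : Disjoint A B) (hA' : IsPartition (A.sup id) A') :
    Disjoint A' B ∧ IsPartition S (A' ∪ B) := by
  have key : ∀ I ∈ A', ∀ I' ∈ B, Disjoint I I' := by
    intro I hI I' hI'
    rw [Finset.disjoint_left]
    intro l hl hl'
    have h1 : l ∈ A.sup id := by
      rw [← hA'.2.2]; exact mem_sup_id.2 ⟨I, hI, hl⟩
    obtain ⟨I0, hI0, hl0⟩ := mem_sup_id.1 h1
    have hne : I0 ≠ I' := fun e => Finset.disjoint_left.1 hAB hI0 (e ▸ hI')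
    exact Finset.disjoint_left.1 (h.2.1 I0 (Finset.mem_union_left _ hI0) I'
      (Finset.mem_union_right _ hI') hne) hl0 hl'
  refine ⟨?_, ?_, ?_, ?_⟩
  · rw [Finset.disjoint_left]
    intro I hI hI'
    have := key I hI I hI'
    exact (hA'.1 I hI).ne_empty (disjoint_self.1 this)
  · intro I hI
    rcases Finset.mem_union.1 hI with h' | h'
    · exact hA'.1 I h'
    · exact h.1 I (Finset.mem_union_right _ h')
  · intro I hI I' hI' hne
    rcases Finset.mem_union.1 hI with h1 | h1 <;> rcases Finset.mem_union.1 hI' with h2 | h2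
    · exact hA'.2.1 I h1 I' h2 hne
    · exact key I h1 I' h2
    · exact (key I' h2 I h1).symm
    · exact h.2.1 I (Finset.mem_union_right _ h1) I' (Finset.mem_union_right _ h2) hne
  · rw [Finset.sup_union, hA'.2.2, ← Finset.sup_union]; exact h.2.2

/-- Pairs of families that together partition `S`, with at most `k` blocks in total. -/
noncomputable def prs (k : ℕ) (S : Finset (Fin d)) :
    Finset (Finset (Finset (Fin d)) × Finset (Finset (Fin d))) :=
  Finset.univ.filter fun PP => IsPartitionPair S PP.1 PP.2 ∧ PP.1.card + PP.2.card ≤ k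

lemma mem_prs {k : ℕ} {S : Finset (Fin d)}
    {PP : Finset (Finset (Fin d)) × Finset (Finset (Fin d))} :
    PP ∈ prs k S ↔ IsPartitionPair S PP.1 PP.2 ∧ PP.1.card + PP.2.card ≤ k := by
  simp [prs]

/-- The number of pairs of families of subsets of `[d]`. -/
noncomputable def cM (d : ℕ) : ℝ :=
  (Fintype.card (Finset (Finset (Fin d)) × Finset (Finset (Fin d))) : ℝ)

lemma cM_nonneg (d : ℕ) : 0 ≤ cM d := Nat.cast_nonneg _

lemma sum_prs_le {k : ℕ} {S : Finset (Fin d)}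
    {F : Finset (Finset (Finset (Fin d)) × Finset (Finset (Fin d)))}
    {f : Finset (Finset (Fin d)) × Finset (Finset (Fin d)) → ℝ} {r : ℝ}
    (hr : 0 ≤ r) (hF : F ⊆ prs k S) (h : ∀ PP ∈ prs k S, f PP ≤ r) :
    ∑ PP ∈ F, f PP ≤ cM d * r := by
  calc ∑ PP ∈ F, f PP ≤ F.card • r := Finset.sum_le_card_nsmul _ _ _ fun PP hP => h PP (hF hP)
    _ ≤ cM d * r := by
      rw [nsmul_eq_mul]
      exact mul_le_mul_of_nonneg_right (Nat.cast_le.2 (Finset.card_le_univ _)) hr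

variable {n : ℕ}

/-- The deterministic quantity `∑ s^{|P|} sup_{x_P} E N (x_P g_{P'} c)` over all pairs `(P, P')`
partitioning `S` with at most `k` blocks. -/
noncomputable def TT (k : ℕ) (S : Finset (Fin d)) (s : ℝ) (N : Seminorm ℝ (Arr d n))
    (c : Arr d n) : ℝ :=
  ∑ PP ∈ prs k S, s ^ PP.1.card * Xop PP.1 (Gop PP.2 N) c

lemma TT_nonneg (k : ℕ) (S : Finset (Fin d)) {s : ℝ} (hs : 1 ≤ s) (N : Seminorm ℝ (Arr d n))
    (c : Arr d n) : 0 ≤ TT k S s N c :=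
  Finset.sum_nonneg fun _ _ => mul_nonneg (by positivity) (apply_nonneg _ _)

lemma le_TT {k : ℕ} {S : Finset (Fin d)} {s : ℝ} (hs : 1 ≤ s) (N : Seminorm ℝ (Arr d n))
    (c : Arr d n) {P P' : Finset (Finset (Fin d))} (h : IsPartitionPair S P P')
    (hk : P.card + P'.card ≤ k) : s ^ P.card * Xop P (Gop P' N) c ≤ TT k S s N c :=
  Finset.single_le_sum (f := fun PP : Finset (Finset (Fin d)) × Finset (Finset (Fin d)) =>
    s ^ PP.1.card * Xop PP.1 (Gop PP.2 N) c)
    (fun _ _ => mul_nonneg (by positivity) (apply_nonneg _ _))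
    (mem_prs.2 ⟨h, hk⟩ : (P, P') ∈ prs k S)

/-- The exchange inequality for families with at most `k` blocks, with constant `C`: expected
suprema are dominated by suprema of expectations. -/
def BBC (d k : ℕ) (C : ℝ) : Prop :=
  ∀ (n : ℕ) (s : ℝ), 1 ≤ s → ∀ (N : Seminorm ℝ (Arr d n)) (c : Arr d n) (S : Finset (Fin d))
    (G J : Finset (Finset (Fin d))), IsPartitionPair S G J → G.card + J.card ≤ k →
    s ^ J.card * Gop G (Xop J N) c ≤ C * TT k S s N c

lemma BBC.mono {k : ℕ} {C C' : ℝ} (h : BBC d k C) (hC : C ≤ C') : BBC d k C' :=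
  fun n s hs N c S G J h1 h2 => (h n s hs N c S G J h1 h2).trans
    (mul_le_mul_of_nonneg_right hC (TT_nonneg k S hs N c))

/-- The exchange inequality for the blocks `G`, `J`, used inside a supremum over the blocks `P`
and outside an average over the blocks `P'`. -/
lemma BBC.ext {m k : ℕ} {C : ℝ} (hB : BBC d m C) (hC : 0 ≤ C) {s : ℝ} (hs : 1 ≤ s)
    (N : Seminorm ℝ (Arr d n)) (c : Arr d n) {S : Finset (Fin d)}
    {G J P P' : Finset (Finset (Fin d))} (hGJ : Disjoint G J) (hPP : Disjoint P P')
    (hd : Disjoint (G ∪ J) (P ∪ P')) (hS : IsPartition S ((G ∪ J) ∪ (P ∪ P')))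
    (hm : G.card + J.card ≤ m) (hk : P.card + P'.card + m ≤ k) :
    s ^ P.card * (s ^ J.card * Xop P (Gop G (Xop J (Gop P' N))) c) ≤
      C * cM d * TT k S s N c := by
  have hs0 : 0 < s := by linarith
  have hpair : IsPartitionPair ((G ∪ J).sup id) G J :=
    ⟨hGJ, hS.sub Finset.subset_union_left⟩
  have h1 : ∀ c', Gop G (Xop J (Gop P' N)) c' ≤ ∑ PP ∈ prs m ((G ∪ J).sup id),
      (C * s ^ PP.1.card / s ^ J.card) * (Xop PP.1 (Gop PP.2 (Gop P' N))) c' := by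
    intro c'
    have := hB n s hs (Gop P' N) c' _ G J hpair hm
    rw [← le_div_iff₀' (by positivity)] at this
    refine this.trans (le_of_eq ?_)
    rw [TT, Finset.mul_sum, Finset.sum_div]
    exact Finset.sum_congr rfl fun _ _ => by ring
  have h2 := Xop_sum_le (P := P) (fun _ _ => by positivity) h1 c
  calc s ^ P.card * (s ^ J.card * Xop P (Gop G (Xop J (Gop P' N))) c)
      ≤ s ^ P.card * (s ^ J.card * ∑ PP ∈ prs m ((G ∪ J).sup id),
      (C * s ^ PP.1.card / s ^ J.card) * (Xop P (Xop PP.1 (Gop PP.2 (Gop P' N)))) c) := by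
        gcongr
    _ = C * ∑ PP ∈ prs m ((G ∪ J).sup id),
        s ^ P.card * s ^ PP.1.card * (Xop P (Xop PP.1 (Gop PP.2 (Gop P' N)))) c := by
        simp only [Finset.mul_sum]
        exact Finset.sum_congr rfl fun _ _ => by field_simp
    _ ≤ C * (cM d * TT k S s N c) := by
        refine mul_le_mul_of_nonneg_left (sum_prs_le (TT_nonneg k S hs N c)
          (Finset.Subset.refl _) fun PP hP => ?_) hC
        obtain ⟨⟨h3, h4⟩, h5⟩ := mem_prs.1 hP
        obtain ⟨h6, h7⟩ := hS.repl hd h4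
        have e1 : Disjoint P PP.1 := (h6.mono Finset.subset_union_left
          Finset.subset_union_left).symm
        have e2 : Disjoint PP.2 P' := h6.mono Finset.subset_union_right
          Finset.subset_union_right
        have e3 : Disjoint P PP.2 := (h6.mono Finset.subset_union_right
          Finset.subset_union_left).symm
        have e4 : Disjoint PP.1 P' := h6.mono Finset.subset_union_left
          Finset.subset_union_right
        rw [Gop_union e2, ← pow_add, ← Finset.card_union_of_disjoint e1]
        refine (mul_le_mul_of_nonneg_left (le_Xop_union e1 _ c) (by positivity)).trans ?_
        refine le_TT hs N c ⟨?_, ?_⟩ ?_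
        · simp only [Finset.disjoint_union_left, Finset.disjoint_union_right]
          exact ⟨⟨e3, h3⟩, hPP, e4⟩
        · convert h7 using 1
          ext x; simp only [Finset.mem_union]; tauto
        · rw [Finset.card_union_of_disjoint e1, Finset.card_union_of_disjoint e2]; omega
    _ = _ := by ring

/-- The sum of `s^{|J|} E sup_{x_J} N (x_J g_G c)` over the admissible pairs `(G, J)` with
`|J| = j`. -/
noncomputable def Th (k : ℕ) (S : Finset (Fin d)) (s : ℝ) (N : Seminorm ℝ (Arr d n))
    (c : Arr d n) (j : ℕ) : ℝ :=
  ∑ PP ∈ (prs k S).filter (fun PP => PP.2.card = j), s ^ PP.2.card * Gop PP.1 (Xop PP.2 N) c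

lemma Th_nonneg (k : ℕ) (S : Finset (Fin d)) {s : ℝ} (hs : 1 ≤ s) (N : Seminorm ℝ (Arr d n))
    (c : Arr d n) (j : ℕ) : 0 ≤ Th k S s N c j :=
  Finset.sum_nonneg fun _ _ => mul_nonneg (by positivity) (apply_nonneg _ _)

lemma le_Th {k : ℕ} {S : Finset (Fin d)} {s : ℝ} (hs : 1 ≤ s) (N : Seminorm ℝ (Arr d n))
    (c : Arr d n) {G J : Finset (Finset (Fin d))} (h : IsPartitionPair S G J)
    (hk : G.card + J.card ≤ k) : s ^ J.card * Gop G (Xop J N) c ≤ Th k S s N c J.card :=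
  Finset.single_le_sum (f := fun PP : Finset (Finset (Fin d)) × Finset (Finset (Fin d)) =>
    s ^ PP.2.card * Gop PP.1 (Xop PP.2 N) c)
    (fun _ _ => mul_nonneg (by positivity) (apply_nonneg _ _))
    (Finset.mem_filter.2 ⟨mem_prs.2 ⟨h, hk⟩, rfl⟩ :
      (G, J) ∈ (prs k S).filter (fun PP => PP.2.card = J.card))

lemma Th_le {k : ℕ} {S : Finset (Fin d)} {s : ℝ} {N : Seminorm ℝ (Arr d n)}
    {c : Arr d n} {j : ℕ} {r : ℝ} (hr : 0 ≤ r) (h : ∀ G J, IsPartitionPair S G J →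
      G.card + J.card ≤ k → J.card = j → s ^ J.card * Gop G (Xop J N) c ≤ r) :
    Th k S s N c j ≤ cM d * r := by
  calc Th k S s N c j ≤ ((prs k S).filter (fun PP => PP.2.card = j)).card • r := by
        refine Finset.sum_le_card_nsmul _ _ _ fun PP hP => ?_
        obtain ⟨h1, h2⟩ := Finset.mem_filter.1 hP
        obtain ⟨h3, h4⟩ := mem_prs.1 h1
        exact h _ _ h3 h4 h2
    _ ≤ cM d * r := by
      rw [nsmul_eq_mul]
      exact mul_le_mul_of_nonneg_right (Nat.cast_le.2 (Finset.card_le_univ _)) hr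

set_option maxHeartbeats 1000000 in
/-- Two or more suprema: all but one of them are absorbed into the seminorm. The free parameter
`δ` comes from using the inductive inequality with `s / δ` in place of `s`. -/
lemma step_two {k : ℕ} {C : ℝ} (hC : 0 ≤ C) (hB : ∀ m < k, BBC d m C) {δ : ℝ} (hδ : 0 < δ)
    (hδ1 : δ ≤ 1) {s : ℝ} (hs : 1 ≤ s) (N : Seminorm ℝ (Arr d n)) (c : Arr d n)
    {S : Finset (Fin d)} {G J : Finset (Finset (Fin d))} (hGJ : IsPartitionPair S G J)
    (hk : G.card + J.card ≤ k) (hJ : 2 ≤ J.card) :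
    s ^ J.card * Gop G (Xop J N) c ≤ cM d * (δ * C * Th k S s N c (J.card - 1) +
      C * (1 / δ) ^ k * (C * cM d * TT k S s N c)) := by
  have hs0 : 0 < s := by linarith
  obtain ⟨J0, hJ0⟩ : J.Nonempty := Finset.card_pos.1 (by omega)
  obtain ⟨J', hJ'⟩ : ∃ J', J' = J.erase J0 := ⟨_, rfl⟩
  have hn : J0 ∉ J' := by rw [hJ']; exact Finset.notMem_erase _ _
  have hJe : J = {J0} ∪ J' := by
    rw [hJ']; ext x; simp only [Finset.mem_union, Finset.mem_singleton, Finset.mem_erase]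
    constructor
    · intro h; by_cases hx : x = J0 <;> simp [hx, h]
    · rintro (rfl | h); exacts [hJ0, h.2]
  have hdJ : Disjoint {J0} J' := Finset.disjoint_singleton_left.2 hn
  have hc : J.card = J'.card + 1 := by
    rw [hJe, Finset.card_union_of_disjoint hdJ, Finset.card_singleton, add_comm]
  obtain ⟨hd, hS⟩ := hGJ
  subst hJe
  have hd' := Finset.disjoint_union_right.1 hd
  have hS' : IsPartition S ((G ∪ {J0}) ∪ J') := by rwa [Finset.union_assoc]
  have hdd : Disjoint (G ∪ {J0}) J' := Finset.disjoint_union_left.2 ⟨hd'.2, hdJ⟩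
  have hT := TT_nonneg k S hs N c
  have hM := cM_nonneg d
  have hTh := Th_nonneg k S hs N c J'.card
  have hsδ : 1 ≤ s / δ := by rw [le_div_iff₀ hδ]; linarith
  have h1 := hB (G.card + 1) (by omega) n (s / δ) hsδ (Xop J' N) c _ G {J0}
    ⟨hd'.1, hS'.sub Finset.subset_union_left⟩ (by simp)
  rw [Finset.card_singleton, pow_one] at h1
  rw [hc, Nat.add_sub_cancel]
  calc s ^ (J'.card + 1) * Gop G (Xop ({J0} ∪ J') N) c
      ≤ s ^ (J'.card + 1) * Gop G (Xop {J0} (Xop J' N)) c :=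
        mul_le_mul_of_nonneg_left (Gop_mono (Xop_union_le hdJ N) c) (by positivity)
    _ = s ^ J'.card * δ * (s / δ * Gop G (Xop {J0} (Xop J' N)) c) := by
        rw [pow_succ]; field_simp
    _ ≤ s ^ J'.card * δ * (C * TT (G.card + 1) ((G ∪ {J0}).sup id) (s / δ) (Xop J' N) c) := by
        gcongr
    _ = ∑ PP ∈ prs (G.card + 1) ((G ∪ {J0}).sup id), C * (δ * (s / δ) ^ PP.1.card *
          (s ^ J'.card * Xop PP.1 (Gop PP.2 (Xop J' N)) c)) := by
        rw [TT]; simp only [Finset.mul_sum]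
        exact Finset.sum_congr rfl fun _ _ => by ring
    _ ≤ _ := by
        refine sum_prs_le (by positivity) (Finset.Subset.refl _) fun PP hP => ?_
        obtain ⟨⟨h3, h4⟩, h5⟩ := mem_prs.1 hP
        obtain ⟨h6, h7⟩ := hS'.repl hdd h4
        have e1 : Disjoint PP.2 J' := h6.mono_left Finset.subset_union_right
        have e2 : Disjoint PP.1 J' := h6.mono_left Finset.subset_union_left
        rcases Finset.eq_empty_or_nonempty PP.1 with h0 | h0
        · rw [h0, Finset.empty_union] at h7
          rw [h0, Finset.card_empty, pow_zero, Xop_empty]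
          have := le_Th hs N c (k := k) ⟨e1, h7⟩ (by omega)
          have h8 : 0 ≤ C * (1 / δ) ^ k * (C * cM d * TT k S s N c) := by
            have := cM_nonneg d
            positivity
          have h9 := mul_le_mul_of_nonneg_left this (mul_nonneg hδ.le hC)
          linarith
        · have h0' := Finset.card_pos.2 h0
          have h8 := (hB (PP.2.card + J'.card) (by omega)).ext (k := k) (P := PP.1) (P' := ∅) hC hs N c
            e1 (Finset.disjoint_empty_right _)
            (by
              rw [Finset.union_empty, Finset.disjoint_union_left]
              exact ⟨h3.symm, e2.symm⟩)
            (by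
              convert h7 using 1
              ext x; simp only [Finset.mem_union, Finset.notMem_empty]; tauto) le_rfl
            (by simp only [Finset.card_empty]; omega)
          rw [Gop_empty] at h8
          have h9 : δ * (s / δ) ^ PP.1.card ≤ (1 / δ) ^ k * s ^ PP.1.card := by
            rw [div_eq_mul_one_div, mul_pow, mul_comm (s ^ _), ← mul_assoc]
            refine mul_le_mul_of_nonneg_right ?_ (by positivity)
            calc δ * (1 / δ) ^ PP.1.card ≤ 1 * (1 / δ) ^ PP.1.card := by gcongr
              _ ≤ (1 / δ) ^ k := by
                rw [one_mul]
                exact pow_le_pow_right₀ (by rw [le_div_iff₀ hδ]; linarith) (by omega)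
          have h10 : 0 ≤ δ * C * Th k S s N c J'.card := by positivity
          calc C * (δ * (s / δ) ^ PP.1.card * (s ^ J'.card * Xop PP.1 (Gop PP.2 (Xop J' N)) c))
              ≤ C * ((1 / δ) ^ k * s ^ PP.1.card *
                (s ^ J'.card * Xop PP.1 (Gop PP.2 (Xop J' N)) c)) :=
                mul_le_mul_of_nonneg_left (mul_le_mul_of_nonneg_right h9
                  (mul_nonneg (by positivity) (apply_nonneg _ _))) hC
            _ = C * (1 / δ) ^ k * (s ^ PP.1.card *
                (s ^ J'.card * Xop PP.1 (Gop PP.2 (Xop J' N)) c)) := by ring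
            _ ≤ C * (1 / δ) ^ k * (C * cM d * TT k S s N c) :=
                mul_le_mul_of_nonneg_left h8 (by positivity)
            _ ≤ _ := by linarith

end parts

/-! ### Induction for the exchange inequality -/

section exch
variable {d n : ℕ}

set_option maxHeartbeats 1000000 in
/-- One supremum: exchange it with one of the averages by the two-block inequality. -/
lemma step_one {k : ℕ} {C : ℝ} (hC : 0 ≤ C) (hB : ∀ m < k, BBC d m C)
    {s : ℝ} (hs : 1 ≤ s) (N : Seminorm ℝ (Arr d n)) (c : Arr d n)
    {S : Finset (Fin d)} {G J : Finset (Finset (Fin d))} (hGJ : IsPartitionPair S G J)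
    (hk : G.card + J.card ≤ k) (hJ : J.card = 1) (hG : G.Nonempty) :
    s ^ J.card * Gop G (Xop J N) c ≤ 2 * 10 ^ 6 * (Th k S s N c 2 +
      (2 + 2 * (C * cM d)) * TT k S s N c) := by
  have hs0 : 0 < s := by linarith
  obtain ⟨J0, rfl⟩ := Finset.card_eq_one.1 hJ
  obtain ⟨I, hI⟩ := hG
  obtain ⟨G', hG'⟩ : ∃ G', G' = G.erase I := ⟨_, rfl⟩
  have hn : I ∉ G' := by rw [hG']; exact Finset.notMem_erase _ _
  have hGe : G = G' ∪ {I} := by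
    rw [hG']; ext x; simp only [Finset.mem_union, Finset.mem_singleton, Finset.mem_erase]
    constructor
    · intro h; by_cases hx : x = I <;> simp [hx, h]
    · rintro (h | rfl); exacts [h.2, hI]
  have hdI : Disjoint G' {I} := Finset.disjoint_singleton_right.2 hn
  have hc : G.card = G'.card + 1 := by
    rw [hGe, Finset.card_union_of_disjoint hdI, Finset.card_singleton]
  obtain ⟨hd, hS⟩ := hGJ
  subst hGe
  obtain ⟨hd1, hd2⟩ := Finset.disjoint_union_left.1 hd
  rw [Finset.card_singleton] at hk
  have hIne : I.Nonempty := hS.1 I (by simp)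
  have eA : Disjoint ({I} ∪ {J0}) G' := Finset.disjoint_union_left.2 ⟨hdI.symm, hd1.symm⟩
  have eS : IsPartition S (({I} ∪ {J0}) ∪ G') := by
    convert hS using 1
    ext x; simp only [Finset.mem_union]; tauto
  have eM : IsPartition (({I} ∪ {J0} : Finset (Finset (Fin d))).sup id) {I ∪ J0} := by
    refine ⟨?_, ?_, ?_⟩
    · intro K hK
      rw [Finset.mem_singleton.1 hK]; exact hIne.mono Finset.subset_union_left
    · intro K hK K' hK' hne
      exact absurd ((Finset.mem_singleton.1 hK).trans (Finset.mem_singleton.1 hK').symm) hne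
    · rw [Finset.sup_union]; simp
  obtain ⟨eD, eP⟩ := eS.repl eA eM
  have h1 : ∀ c', Gop {I} (Xop {J0} N) c' ≤ ∑ i : Fin 5,
      (![2 * 10 ^ 6 / s, 2 * 10 ^ 6 / s, 2 * 10 ^ 6, 2 * 10 ^ 6, 2 * 10 ^ 6 * s] i) *
      (![Gop {I ∪ J0} N, Gop {J0} (Gop {I} N), Xop {I ∪ J0} N, Xop {J0} (Gop {I} N),
        Xop {I} (Xop {J0} N)] i) c' := by
    intro c'
    have := swap_rule I J0 N c' hs
    rw [← le_div_iff₀' hs0] at this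
    refine this.trans (le_of_eq ?_)
    simp only [Fin.sum_univ_five, Matrix.cons_val]
    field_simp
  have h2 := Gop_sum_le (P := G') h1 c
  simp only [Fin.sum_univ_five, Matrix.cons_val] at h2
  rw [Gop_union eD.symm, Gop_union hd2.symm, Gop_union (Finset.disjoint_union_right.2 ⟨hd1, hdI⟩),
    Gop_union hdI] at h2
  have t1 : Gop (G' ∪ {I ∪ J0}) N c ≤ TT k S s N c := by
    have := le_TT hs N c (k := k) (P := ∅) (P' := G' ∪ {I ∪ J0})
      ⟨Finset.disjoint_empty_left _, by rwa [Finset.empty_union, Finset.union_comm]⟩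
      (by
        have := Finset.card_union_le G' {I ∪ J0}
        simp only [Finset.card_singleton, Finset.card_empty] at this ⊢; omega)
    simpa using this
  have t2 : Gop (G' ∪ ({J0} ∪ {I})) N c ≤ TT k S s N c := by
    have := le_TT hs N c (k := k) (P := ∅) (P' := G' ∪ ({J0} ∪ {I}))
      ⟨Finset.disjoint_empty_left _, by
        rwa [Finset.empty_union, Finset.union_comm {J0}, ← Finset.union_assoc]⟩
      (by
        have := Finset.card_union_le G' ({J0} ∪ {I})
        have := Finset.card_union_le ({J0} : Finset (Finset (Fin d))) {I}
        simp only [Finset.card_singleton, Finset.card_empty] at *; omega)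
    simpa using this
  have t3 : s * Gop G' (Xop {I ∪ J0} N) c ≤ C * cM d * TT k S s N c := by
    have := (hB (G'.card + 1) (by omega)).ext (k := k) (P := ∅) (P' := ∅) hC hs N c
      eD.symm (Finset.disjoint_empty_right _) (by simp)
      (S := S) (by simpa [Finset.union_comm] using eP) (by simp) (by simp; omega)
    simpa using this
  have t4 : s * Gop G' (Xop {J0} (Gop {I} N)) c ≤ C * cM d * TT k S s N c := by
    have := (hB (G'.card + 1) (by omega)).ext (k := k) (P := ∅) (P' := {I}) hC hs N c
      hd1 (Finset.disjoint_empty_left _)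
      (by
        rw [Finset.empty_union, Finset.disjoint_union_left]
        exact ⟨hdI, hd2.symm⟩)
      (S := S) (by
        convert hS using 1
        ext x; simp only [Finset.mem_union, Finset.notMem_empty]; tauto) (by simp)
      (by simp only [Finset.card_singleton, Finset.card_empty]; omega)
    simpa using this
  have t5 : s ^ 2 * Gop G' (Xop {I} (Xop {J0} N)) c ≤ Th k S s N c 2 := by
    have h3 : ({I} ∪ {J0} : Finset (Finset (Fin d))).card = 2 := by
      rw [Finset.card_union_of_disjoint hd2]; simp
    have := le_Th hs N c (k := k) (S := S) (G := G') (J := {I} ∪ {J0})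
      ⟨eA.symm, by rwa [Finset.union_comm]⟩ (by omega)
    rw [h3] at this
    refine le_trans ?_ this
    exact mul_le_mul_of_nonneg_left (Gop_mono (le_Xop_union hd2 N) c) (by positivity)
  rw [Finset.card_singleton, pow_one]
  calc s * Gop (G' ∪ {I}) (Xop {J0} N) c
      ≤ s * _ := mul_le_mul_of_nonneg_left h2 hs0.le
    _ = 2 * 10 ^ 6 * (Gop (G' ∪ {I ∪ J0}) N c + Gop (G' ∪ ({J0} ∪ {I})) N c +
        s * Gop G' (Xop {I ∪ J0} N) c + s * Gop G' (Xop {J0} (Gop {I} N)) c +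
        s ^ 2 * Gop G' (Xop {I} (Xop {J0} N)) c) := by field_simp
    _ ≤ _ := by linarith

/-- The bounds with one and with at least two suprema close up once `δ` is small. -/
lemma absorb {M C A δ D1 D2 T T1 T2 : ℝ} (hC : 0 ≤ C) (hδ : 0 ≤ δ) (hT2 : 0 ≤ T2)
    (hX : M ^ 3 * C * A * δ ≤ 1 / 2) (h1 : T1 ≤ M * (A * (T2 + D1 * T)))
    (h2 : T2 ≤ M * (M * (δ * C * T1 + D2 * T))) :
    T2 ≤ 2 * (M ^ 3 * C * A * δ * D1 + M ^ 2 * D2) * T := by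
  have h4 : M ^ 2 * δ * C * T1 ≤ M ^ 2 * δ * C * (M * (A * (T2 + D1 * T))) :=
    mul_le_mul_of_nonneg_left h1 (by positivity)
  have h5 := mul_le_mul_of_nonneg_right hX hT2
  have h6 : M * (M * (δ * C * T1 + D2 * T)) = M ^ 2 * δ * C * T1 + M ^ 2 * D2 * T := by ring
  have h7 : M ^ 2 * δ * C * (M * (A * (T2 + D1 * T))) =
    M ^ 3 * C * A * δ * T2 + M ^ 3 * C * A * δ * D1 * T := by ring
  linarith

lemma le_aux {A D1 T T2 : ℝ} (hA : 1 ≤ A) (hD : 1 ≤ D1) (hT : 0 ≤ T) (hT2 : 0 ≤ T2) :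
    T ≤ A * (T2 + D1 * T) := by
  have h1 : T ≤ D1 * T := le_mul_of_one_le_left hT hD
  have h2 : T2 + D1 * T ≤ A * (T2 + D1 * T) := le_mul_of_one_le_left (by linarith) hA
  linarith

set_option maxHeartbeats 1000000 in
/-- The exchange inequality: an expected supremum over several blocks is controlled by suprema
of expectations, summed over all pairs of families that partition the same set into at most `k`
blocks. -/
lemma exchange (d k : ℕ) : ∃ C, 0 ≤ C ∧ BBC d k C := by
  induction k using Nat.strong_induction_on with
  | _ k ih =>
  obtain ⟨C, hC, hB⟩ : ∃ C, 0 ≤ C ∧ ∀ m < k, BBC d m C := by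
    choose! D hD0 hD using ih
    refine ⟨∑ m ∈ Finset.range k, D m, Finset.sum_nonneg fun m hm =>
      hD0 m (Finset.mem_range.1 hm), fun m hm => (hD m hm).mono ?_⟩
    exact Finset.single_le_sum (fun i hi => hD0 i (Finset.mem_range.1 hi))
      (Finset.mem_range.2 hm)
  have hM := cM_nonneg d
  have main : ∀ j, ∃ D, 0 ≤ D ∧ ∀ (n : ℕ) (s : ℝ), 1 ≤ s → ∀ (N : Seminorm ℝ (Arr d n))
      (c : Arr d n) (S : Finset (Fin d)), Th k S s N c j ≤ D * TT k S s N c := by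
    intro j
    induction j with
    | zero =>
      refine ⟨cM d, hM, fun n s hs N c S => Th_le (TT_nonneg k S hs N c) ?_⟩
      intro G J h hk hJ
      rw [Finset.card_eq_zero.1 hJ] at h hk ⊢
      have := le_TT hs N c (k := k) (P := ∅) (P' := G)
        ⟨h.1.symm, by rw [Finset.union_comm]; exact h.2⟩ (by simpa using hk)
      simpa using this
    | succ j ihj =>
      rcases Nat.eq_zero_or_pos j with rfl | hj
      · set A : ℝ := 2 * 10 ^ 6 with hA
        set D1 := 2 + 2 * (C * cM d) with hD1
        set δ : ℝ := 1 / (1 + 2 * (cM d ^ 3 * C * A)) with hδ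
        have hA1 : 1 ≤ A := by rw [hA]; norm_num
        have hden : 0 < 1 + 2 * (cM d ^ 3 * C * A) := by positivity
        have hδ0 : 0 < δ := by positivity
        have hX : 0 ≤ cM d ^ 3 * C * A := by positivity
        have hδ1 : δ ≤ 1 := by
          rw [hδ, div_le_one hden]; linarith
        have hδ2 : cM d ^ 3 * C * A * δ ≤ 1 / 2 := by
          rw [hδ, mul_one_div, div_le_iff₀ hden]; linarith
        set D2 := C * (1 / δ) ^ k * (C * cM d) with hD2
        have hD20 : 0 ≤ D2 := by positivity
        have hD10 : 1 ≤ D1 := by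
          have : 0 ≤ C * cM d := by positivity
          linarith
        refine ⟨cM d * (A * (2 * (cM d ^ 3 * C * A * δ * D1 + cM d ^ 2 * D2) + D1)),
          by positivity, fun n s hs N c S => ?_⟩
        have hT := TT_nonneg k S hs N c
        have hT1 := Th_nonneg k S hs N c 1
        have hT2 := Th_nonneg k S hs N c 2
        have h1 : Th k S s N c 1 ≤ cM d * (A * (Th k S s N c 2 + D1 * TT k S s N c)) := by
          refine Th_le (by positivity) fun G J h hk hJ => ?_
          rcases Finset.eq_empty_or_nonempty G with rfl | hG
          · have := le_TT hs N c (k := k) (P := J) (P' := ∅)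
              ⟨h.1.symm, by rw [Finset.union_comm]; exact h.2⟩ (by simpa using hk)
            simp only [Gop_empty] at this ⊢
            exact this.trans (le_aux hA1 hD10 hT hT2)
          · exact step_one hC hB hs N c h hk hJ hG
        have h2 : Th k S s N c 2 ≤ cM d * (cM d * (δ * C * Th k S s N c 1 +
            D2 * TT k S s N c)) := by
          refine Th_le (by positivity) fun G J h hk hJ => ?_
          have := step_two hC hB hδ0 hδ1 hs N c h hk hJ.ge
          rw [hJ] at this
          rw [hJ]
          refine this.trans (le_of_eq ?_)
          rw [hD2]; ring
        have h3 : Th k S s N c 2 ≤ 2 * (cM d ^ 3 * C * A * δ * D1 + cM d ^ 2 * D2) *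
            TT k S s N c :=
          absorb hC hδ0.le hT2 hδ2 h1 h2
        calc Th k S s N c (0 + 1) ≤ _ := h1
          _ ≤ cM d * (A * (2 * (cM d ^ 3 * C * A * δ * D1 + cM d ^ 2 * D2) *
            TT k S s N c + D1 * TT k S s N c)) := by gcongr
          _ = _ := by ring
      · obtain ⟨D, hD, h⟩ := ihj
        refine ⟨cM d * (cM d * (C * D + C * (C * cM d))), by positivity, fun n s hs N c S => ?_⟩
        have hT := TT_nonneg k S hs N c
        rw [mul_assoc]
        refine Th_le (by positivity) fun G J h' hk hJ => ?_
        have h1 := step_two hC hB one_pos le_rfl hs N c h' hk (by omega)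
        rw [hJ, Nat.add_sub_cancel] at h1
        rw [hJ]
        refine h1.trans ?_
        have h2 := h n s hs N c S
        rw [mul_assoc (cM d)]
        refine mul_le_mul_of_nonneg_left ?_ hM
        have h3 := mul_le_mul_of_nonneg_left h2 hC
        rw [div_one, one_pow]
        linarith
  choose D hD0 hD using main
  refine ⟨∑ j ∈ Finset.range (k + 1), D j, Finset.sum_nonneg fun j _ => hD0 j, ?_⟩
  intro n s hs N c S G J h hk
  refine (le_Th hs N c h hk).trans ((hD J.card n s hs N c S).trans ?_)
  refine mul_le_mul_of_nonneg_right ?_ (TT_nonneg k S hs N c)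
  exact Finset.single_le_sum (fun i _ => hD0 i) (Finset.mem_range.2 (by omega))

end exch

/-! ### Moments of decoupled chaoses for general seminorms -/

section mom
variable {d n : ℕ}

/-- The family of singletons of elements of `U`. -/
def sing (U : Finset (Fin d)) : Finset (Finset (Fin d)) := U.image fun l => ({l} : Finset (Fin d))

lemma IsPartition.insert {U : Finset (Fin d)} {P : Finset (Finset (Fin d))} (h : IsPartition U P)
    {l : Fin d} (hl : l ∉ U) : {l} ∉ P ∧ IsPartition (insert l U) ({{l}} ∪ P) := by
  have key : ∀ I ∈ P, l ∉ I := fun I hI hlI => hl (by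
    rw [← h.2.2]; exact mem_sup_id.2 ⟨I, hI, hlI⟩)
  refine ⟨fun h' => key _ h' (by simp), ?_, ?_, ?_⟩
  · intro I hI
    rcases Finset.mem_union.1 hI with h' | h'
    · rw [Finset.mem_singleton.1 h']; exact Finset.singleton_nonempty l
    · exact h.1 I h'
  · intro I hI I' hI' hne
    rcases Finset.mem_union.1 hI with h1 | h1 <;> rcases Finset.mem_union.1 hI' with h2 | h2
    · exact absurd ((Finset.mem_singleton.1 h1).trans (Finset.mem_singleton.1 h2).symm) hne
    · rw [Finset.mem_singleton.1 h1]; exact Finset.disjoint_singleton_left.2 (key _ h2)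
    · rw [Finset.mem_singleton.1 h2]; exact Finset.disjoint_singleton_right.2 (key _ h1)
    · exact h.2.1 I h1 I' h2 hne
  · rw [Finset.sup_union, h.2.2]; simp

/-- `TT` as a seminorm in its array argument. -/
noncomputable def TTS (k : ℕ) (S : Finset (Fin d)) (s : ℝ) (hs : 1 ≤ s)
    (N : Seminorm ℝ (Arr d n)) : Seminorm ℝ (Arr d n) :=
  Seminorm.of (TT k S s N)
    (fun c c' => by
      simp only [TT]
      rw [← Finset.sum_add_distrib]
      refine Finset.sum_le_sum fun PP _ => ?_
      rw [← mul_add]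
      exact mul_le_mul_of_nonneg_left (map_add_le_add _ _ _) (by positivity))
    (fun r c => by
      simp only [TT, Finset.mul_sum, map_smul_eq_mul]
      exact Finset.sum_congr rfl fun _ _ => by ring)

lemma TTS_apply {k : ℕ} {S : Finset (Fin d)} {s : ℝ} (hs : 1 ≤ s)
    (N : Seminorm ℝ (Arr d n)) (c : Arr d n) : TTS k S s hs N c = TT k S s N c := rfl

/-- The seminorm `y ↦ N (y_{i_J} c_i)`. -/
noncomputable def bIS (J : Finset (Fin d)) (N : Seminorm ℝ (Arr d n)) (c : Arr d n) :
    Seminorm ℝ (Bk n J → ℝ) :=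
  Seminorm.of (fun y => N (bI J y * c))
    (fun y y' => by
      have : bI J (y + y') * c = bI J y * c + bI J y' * c := by rw [← add_mul]; rfl
      rw [this]; exact map_add_le_add N _ _)
    (fun r y => by
      have : bI J (r • y) * c = r • (bI J y * c) := by rw [← smul_mul_assoc]; rfl
      rw [this]; exact map_smul_eq_mul N _ _)

lemma bIS_apply (J : Finset (Fin d)) (N : Seminorm ℝ (Arr d n)) (c : Arr d n) (y : Bk n J → ℝ) :
    bIS J N c y = N (bI J y * c) := rfl

/-- A bound on the number of blocks in a pair of families, plus one. -/
noncomputable def kd (d : ℕ) : ℕ := 2 * Fintype.card (Finset (Fin d)) + 1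

lemma card_lt_kd (P P' : Finset (Finset (Fin d))) : P.card + P'.card < kd d := by
  have h1 := Finset.card_le_univ P
  have h2 := Finset.card_le_univ P'
  unfold kd; omega

lemma exchange_le (d k : ℕ) : ∃ C, 0 ≤ C ∧ ∀ m ≤ k, BBC d m C := by
  choose D hD0 hD using exchange d
  refine ⟨∑ m ∈ Finset.range (k + 1), D m, Finset.sum_nonneg fun m _ => hD0 m,
    fun m hm => (hD m).mono ?_⟩
  exact Finset.single_le_sum (fun i _ => hD0 i) (Finset.mem_range.2 (by omega))

/-- Averaging over a new coordinate `l`. -/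
lemma Gop_TTS_le {C : ℝ} (hC : 0 ≤ C) (hB : ∀ m ≤ kd d, BBC d m C) {U : Finset (Fin d)}
    {l : Fin d} (hl : l ∉ U) {s : ℝ} (hs : 1 ≤ s) (N : Seminorm ℝ (Arr d n)) (c : Arr d n) :
    Gop {{l}} (TTS (kd d) U s hs N) c ≤ cM d * (C * cM d * TT (kd d) (insert l U) s N c) := by
  have hM := cM_nonneg d
  have hT := TT_nonneg (kd d) (insert l U) hs N c
  have h1 := Gop_sum_le (P := {{l}}) (N := TTS (kd d) U s hs N) (F := prs (kd d) U)
    (a := fun PP => s ^ PP.1.card) (M := fun PP => Xop PP.1 (Gop PP.2 N)) (fun c' => le_rfl) c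
  refine h1.trans (sum_prs_le (by positivity) (Finset.Subset.refl _) fun PP hP => ?_)
  obtain ⟨⟨h3, h4⟩, h5⟩ := mem_prs.1 hP
  obtain ⟨h6, h7⟩ := h4.insert hl
  rw [Finset.notMem_union] at h6
  have h8 := card_lt_kd PP.1 PP.2
  have := (hB (1 + PP.1.card) (by omega)).ext (k := kd d) (P := ∅) (P' := PP.2) hC hs N c
    (S := insert l U) (G := {{l}}) (J := PP.1)
    (Finset.disjoint_singleton_left.2 h6.1) (Finset.disjoint_empty_left _)
    (by
      rw [Finset.empty_union, Finset.disjoint_union_left]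
      exact ⟨Finset.disjoint_singleton_left.2 h6.2, h3⟩)
    (by rwa [Finset.empty_union, Finset.union_assoc]) (by simp)
    (by simp only [Finset.card_empty]; omega)
  simpa using this

/-- Taking the supremum over a new coordinate `l`. -/
lemma Xop_TTS_le {U : Finset (Fin d)}
    {l : Fin d} (hl : l ∉ U) {s : ℝ} (hs : 1 ≤ s) (N : Seminorm ℝ (Arr d n)) (c : Arr d n) :
    s * Xop {{l}} (TTS (kd d) U s hs N) c ≤ cM d * TT (kd d) (insert l U) s N c := by
  have hT := TT_nonneg (kd d) (insert l U) hs N c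
  have h1 := Xop_sum_le (P := {{l}}) (N := TTS (kd d) U s hs N) (F := prs (kd d) U)
    (a := fun PP => s ^ PP.1.card) (M := fun PP => Xop PP.1 (Gop PP.2 N))
    (fun _ _ => by positivity) (fun c' => le_rfl) c
  refine (mul_le_mul_of_nonneg_left h1 (by linarith)).trans ?_
  rw [Finset.mul_sum]
  refine sum_prs_le hT (Finset.Subset.refl _) fun PP hP => ?_
  obtain ⟨⟨h3, h4⟩, h5⟩ := mem_prs.1 hP
  obtain ⟨h6, h7⟩ := h4.insert hl
  rw [Finset.notMem_union] at h6
  have h8 : Disjoint {{l}} PP.1 := Finset.disjoint_singleton_left.2 h6.1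
  have h9 := le_TT hs N c (k := kd d) (P := {{l}} ∪ PP.1) (P' := PP.2) (S := insert l U)
    ⟨Finset.disjoint_union_left.2 ⟨Finset.disjoint_singleton_left.2 h6.2, h3⟩,
      by rwa [Finset.union_assoc]⟩ (card_lt_kd _ _).le
  rw [Finset.card_union_of_disjoint h8, Finset.card_singleton, pow_add, pow_one, mul_assoc] at h9
  refine le_trans ?_ h9
  exact mul_le_mul_of_nonneg_left (mul_le_mul_of_nonneg_left (le_Xop_union h8 _ c)
    (by positivity)) (by linarith)

/-- Moment bound for the decoupled chaos over the coordinates in `U`, by adding one coordinate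
at a time and using Gaussian concentration in that coordinate. -/
lemma chaos_moment (U : Finset (Fin d)) : ∃ C, 0 ≤ C ∧ ∀ (n : ℕ) (q : ℝ), 1 ≤ q →
    ∀ (N : Seminorm ℝ (Arr d n)) (c : Arr d n),
    ∫ ω, N (mB (sing U) ω * c) ^ q ∂gam (GIdx d n) ≤ (C * TT (kd d) U √q N c) ^ q := by
  obtain ⟨B, hB0, hB⟩ := exchange_le d (kd d)
  have hM := cM_nonneg d
  induction U using Finset.induction_on with
  | empty =>
    refine ⟨1, zero_le_one, fun n q hq N c => ?_⟩
    have h1 := le_TT (Real.one_le_sqrt.2 hq) N c (k := kd d) (P := ∅) (P' := ∅) (S := ∅)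
      ⟨by simp, by simp, by simp, by simp⟩ (card_lt_kd _ _).le
    simp only [Finset.card_empty, pow_zero, one_mul, Gop_empty, Xop_empty] at h1
    have h2 : sing (∅ : Finset (Fin d)) = ∅ := rfl
    simp only [h2, mB_empty, one_mul, integral_const, probReal_univ, smul_eq_mul]
    exact Real.rpow_le_rpow (apply_nonneg _ _) h1 (by linarith)
  | insert l U hl ih =>
    obtain ⟨C, hC, h⟩ := ih
    refine ⟨C * (2 * (cM d * (B * cM d) + 4 * cM d)), by positivity, fun n q hq N c => ?_⟩
    have hq0 : 0 ≤ q := by linarith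
    have hs : 1 ≤ √q := Real.one_le_sqrt.2 hq
    have h1 : sing (insert l U) = {{l}} ∪ sing U := by
      rw [sing, Finset.image_insert, Finset.insert_eq]; rfl
    have h2 : Disjoint {{l}} (sing U) := by
      rw [Finset.disjoint_singleton_left, sing, Finset.mem_image]
      rintro ⟨l', hl', h'⟩
      rw [Finset.singleton_inj] at h'
      exact hl (h' ▸ hl')
    have h3 := int_mB_union h2 (f := fun a : Arr d n => N (a * c) ^ q) (by fun_prop (disch := assumption))
    rw [h1, h3]
    set M := TTS (kd d) U √q hs N with hMd
    have h4 := int_mB_single (n := n) {l} (f := fun a => (C * M (a * c)) ^ q)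
      (by fun_prop (disch := assumption))
    have h5 := conc_moment (seminorm_supFun (bIS {l} M c) (σ := Xop {{l}} M c)
      fun z hz => le_Xop_single M c hz) (fun x => apply_nonneg _ _) hq
    have h6 : ∫ y, bIS {l} M c y ∂gam (Bk n {l}) = Gop {{l}} M c :=
      (Gop_single {l} M c).symm
    rw [h6] at h5
    have h7 := Gop_TTS_le hB0 hB hl hs N c
    have h8 := Xop_TTS_le hl hs N c
    rw [← hMd] at h7 h8
    set T := TT (kd d) (insert l U) √q N c
    have h9 : 0 ≤ Gop {{l}} M c := apply_nonneg _ _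
    have h10 : 0 ≤ √q * Xop {{l}} M c := mul_nonneg (by positivity) (apply_nonneg _ _)
    calc ∫ ω, ∫ ω', N (mB (sing U) ω' * mB {{l}} ω * c) ^ q ∂gam (GIdx d n) ∂gam (GIdx d n)
        ≤ ∫ ω, (C * M (mB {{l}} ω * c)) ^ q ∂gam (GIdx d n) := by
          refine integral_mono_of_nonneg (Filter.Eventually.of_forall fun ω =>
            integral_nonneg fun ω' => Real.rpow_nonneg (apply_nonneg _ _) _)
            (PG.integrable (by fun_prop (disch := assumption)))
            (Filter.Eventually.of_forall fun ω => ?_)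
          have := h n q hq N (mB {{l}} ω * c)
          simp only [← mul_assoc] at this
          simpa only [hMd, TTS_apply, mul_assoc] using this
      _ = ∫ y, (C * bIS {l} M c y) ^ q ∂gam (Bk n {l}) := h4
      _ = C ^ q * ∫ y, bIS {l} M c y ^ q ∂gam (Bk n {l}) := by
          rw [← integral_const_mul (C ^ q)]
          exact integral_congr_ae (Filter.Eventually.of_forall fun y =>
            Real.mul_rpow hC (apply_nonneg _ _))
      _ ≤ C ^ q * (2 * (Gop {{l}} M c + 4 * (√q * Xop {{l}} M c))) ^ q := by gcongr
      _ = (C * (2 * (Gop {{l}} M c + 4 * (√q * Xop {{l}} M c)))) ^ q := by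
          rw [Real.mul_rpow hC (by positivity)]
      _ ≤ _ := by
          refine Real.rpow_le_rpow (by positivity) ?_ hq0
          rw [mul_assoc]
          refine mul_le_mul_of_nonneg_left ?_ hC
          linarith

end mom

/-! ### Splitting blocks with property (α+) -/

section alpha
variable {d n : ℕ} {E : Type*} [NormedAddCommGroup E] [NormedSpace ℝ E]

/-- The seminorm `c ↦ ‖∑ c_i a_i‖`. -/
noncomputable def NA (A : (Fin d → Fin n) → E) : Seminorm ℝ (Arr d n) :=
  Seminorm.of (fun c => ‖∑ i, c i • A i‖)
    (fun c c' => by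
      simp only [Pi.add_apply, add_smul, Finset.sum_add_distrib]
      exact norm_add_le _ _)
    (fun r c => by
      simp only [Pi.smul_apply, smul_assoc, ← Finset.smul_sum]
      exact norm_smul r _)

lemma NA_apply (A : (Fin d → Fin n) → E) (c : Arr d n) : NA A c = ‖∑ i, c i • A i‖ := rfl

lemma sum_fibers {X : Type*} [Fintype X] {m : ℕ} (f g : X → Fin m) (a : X → E)
    (w : Fin m → Fin m → ℝ) :
    ∑ i, ∑ j, w i j • (∑ x, if f x = i ∧ g x = j then a x else 0) = ∑ x, w (f x) (g x) • a x := by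
  simp only [Finset.smul_sum]
  calc ∑ i, ∑ j, ∑ x, w i j • (if f x = i ∧ g x = j then a x else 0)
      = ∑ i, ∑ x, ∑ j, w i j • (if f x = i ∧ g x = j then a x else 0) :=
        Finset.sum_congr rfl fun i _ => Finset.sum_comm
    _ = ∑ x, ∑ i, ∑ j, w i j • (if f x = i ∧ g x = j then a x else 0) := Finset.sum_comm
    _ = _ := Finset.sum_congr rfl fun x _ => by
        simp only [ite_and, smul_ite, smul_zero, Finset.sum_ite_irrel, Finset.sum_const_zero,
          Finset.sum_ite_eq, Finset.mem_univ, if_true]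

/-- Property (α+) splits a Gaussian block `I ∪ J` into independent blocks `I` and `J`. -/
lemma alpha_rule {K : ℝ} (hK : GaussAlphaPlus E K) (A : (Fin d → Fin n) → E) (c : Arr d n)
    (I J : Finset (Fin d)) :
    Gop {I ∪ J} (NA A) c ≤ K * Gop {I} (Gop {J} (NA A)) c := by
  -- both blocks of multi-indices embed into a common `Fin m`
  set m := max (Fintype.card (Bk n I)) (Fintype.card (Bk n J)) with hm
  obtain ⟨eI⟩ : Nonempty (Bk n I ↪ Fin m) :=
    Function.Embedding.nonempty_of_card_le (by rw [Fintype.card_fin]; exact le_max_left _ _)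
  obtain ⟨eJ⟩ : Nonempty (Bk n J ↪ Fin m) :=
    Function.Embedding.nonempty_of_card_le (by rw [Fintype.card_fin]; exact le_max_right _ _)
  set f : (Fin d → Fin n) → Fin m := fun i => eI fun l => i l.1 with hf
  set g : (Fin d → Fin n) → Fin m := fun i => eJ fun l => i l.1 with hg
  have h := hK m fun a b => ∑ x, if f x = a ∧ g x = b then c x • A x else 0
  have e1 : ∀ ω : Fin m × Fin m → ℝ, ∑ i, ∑ j, ω (i, j) •
      (∑ x, if f x = i ∧ g x = j then c x • A x else 0) = ∑ x, ω (f x, g x) • c x • A x :=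
    fun ω => sum_fibers f g (fun x => c x • A x) fun i j => ω (i, j)
  have e2 : ∀ ω : (Fin m → ℝ) × (Fin m → ℝ), ∑ i, ∑ j, (ω.1 i * ω.2 j) •
      (∑ x, if f x = i ∧ g x = j then c x • A x else 0) =
        ∑ x, (ω.1 (f x) * ω.2 (g x)) • c x • A x :=
    fun ω => sum_fibers f g (fun x => c x • A x) fun i j => ω.1 i * ω.2 j
  simp only [e1, e2] at h
  have hinj : Function.Injective (fun v : Bk n (I ∪ J) => (eI (spl I J v).1, eJ (spl I J v).2)) := by
    intro v w hvw
    simp only [Prod.mk.injEq, EmbeddingLike.apply_eq_iff_eq] at hvw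
    exact spl_inj I J (Prod.ext hvw.1 hvw.2)
  have l1 := MeasurePreserving_integral (gam_pull hinj)
    (g := fun y => NA A (bI (I ∪ J) y * c)) (PG.continuous (by fun_prop)).aestronglyMeasurable
  have l2 := MeasurePreserving_integral
    ((gam_pull eI.injective).prod (gam_pull eJ.injective))
    (g := fun y => NA A (bI J y.2 * (bI I y.1 * c)))
    (PG.continuous (by fun_prop)).aestronglyMeasurable
  have l3 := integral_prod (μ := gam (Bk n I)) (ν := gam (Bk n J))
    (fun y => NA A (bI J y.2 * (bI I y.1 * c))) (PG.integrable (by fun_prop))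
  rw [Gop_single (I ∪ J), ← l1]
  have l4 : Gop {I} (Gop {J} (NA A)) c = ∫ x, ∫ y, NA A (bI J y * (bI I x * c))
      ∂gam (Bk n J) ∂gam (Bk n I) := by
    rw [Gop_single]; simp only [Gop_single]
  rw [l4, ← l3, ← l2]
  refine le_trans (le_of_eq ?_) (h.trans (le_of_eq ?_))
  · refine integral_congr_ae (Filter.Eventually.of_forall fun ω => ?_)
    simp only [NA_apply, Pi.mul_apply, mul_smul]
    rfl
  · congr 1
    refine integral_congr_ae (Filter.Eventually.of_forall fun ω => ?_)
    simp only [NA_apply, Pi.mul_apply, ← mul_assoc]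
    congr 1
    refine Finset.sum_congr rfl fun i _ => ?_
    rw [smul_smul]
    congr 1
    simp only [bI, Prod.map, hf, hg]
    ring

lemma notMem_of_disj {Q : Finset (Finset (Fin d))} {I I' : Finset (Fin d)}
    (h : ∀ J ∈ Q, Disjoint J I) (hI : I' ⊆ I) (hne : I'.Nonempty) : I' ∉ Q := fun hI' =>
  hne.ne_empty (disjoint_self.1 ((h I' hI').mono_right hI))

/-- One block is replaced by singletons at the cost of a factor `K` per split. -/
lemma split_block {K : ℝ} (hK1 : 1 ≤ K) (hK : GaussAlphaPlus E K) (A : (Fin d → Fin n) → E)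
    (c : Arr d n) {I : Finset (Fin d)} (hI : I.Nonempty) (Q : Finset (Finset (Fin d)))
    (hQ : ∀ J ∈ Q, Disjoint J I) :
    Gop (Q ∪ {I}) (NA A) c ≤ K ^ (I.card - 1) * Gop (Q ∪ sing I) (NA A) c := by
  induction I using Finset.induction_on generalizing Q with
  | empty => exact absurd hI Finset.not_nonempty_empty
  | insert l I hl ih =>
    rcases Finset.eq_empty_or_nonempty I with rfl | hI'
    · have : sing (insert l (∅ : Finset (Fin d))) = {insert l ∅} := by simp [sing]
      rw [this]; simp
    · have h0 : insert l I = {l} ∪ I := by rw [Finset.insert_eq]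
      have d1 : Disjoint Q {insert l I} := Finset.disjoint_singleton_right.2
        (notMem_of_disj hQ (Finset.Subset.refl _) hI)
      have d2 : {l} ∉ Q := notMem_of_disj hQ (by simp) (by simp)
      have d3 : I ∉ Q := notMem_of_disj hQ (Finset.subset_insert _ _) hI'
      have d4 : ({l} : Finset (Fin d)) ≠ I := by rintro rfl; exact hl (by simp)
      have h1 : Gop (Q ∪ {insert l I}) (NA A) c ≤ K * Gop ((Q ∪ {{l}}) ∪ {I}) (NA A) c := by
        have := Gop_sum_le (P := Q) (F := {()}) (a := fun _ => K)
          (M := fun _ => Gop {{l}} (Gop {I} (NA A))) (N := Gop {insert l I} (NA A))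
          (fun c' => by
            rw [Finset.sum_singleton, h0]
            exact alpha_rule hK A c' {l} I) c
        rw [Finset.sum_singleton, Gop_union d1, Gop_union (Finset.disjoint_singleton.2 d4),
          Gop_union (Finset.disjoint_union_right.2 ⟨Finset.disjoint_singleton_right.2 d2,
            Finset.disjoint_singleton_right.2 d3⟩), ← Finset.union_assoc] at this
        exact this
      have h2 := ih hI' (Q ∪ {{l}}) (fun J hJ => by
        rcases Finset.mem_union.1 hJ with h | h
        · exact (hQ J h).mono_right (Finset.subset_insert _ _)
        · rw [Finset.mem_singleton.1 h]; exact Finset.disjoint_singleton_left.2 hl)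
      have h3 : Q ∪ {{l}} ∪ sing I = Q ∪ sing (insert l I) := by
        rw [Finset.union_assoc]; congr 1
        simp [sing, Finset.image_insert]
      have h4 : (insert l I).card - 1 = (I.card - 1) + 1 := by
        rw [Finset.card_insert_of_notMem hl]
        have := Finset.card_pos.2 hI'
        omega
      rw [h3] at h2
      rw [h4, pow_succ']
      calc _ ≤ _ := h1
        _ ≤ K * _ := mul_le_mul_of_nonneg_left h2 (by linarith)
        _ = _ := by ring

/-- All blocks of a partition are replaced by singletons, using at most `|⋃ P| - 1` splits. -/
lemma split_family {K : ℝ} (hK1 : 1 ≤ K) (hK : GaussAlphaPlus E K) (A : (Fin d → Fin n) → E)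
    (c : Arr d n) (P : Finset (Finset (Fin d))) (hP : IsPartition (P.sup id) P)
    (Q : Finset (Finset (Fin d))) (hQ : ∀ J ∈ Q, Disjoint J (P.sup id)) :
    Gop (Q ∪ P) (NA A) c ≤ K ^ ((P.sup id).card - 1) * Gop (Q ∪ sing (P.sup id)) (NA A) c := by
  induction P using Finset.induction_on generalizing Q with
  | empty => simp [sing]
  | insert I P hI ih =>
    have hP' : IsPartition (P.sup id) P := hP.sub (Finset.subset_insert _ _)
    have hIne : I.Nonempty := hP.1 I (Finset.mem_insert_self _ _)
    have hs : (insert I P).sup id = I ∪ P.sup id := by simp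
    have hd : Disjoint I (P.sup id) := by
      rw [Finset.disjoint_left]
      intro l hl hl'
      obtain ⟨I', hI', hl2⟩ := mem_sup_id.1 hl'
      have hne : I ≠ I' := fun e => hI (e ▸ hI')
      exact Finset.disjoint_left.1 (hP.2.1 I (Finset.mem_insert_self _ _) I'
        (Finset.mem_insert_of_mem hI') hne) hl hl2
    rw [hs] at hQ ⊢
    have h1 := split_block hK1 hK A c hIne (Q ∪ P) (fun J hJ => by
      rcases Finset.mem_union.1 hJ with h | h
      · exact (hQ J h).mono_right Finset.subset_union_left
      · exact (hd.mono_right (Finset.le_sup (f := id) h)).symm)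
    have h2 := ih hP' (Q ∪ sing I) (fun J hJ => by
      rcases Finset.mem_union.1 hJ with h | h
      · exact (hQ J h).mono_right Finset.subset_union_right
      · obtain ⟨l, hl, rfl⟩ := Finset.mem_image.1 h
        exact Finset.disjoint_singleton_left.2 (Finset.disjoint_left.1 hd hl))
    have e1 : Q ∪ P ∪ {I} = Q ∪ insert I P := by
      ext x; simp only [Finset.mem_union, Finset.mem_insert, Finset.mem_singleton]; tauto
    have e2 : Q ∪ P ∪ sing I = Q ∪ sing I ∪ P := by
      ext x; simp only [Finset.mem_union]; tauto
    have e3 : Q ∪ sing I ∪ sing (P.sup id) = Q ∪ sing (I ∪ P.sup id) := by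
      rw [Finset.union_assoc]; congr 1
      simp [sing, Finset.image_union]
    rw [e1, e2] at h1
    rw [e3] at h2
    have hc := Finset.card_union_of_disjoint hd
    have hpos := Finset.card_pos.2 hIne
    calc _ ≤ _ := h1
      _ ≤ K ^ (I.card - 1) * _ := mul_le_mul_of_nonneg_left h2 (by positivity)
      _ = K ^ ((I.card - 1) + ((P.sup id).card - 1)) * Gop (Q ∪ sing (I ∪ P.sup id)) (NA A) c := by
        rw [pow_add]; ring
      _ ≤ _ := mul_le_mul_of_nonneg_right (pow_le_pow_right₀ hK1 (by omega)) (apply_nonneg _ _)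

end alpha

/-! ### Moment and tail bounds -/

section final
variable {d n : ℕ} {E : Type*} [NormedAddCommGroup E] [NormedSpace ℝ E]

lemma chaosNorm_eq (A : (Fin d → Fin n) → E) (P' P : Finset (Finset (Fin d))) :
    chaosNorm A P' P = Xop P (Gop P' (NA A)) 1 := by
  have h : ∀ ω0 : GIdx d n → ℝ, Gop P' (NA A) (mB P ω0 * 1) =
      ∫ ω : GIdx d n → ℝ, ‖∑ i : Fin d → Fin n,
        ((∏ I ∈ P, ω0 ⟨I, fun l => i l.1⟩) * ∏ J ∈ P', ω ⟨J, fun l => i l.1⟩) • A i‖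
          ∂ gam (GIdx d n) := by
    intro ω0
    rw [Gop_apply]
    simp only [NA_apply, mul_one, Pi.mul_apply, mB]
    simp only [mul_comm]
  change sSup _ = sSup (Set.range fun ω : bl (n := n) P => Gop P' (NA A) (mB P ω.1 * 1))
  congr 1
  ext r
  simp only [Set.mem_range]
  constructor
  · rintro ⟨x, hx, rfl⟩
    exact ⟨⟨fun a => x a.1 a.2, hx⟩, h _⟩
  · rintro ⟨⟨ω0, hω⟩, rfl⟩
    exact ⟨fun I v => ω0 ⟨I, v⟩, hω, h _⟩

lemma tNorm_eq (A : (Fin d → Fin n) → E) (J : Finset (Fin d)) (P : Finset (Finset (Fin d))) :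
    tNorm A J P = Xop P (Gop (sing (Finset.univ \ J)) (NA A)) 1 := chaosNorm_eq A _ P

lemma tNorm_nonneg (A : (Fin d → Fin n) → E) (J : Finset (Fin d))
    (P : Finset (Finset (Fin d))) : 0 ≤ tNorm A J P := by
  rw [tNorm_eq]; exact apply_nonneg _ _

lemma PG_decChaos (A : (Fin d → Fin n) → E) : PG (fun ω => ‖decChaos A ω‖) := by
  have : (fun ω => ‖decChaos A ω‖) = fun ω => NA A (fun i => ∏ k, ω (k, i k)) := rfl
  rw [this]; fun_prop

lemma int_decChaos (A : (Fin d → Fin n) → E) {f : ℝ → ℝ} (hf : Continuous f) :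
    ∫ ω, f (NA A (mB (sing Finset.univ) ω * 1)) ∂gam (GIdx d n) =
      ∫ ω, f ‖decChaos A ω‖ ∂gam (Fin d × Fin n) := by
  have hinj : Function.Injective
      (fun a : Fin d × Fin n => (⟨{a.1}, fun _ => a.2⟩ : GIdx d n)) := by
    rintro ⟨k, v⟩ ⟨k', v'⟩ h
    obtain ⟨h1, h2⟩ := Sigma.mk.inj_iff.1 h
    obtain rfl := Finset.singleton_injective h1
    have h3 := congrFun (eq_of_heq h2) ⟨k, by simp⟩
    exact Prod.ext rfl h3
  rw [← MeasurePreserving_integral (gam_pull hinj) (g := fun ω => f ‖decChaos A ω‖)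
    (hf.comp (PG_decChaos A).continuous).aestronglyMeasurable]
  refine integral_congr_ae (Filter.Eventually.of_forall fun ω => ?_)
  simp only [NA_apply, decChaos, mul_one]
  congr 2
  refine Finset.sum_congr rfl fun i _ => ?_
  congr 1
  rw [mB, sing, Finset.prod_image fun x _ y _ h => Finset.singleton_injective h]
  refine Finset.prod_congr rfl fun k _ => ?_
  congr 2
  ext l
  rw [Finset.mem_singleton.1 l.2]

/-- Property (α+) turns every term of `TT` into one of the norms `tNorm`. -/
lemma TT_le {K : ℝ} (hK1 : 1 ≤ K) (hK : GaussAlphaPlus E K) (A : (Fin d → Fin n) → E)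
    {p : ℝ} (hp : 1 ≤ p) :
    TT (kd d) Finset.univ √p (NA A) 1 ≤ cM d * (K ^ (d - 1) *
      ∑ J : Finset (Fin d), ∑ P ∈ partitionsOf J, p ^ ((P.card : ℝ) / 2) * tNorm A J P) := by
  have hp0 : 0 ≤ p := by linarith
  have hnn : ∀ (J : Finset (Fin d)) (P : Finset (Finset (Fin d))),
      0 ≤ p ^ ((P.card : ℝ) / 2) * tNorm A J P :=
    fun J P => mul_nonneg (Real.rpow_nonneg hp0 _) (tNorm_nonneg A J P)
  refine sum_prs_le (mul_nonneg (by positivity) (Finset.sum_nonneg fun J _ =>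
    Finset.sum_nonneg fun P _ => hnn J P)) (Finset.Subset.refl _) fun PP hP => ?_
  obtain ⟨⟨h3, h4⟩, h5⟩ := mem_prs.1 hP
  have hP1 : IsPartition (PP.1.sup id) PP.1 := h4.sub Finset.subset_union_left
  have hP2 : IsPartition (PP.2.sup id) PP.2 := h4.sub Finset.subset_union_right
  have hc : PP.2.sup id = Finset.univ \ PP.1.sup id := by
    have hu : PP.1.sup id ∪ PP.2.sup id = Finset.univ := by
      rw [← h4.2.2, Finset.sup_union]; rfl
    have hd : Disjoint (PP.1.sup id) (PP.2.sup id) := by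
      rw [Finset.disjoint_left]
      intro l hl hl'
      obtain ⟨I, hI, hl1⟩ := mem_sup_id.1 hl
      obtain ⟨I', hI', hl2⟩ := mem_sup_id.1 hl'
      have hne : I ≠ I' := fun e => Finset.disjoint_left.1 h3 hI (e ▸ hI')
      exact Finset.disjoint_left.1 (h4.2.1 I (Finset.mem_union_left _ hI) I'
        (Finset.mem_union_right _ hI') hne) hl1 hl2
    rw [← hu, Finset.union_sdiff_cancel_left hd]
  have h6 : ∀ c, Gop PP.2 (NA A) c ≤ ∑ _u ∈ {()}, K ^ (d - 1) *
      Gop (sing (Finset.univ \ PP.1.sup id)) (NA A) c := fun c => by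
    have := split_family hK1 hK A c PP.2 hP2 ∅ (by simp)
    rw [Finset.empty_union, Finset.empty_union, hc] at this
    rw [Finset.sum_singleton]
    refine this.trans (mul_le_mul_of_nonneg_right (pow_le_pow_right₀ hK1 ?_) (apply_nonneg _ _))
    have := Finset.card_le_univ (Finset.univ \ PP.1.sup id)
    rw [Fintype.card_fin] at this
    omega
  have h7 := Xop_sum_le (P := PP.1) (fun _ _ => by positivity) h6 1
  rw [Finset.sum_singleton, ← tNorm_eq] at h7
  have h8 : √p ^ PP.1.card = p ^ ((PP.1.card : ℝ) / 2) := by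
    rw [Real.sqrt_eq_rpow, ← Real.rpow_natCast, ← Real.rpow_mul hp0]
    congr 1; ring
  have h9 : p ^ ((PP.1.card : ℝ) / 2) * tNorm A (PP.1.sup id) PP.1 ≤
      ∑ J : Finset (Fin d), ∑ P ∈ partitionsOf J, p ^ ((P.card : ℝ) / 2) * tNorm A J P := by
    refine le_trans ?_ (Finset.single_le_sum (f := fun J : Finset (Fin d) =>
      ∑ P ∈ partitionsOf J, p ^ ((P.card : ℝ) / 2) * tNorm A J P)
      (fun J _ => Finset.sum_nonneg fun P _ => hnn J P) (Finset.mem_univ (PP.1.sup id)))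
    exact Finset.single_le_sum (f := fun P : Finset (Finset (Fin d)) =>
      p ^ ((P.card : ℝ) / 2) * tNorm A (PP.1.sup id) P) (fun P _ => hnn _ P)
      (by simp only [partitionsOf, Finset.mem_filter, Finset.mem_univ, true_and]; exact hP1)
  calc √p ^ PP.1.card * Xop PP.1 (Gop PP.2 (NA A)) 1
      ≤ √p ^ PP.1.card * (K ^ (d - 1) * tNorm A (PP.1.sup id) PP.1) :=
        mul_le_mul_of_nonneg_left h7 (by positivity)
    _ = K ^ (d - 1) * (p ^ ((PP.1.card : ℝ) / 2) * tNorm A (PP.1.sup id) PP.1) := by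
        rw [h8]; ring
    _ ≤ _ := mul_le_mul_of_nonneg_left h9 (by positivity)

/-- The moment bound, part (1) of the theorem. -/
lemma momP_bound (d : ℕ) : ∃ C : ℝ, 0 ≤ C ∧
      ∀ (n : ℕ) (E : Type*) [NormedAddCommGroup E] [NormedSpace ℝ E]
        (K : ℝ), 1 ≤ K → GaussAlphaPlus E K → ∀ A : (Fin d → Fin n) → E, ∀ p : ℝ, 1 ≤ p →
          momP A p ≤ C * K ^ (d - 1) *
            ∑ J : Finset (Fin d), ∑ P ∈ partitionsOf J,
              p ^ ((P.card : ℝ) / 2) * tNorm A J P := by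
  obtain ⟨C, hC, h⟩ := chaos_moment (Finset.univ : Finset (Fin d))
  refine ⟨C * cM d, mul_nonneg hC (cM_nonneg d), ?_⟩
  intro n E _ _ K hK1 hK A p hp
  have hp0 : 0 < p := by linarith
  have h1 := h n p hp (NA A) 1
  rw [int_decChaos A (f := fun x => x ^ p) (Real.continuous_rpow_const hp0.le)] at h1
  have hT := TT_nonneg (kd d) Finset.univ (Real.one_le_sqrt.2 hp) (NA A) 1
  have h2 : momP A p ≤ C * TT (kd d) Finset.univ √p (NA A) 1 := by
    rw [momP, one_div, Real.rpow_inv_le_iff_of_pos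
      (integral_nonneg fun _ => Real.rpow_nonneg (norm_nonneg _) _) (by positivity) hp0]
    exact h1
  refine h2.trans ?_
  have h3 := mul_le_mul_of_nonneg_left (TT_le hK1 hK A hp) hC
  refine h3.trans (le_of_eq (by ring))

lemma tNorm_empty (A : (Fin d → Fin n) → E) :
    tNorm A ∅ ∅ = ∫ ω, ‖decChaos A ω‖ ∂gam (Fin d × Fin n) := by
  rw [tNorm_eq, Xop_empty, Finset.sdiff_empty, Gop_apply]
  exact int_decChaos A (f := fun x => x) continuous_id

lemma partitionsOf_empty {P : Finset (Finset (Fin d))} (h : P ∈ partitionsOf ∅) : P = ∅ := by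
  simp only [partitionsOf, Finset.mem_filter, Finset.mem_univ, true_and] at h
  by_contra hne
  obtain ⟨I, hI⟩ := Finset.nonempty_iff_ne_empty.2 hne
  obtain ⟨l, hl⟩ := h.1 I hI
  have : l ∈ (∅ : Finset (Fin d)) := by rw [← h.2.2]; exact mem_sup_id.2 ⟨I, hI, hl⟩
  simp at this

lemma partitionsOf_nonempty {J : Finset (Fin d)} (hJ : J.Nonempty)
    {P : Finset (Finset (Fin d))} (h : P ∈ partitionsOf J) : 1 ≤ P.card := by
  simp only [partitionsOf, Finset.mem_filter, Finset.mem_univ, true_and] at h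
  obtain ⟨l, hl⟩ := hJ
  rw [← h.2.2] at hl
  obtain ⟨I, hI, -⟩ := mem_sup_id.1 hl
  exact Finset.card_pos.2 ⟨I, hI⟩

/-- Markov's inequality for a `p`-th moment bounded by `t / 2`. -/
lemma markov_half (A : (Fin d → Fin n) → E) {p t : ℝ} (hp : 0 < p) (ht : 0 < t)
    (h : momP A p ≤ t / 2) :
    (_root_.stdGaussian (Fin d × Fin n) {ω | t ≤ ‖decChaos A ω‖}).toReal ≤ Real.exp (-(p / 2)) := by
  have hpg := PG_decChaos A
  have hp0 : 0 ≤ p := hp.le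
  have hpow : Integrable (fun ω => ‖decChaos A ω‖ ^ p) (gam (Fin d × Fin n)) :=
    PG.integrable (by fun_prop (disch := assumption))
  have h1 := mul_meas_ge_le_integral_of_nonneg (μ := gam (Fin d × Fin n))
    (f := fun ω => ‖decChaos A ω‖ ^ p)
    (Filter.Eventually.of_forall fun _ => Real.rpow_nonneg (norm_nonneg _) _) hpow (t ^ p)
  have h2 : {ω | t ≤ ‖decChaos A ω‖} ⊆ {ω | t ^ p ≤ ‖decChaos A ω‖ ^ p} :=
    fun ω (hω : t ≤ ‖decChaos A ω‖) => Real.rpow_le_rpow ht.le hω hp0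
  have h3 : (gam (Fin d × Fin n)).real {ω | t ≤ ‖decChaos A ω‖} ≤
      (gam (Fin d × Fin n)).real {ω | t ^ p ≤ ‖decChaos A ω‖ ^ p} := measureReal_mono h2
  have h4 : ∫ ω, ‖decChaos A ω‖ ^ p ∂gam (Fin d × Fin n) ≤ (t / 2) ^ p := by
    rw [momP, one_div, Real.rpow_inv_le_iff_of_pos
      (integral_nonneg fun _ => Real.rpow_nonneg (norm_nonneg _) _) (by positivity) hp] at h
    exact h
  have htp : 0 < t ^ p := Real.rpow_pos_of_pos ht p
  have h5 : (gam (Fin d × Fin n)).real {ω | t ≤ ‖decChaos A ω‖} ≤ (1 / 2) ^ p := by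
    have h6 : t ^ p * (gam (Fin d × Fin n)).real {ω | t ≤ ‖decChaos A ω‖} ≤
        t ^ p * (1 / 2) ^ p := by
      rw [← Real.mul_rpow ht.le (by norm_num), mul_one_div]
      exact (mul_le_mul_of_nonneg_left h3 htp.le).trans (h1.trans h4)
    exact le_of_mul_le_mul_left h6 htp
  refine h5.trans ?_
  rw [Real.rpow_def_of_pos (by norm_num), Real.exp_le_exp, one_div, Real.log_inv]
  have := Real.log_two_gt_d9
  nlinarith

end final

/-! ### From moments to tails -/

section assembly

variable {E : Type*} [NormedAddCommGroup E] [NormedSpace ℝ E] {d n : ℕ}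

/-- A lower bound `m` for `(t / N) ^ (2 / k)` bounds the moment term `(s m) ^ (k / 2) N` by
`√s t`, as soon as `s ≤ 1` and `k ≥ 1`. -/
lemma tail_term {s m t N : ℝ} {k : ℕ} (hs0 : 0 ≤ s) (hs1 : s ≤ 1) (hm : 0 ≤ m) (ht : 0 ≤ t)
    (hN : 0 ≤ N) (hk : 1 ≤ k) (h : m ≤ (t / N) ^ (2 / (k : ℝ))) :
    (s * m) ^ ((k : ℝ) / 2) * N ≤ √s * t := by
  rcases hN.eq_or_lt with rfl | hN
  · rw [mul_zero]; positivity
  have hk' : (1 : ℝ) ≤ k := by exact_mod_cast hk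
  have h1 : m ^ ((k : ℝ) / 2) ≤ t / N := by
    refine (Real.rpow_le_rpow hm h (by positivity)).trans (le_of_eq ?_)
    rw [← Real.rpow_mul (by positivity)]
    have : 2 / (k : ℝ) * (k / 2) = 1 := by field_simp
    rw [this, Real.rpow_one]
  have h2 : s ^ ((k : ℝ) / 2) ≤ √s := by
    rw [Real.sqrt_eq_rpow]
    rcases hs0.eq_or_lt with rfl | hs
    · rw [Real.zero_rpow (by positivity), Real.zero_rpow (by norm_num)]
    · exact Real.rpow_le_rpow_of_exponent_ge hs hs1 (by linarith)
  rw [Real.mul_rpow hs0 hm, mul_assoc]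
  refine mul_le_mul h2 ?_ (by positivity) (by positivity)
  rwa [← le_div_iff₀ hN]

/-- The moment estimate at `p = s m`, where `m` bounds all `(t / |||A|||_P) ^ (2 / |P|)` from
below and the mean is at most `√s t`. -/
lemma tail_sum (A : (Fin d → Fin n) → E) {s m t : ℝ} (hs0 : 0 ≤ s) (hs1 : s ≤ 1) (hm : 0 ≤ m)
    (ht : 0 ≤ t)
    (h : ∀ J : Finset (Fin d), J.Nonempty → ∀ P ∈ partitionsOf J,
      m ≤ (t / tNorm A J P) ^ (2 / (P.card : ℝ)))
    (h0 : ∫ ω, ‖decChaos A ω‖ ∂gam (Fin d × Fin n) ≤ √s * t) :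
    ∑ J : Finset (Fin d), ∑ P ∈ partitionsOf J, (s * m) ^ ((P.card : ℝ) / 2) * tNorm A J P ≤
      (Fintype.card (Finset (Fin d)) * Fintype.card (Finset (Finset (Fin d))) : ℝ) *
        (√s * t) := by
  have hterm : ∀ J : Finset (Fin d), ∀ P ∈ partitionsOf J,
      (s * m) ^ ((P.card : ℝ) / 2) * tNorm A J P ≤ √s * t := by
    intro J P hP
    rcases J.eq_empty_or_nonempty with rfl | hJ
    · obtain rfl := partitionsOf_empty hP
      simpa [tNorm_empty] using h0
    · exact tail_term hs0 hs1 hm ht (tNorm_nonneg A J P) (partitionsOf_nonempty hJ hP) (h J hJ P hP)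
  have h1 : ∀ J : Finset (Fin d), ∑ P ∈ partitionsOf J,
      (s * m) ^ ((P.card : ℝ) / 2) * tNorm A J P ≤
      Fintype.card (Finset (Finset (Fin d))) * (√s * t) := by
    intro J
    refine (Finset.sum_le_card_nsmul _ _ _ (hterm J)).trans ?_
    rw [nsmul_eq_mul]
    refine mul_le_mul_of_nonneg_right ?_ (by positivity)
    exact_mod_cast Finset.card_le_univ (partitionsOf J)
  refine (Finset.sum_le_card_nsmul _ _ _ fun J _ => h1 J).trans (le_of_eq ?_)
  rw [nsmul_eq_mul, Finset.card_univ, mul_assoc]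

end assembly

theorem gaussian_chaos_alphaPlus_upper (d : ℕ) (hd : 1 ≤ d) :
    ∃ C : ℝ, 0 < C ∧
      ∀ (n : ℕ) (E : Type*) [NormedAddCommGroup E] [NormedSpace ℝ E]
        (K : ℝ), 1 ≤ K → GaussAlphaPlus E K →
        ∀ A : (Fin d → Fin n) → E,
        (∀ p : ℝ, 1 ≤ p →
          momP A p ≤ C * K ^ (d - 1) *
            ∑ J : Finset (Fin d), ∑ P ∈ partitionsOf J,
              p ^ ((P.card : ℝ) / 2) * tNorm A J P) ∧
        (∀ t : ℝ,
          C * K ^ (d - 1) * (∫ ω, ‖decChaos A ω‖ ∂ stdGaussian (Fin d × Fin n)) < t →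
          (stdGaussian (Fin d × Fin n) {ω | t ≤ ‖decChaos A ω‖}).toReal ≤
            2 * Real.exp (-(1 / C) * K ^ ((2 : ℝ) - 2 * d) * sInf { r : ℝ |
              ∃ J : Finset (Fin d), J.Nonempty ∧ ∃ P ∈ partitionsOf J,
                r = (t / tNorm A J P) ^ (2 / (P.card : ℝ)) })) := by
  obtain ⟨C₁, hC₁, hmom⟩ := momP_bound d
  set M : ℝ := Fintype.card (Finset (Fin d)) * Fintype.card (Finset (Finset (Fin d))) with hM
  have hM0 : 0 ≤ M := by positivity
  -- `D` is chosen so that `C₁ M ≤ D` and `C₁ ≤ D`; `√(2 / C) = 1 / (4 D)`.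
  set D : ℝ := C₁ * (M + 1) + 1 with hD
  have hD1 : 1 ≤ D := by have : 0 ≤ C₁ * (M + 1) := by positivity
                         linarith
  have hDM : C₁ * M ≤ D := by nlinarith
  have hDC : C₁ ≤ D := by nlinarith [mul_nonneg hC₁ hM0]
  have hC0 : 0 < 32 * D ^ 2 := by positivity
  refine ⟨32 * D ^ 2, hC0, ?_⟩
  intro n E _ _ K hK1 hK A
  set κ : ℝ := K ^ (d - 1) with hκ
  have hκ1 : 1 ≤ κ := one_le_pow₀ hK1
  constructor
  · intro p hp
    refine (hmom n E K hK1 hK A p hp).trans ?_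
    refine mul_le_mul_of_nonneg_right (mul_le_mul_of_nonneg_right ?_ (by positivity)) ?_
    · nlinarith
    · exact Finset.sum_nonneg fun J _ => Finset.sum_nonneg fun P _ =>
        mul_nonneg (Real.rpow_nonneg (by linarith) _) (tNorm_nonneg A J P)
  · intro t ht
    set S := { r : ℝ | ∃ J : Finset (Fin d), J.Nonempty ∧ ∃ P ∈ partitionsOf J,
                r = (t / tNorm A J P) ^ (2 / (P.card : ℝ)) } with hS
    have hE0 : 0 ≤ ∫ ω, ‖decChaos A ω‖ ∂gam (Fin d × Fin n) :=
      integral_nonneg fun _ => norm_nonneg _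
    have ht0 : 0 < t := lt_of_le_of_lt (by positivity) ht
    have hSnn : ∀ r ∈ S, 0 ≤ r := by
      rintro r ⟨J, -, P, -, rfl⟩
      exact Real.rpow_nonneg (div_nonneg ht0.le (tNorm_nonneg A J P)) _
    have hm0 : 0 ≤ sInf S := Real.sInf_nonneg hSnn
    have hmle : ∀ J : Finset (Fin d), J.Nonempty → ∀ P ∈ partitionsOf J,
        sInf S ≤ (t / tNorm A J P) ^ (2 / (P.card : ℝ)) :=
      fun J hJ P hP => csInf_le ⟨0, hSnn⟩ ⟨J, hJ, P, hP, rfl⟩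
    set s : ℝ := (1 / (4 * D * κ)) ^ 2 with hs
    have hbase : 0 < 1 / (4 * D * κ) := by positivity
    have hsq : √s = 1 / (4 * D * κ) := Real.sqrt_sq hbase.le
    have hDκ : 1 ≤ D * κ := one_le_mul_of_one_le_of_one_le hD1 hκ1
    have hs1 : s ≤ 1 := by
      refine pow_le_one₀ hbase.le ?_
      rw [div_le_one (by positivity)]
      linarith
    have hKκ : K ^ ((2 : ℝ) - 2 * d) = (κ ^ 2)⁻¹ := by
      rw [hκ, ← pow_mul, ← Real.rpow_natCast, ← Real.rpow_neg (by linarith)]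
      congr 1
      push_cast [Nat.cast_sub hd]
      ring
    have hexp : -(1 / (32 * D ^ 2)) * K ^ ((2 : ℝ) - 2 * d) * sInf S = -(s * sInf S / 2) := by
      rw [hKκ, hs]
      field_simp
      ring
    rw [hexp]
    rcases le_total (s * sInf S) 1 with hX | hX
    · -- The right-hand side exceeds `1`.
      have h1 : (_root_.stdGaussian (Fin d × Fin n) {ω | t ≤ ‖decChaos A ω‖}).toReal ≤ 1 :=
        measureReal_le_one (μ := gam (Fin d × Fin n))
      refine h1.trans ?_
      have := Real.add_one_le_exp (-(s * sInf S / 2))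
      linarith
    · have hmean : ∫ ω, ‖decChaos A ω‖ ∂gam (Fin d × Fin n) ≤ √s * t := by
        rw [hsq, one_div, inv_mul_eq_div, le_div_iff₀ (by positivity)]
        refine le_trans ?_ ht.le
        rw [mul_comm]
        refine mul_le_mul_of_nonneg_right (mul_le_mul_of_nonneg_right ?_ (by positivity)) hE0
        nlinarith
      have hsum := tail_sum A (sq_nonneg _) hs1 hm0 ht0.le hmle hmean
      have hp := hmom n E K hK1 hK A _ hX
      have hhalf : momP A (s * sInf S) ≤ t / 2 := by
        refine hp.trans ((mul_le_mul_of_nonneg_left hsum (by positivity)).trans ?_)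
        rw [← hM, hsq]
        have h3 : C₁ * κ * (M * (1 / (4 * D * κ) * t)) = C₁ * M / D * (t / 4) := by
          field_simp
        have h4 : C₁ * M / D ≤ 1 := (div_le_one (by positivity)).2 hDM
        rw [h3]
        nlinarith
      have h5 := markov_half A (by linarith) ht0 hhalf
      refine h5.trans ?_
      have := Real.exp_pos (-(s * sInf S / 2))
      linarith
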